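/- (Gradient bounds at random initialization for an arbitrary fake-loss vector.) There exist absolute constants C, c > 0 such that the following holds. Assume the separateness assumption with parameter δ ≤ 1/(CL) and m ≥ C·n·L·log(nL)/δ⁶. Fix any vectors v_1,…,v_n ∈ ℝ^d. With probability at least 1 − e^{−c·δ·m/n} over the random initialization (A, W, B): for every ℓ ∈ [L], ‖Σ_{i=1}^n D_{i,ℓ}(Back_{i,ℓ+1}ᵀ v_i) h_{i,ℓ−1}ᵀ‖_F² ≤ C·(m·n/d)·Σ_{i=1}^n ‖v_i‖², and for ℓ = L, ‖Σ_{i=1}^n D_{i,L}(Bᵀ v_i) h_{i,L−1}ᵀ‖_F² ≥ (δ·m)/(C·d·n)·max_{i∈[n]} ‖v_i‖². -/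

import Mathlib

/-!
All the bounds come from exponential moments of one Gaussian layer, conditionally on the layers
below (or above) it, multiplied along the depth.

*Forward pass.* For fixed `h ≠ h'` the ratio `Sr = ‖φ(Wh) - φ(Wh')‖² / ‖h - h'‖²` is an average of
`m` independent terms. Its mean is always at least `1/2`, is `1` if `h' = 0`, and is
`1 - O(‖h - h'‖ / ‖h‖)` for nearby `h, h'`, because only neurons with disagreeing signs lose energy.
The logarithmic losses `yP` and gains `uP` of one layer therefore have exponential moments of rate
`m / L` that stay bounded after multiplication over `L + 1` layers (`lintegral_acc_le`), and
`exp_markov` bounds their sums by `1` outside probability `exp (-m / (16000 L))`. Hence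
`1/12 ≤ ‖h_ℓ‖² ≤ 3` (`forward_low`, `forward_up`), and inputs at distance of order `δ` stay so
(`separation`); the assumption `δ L ≪ 1` pays for a loss `O(δ)` per layer.

*Backward pass and upper bound.* Let `b_ℓ = D_ℓ Back_{ℓ+1}ᵀ v`. The pairing `⟨h_ℓ, b_ℓ⟩` is the same
for all `ℓ`, hence equal to `⟨h_L, Bᵀ v⟩`, which is small compared with `‖Bᵀ v‖`. The rest of
`b_ℓ`, orthogonal to `h_ℓ`, only involves the part of the next weight matrix acting on the
orthogonal complement of `h_ℓ`, which is independent of everything used by the forward pass of this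
sample (`Rb_resampM`, `gvec_resamp`). The growth is again controlled by exponential moments
(`lintegral_rt_le`, `back_event`), and `‖b_ℓ‖² ≤ 12 m ‖v‖² / d` (`bvec_le`). The upper bound for the
gradient is then Cauchy–Schwarz over the samples (`grad_upper`).

*Lower bound at the last layer.* Let `i` maximize `‖v_i‖`. The network is positively homogeneous
(`hseq_smul`), so multiples of `h_i` are hidden vectors of multiples of `x_i`; separation of `x_j`
from a grid of multiples of `x_i` gives every `h_j`, `j ≠ i`, a component of order `δ` orthogonal to
`h_i` (`orth_of_grid`). With probability of order `δ / n` a row `w` of `W_L` lies so close to the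
hyperplane orthogonal to `h_i`, and so far from the other ones, that reflecting it in that
hyperplane flips the `i`-th sign only; this changes the corresponding row of the gradient by
`± (Bᵀ v_i)_k h_i`, so one of the two values is large (`Mrow_flip`, `row_prob`). Since the rows are
independent, the sum of their energies is of order `δ m ‖v_i‖² / (d n)` up to probability
`exp (-c δ m / n)` (`last_event`). The width assumption makes the union bound over all exceptional
events fit (`final_num`).
-/

open MeasureTheory ProbabilityTheory

noncomputable section

namespace DNNPaper

/-! ### Elementary linear algebra on plain function matrices -/

def mulVec {p q : ℕ} (M : Fin p → Fin q → ℝ) (v : Fin q → ℝ) : Fin p → ℝ :=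
  fun i => ∑ j, M i j * v j

def mmul {p q r : ℕ} (M : Fin p → Fin q → ℝ) (N : Fin q → Fin r → ℝ) :
    Fin p → Fin r → ℝ :=
  fun i k => ∑ j, M i j * N j k

def transpose {p q : ℕ} (M : Fin p → Fin q → ℝ) : Fin q → Fin p → ℝ :=
  fun j i => M i j

def dot {p : ℕ} (u v : Fin p → ℝ) : ℝ := ∑ i, u i * v i

def outer {p q : ℕ} (u : Fin p → ℝ) (v : Fin q → ℝ) : Fin p → Fin q → ℝ :=
  fun i j => u i * v j

def idMat (p : ℕ) : Fin p → Fin p → ℝ := fun i j => if i = j then 1 else 0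

def diagMat {p : ℕ} (dg : Fin p → ℝ) : Fin p → Fin p → ℝ :=
  fun i j => if i = j then dg i else 0

def relu {p : ℕ} (v : Fin p → ℝ) : Fin p → ℝ := fun k => max (v k) 0

/-- diagonal entries of the ReLU sign matrix of a pre-activation vector -/
def signOf {p : ℕ} (g : Fin p → ℝ) : Fin p → ℝ := fun k => if 0 ≤ g k then 1 else 0

/-- Euclidean norm -/
def l2 {p : ℕ} (v : Fin p → ℝ) : ℝ := Real.sqrt (∑ k, v k ^ 2)

/-- max-norm -/
def linf {p : ℕ} (v : Fin p → ℝ) : ℝ := ⨆ k, |v k|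

/-- number of nonzero entries -/
def l0 {p : ℕ} (v : Fin p → ℝ) : ℕ := (Finset.univ.filter fun k => v k ≠ 0).card

/-- Frobenius norm -/
def frob {p q : ℕ} (M : Fin p → Fin q → ℝ) : ℝ := Real.sqrt (∑ i, ∑ j, M i j ^ 2)

/-- spectral norm (ℓ₂ operator norm) -/
def spec {p q : ℕ} (M : Fin p → Fin q → ℝ) : ℝ :=
  sSup {r | ∃ v : Fin q → ℝ, l2 v ≤ 1 ∧ r = l2 (mulVec M v)}

/-- trace (Frobenius) inner product -/
def innerF {p q : ℕ} (M N : Fin p → Fin q → ℝ) : ℝ := ∑ i, ∑ j, M i j * N i j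

/-- `‖W‖₂ = max_ℓ ‖W_ℓ‖₂` for a tuple of matrices -/
def tupleSpec {m L : ℕ} (W : Fin L → Fin m → Fin m → ℝ) : ℝ := ⨆ ℓ, spec (W ℓ)

/-! ### The network -/

variable {𝔡 m d L : ℕ}

/-- `Wat W ℓ` is the weight matrix of layer `ℓ ∈ {1,…,L}` (identity outside this range). -/
def Wat (W : Fin L → Fin m → Fin m → ℝ) (ℓ : ℕ) : Fin m → Fin m → ℝ :=
  if h : 1 ≤ ℓ ∧ ℓ ≤ L then W ⟨ℓ - 1, by omega⟩ else idMat m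

/-- the forward (post-activation) vectors `h_ℓ`, `ℓ = 0,1,…,L` -/
def hseq (A : Fin m → Fin 𝔡 → ℝ) (W : Fin L → Fin m → Fin m → ℝ) (x : Fin 𝔡 → ℝ) :
    ℕ → Fin m → ℝ
  | 0 => relu (mulVec A x)
  | ℓ + 1 =>
      if ℓ + 1 ≤ L then relu (mulVec (Wat W (ℓ + 1)) (hseq A W x ℓ)) else hseq A W x ℓ

/-- the pre-activation vectors `g_ℓ`, `ℓ = 0,1,…,L` -/
def gseq (A : Fin m → Fin 𝔡 → ℝ) (W : Fin L → Fin m → Fin m → ℝ) (x : Fin 𝔡 → ℝ) :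
    ℕ → Fin m → ℝ
  | 0 => mulVec A x
  | ℓ + 1 => mulVec (Wat W (ℓ + 1)) (hseq A W x ℓ)

/-- `chainProd W Dfun a b = (D_b W_b) (D_{b-1} W_{b-1}) ⋯ (D_a W_a)` where `D_ℓ` is the
diagonal matrix with entries `Dfun ℓ`; it is the identity when `b < a`, and factors with
index outside `{1,…,L}` are skipped. -/
def chainProd (W : Fin L → Fin m → Fin m → ℝ) (Dfun : ℕ → Fin m → ℝ) (a : ℕ) :
    ℕ → Fin m → Fin m → ℝ
  | 0 => idMat m
  | b + 1 =>
      if a ≤ b + 1 ∧ b + 1 ≤ L then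
        mmul (mmul (diagMat (Dfun (b + 1))) (Wat W (b + 1))) (chainProd W Dfun a b)
      else chainProd W Dfun a b

/-- `prodDW A W x a b = D_b W_b D_{b-1} W_{b-1} ⋯ D_a W_a` with the sign matrices of input `x` -/
def prodDW (A : Fin m → Fin 𝔡 → ℝ) (W : Fin L → Fin m → Fin m → ℝ) (x : Fin 𝔡 → ℝ)
    (a b : ℕ) : Fin m → Fin m → ℝ :=
  chainProd W (fun ℓ => signOf (gseq A W x ℓ)) a b

/-- `Back_ℓ = B D_L W_L ⋯ D_ℓ W_ℓ` (equal to `B` for `ℓ = L+1`) -/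
def backMat (B : Fin d → Fin m → ℝ) (A : Fin m → Fin 𝔡 → ℝ)
    (W : Fin L → Fin m → Fin m → ℝ) (x : Fin 𝔡 → ℝ) (ℓ : ℕ) : Fin d → Fin m → ℝ :=
  mmul B (prodDW A W x ℓ L)

/-- formula gradient w.r.t. `W_ℓ` with an arbitrary (fake) loss vector `v`:
`D_ℓ (Back_{ℓ+1}ᵀ v) h_{ℓ-1}ᵀ` -/
def gradW (B : Fin d → Fin m → ℝ) (A : Fin m → Fin 𝔡 → ℝ)
    (W : Fin L → Fin m → Fin m → ℝ) (x : Fin 𝔡 → ℝ) (v : Fin d → ℝ) (ℓ : ℕ) :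
    Fin m → Fin m → ℝ :=
  outer (mulVec (diagMat (signOf (gseq A W x ℓ)))
      (mulVec (transpose (backMat B A W x (ℓ + 1))) v))
    (hseq A W x (ℓ - 1))

/-- loss vector `B h_L − y` -/
def lossVec (B : Fin d → Fin m → ℝ) (A : Fin m → Fin 𝔡 → ℝ)
    (W : Fin L → Fin m → Fin m → ℝ) (x : Fin 𝔡 → ℝ) (y : Fin d → ℝ) : Fin d → ℝ :=
  fun j => mulVec B (hseq A W x L) j - y j

/-- per-sample ℓ₂ regression loss `F_i` -/
def objFi (B : Fin d → Fin m → ℝ) (A : Fin m → Fin 𝔡 → ℝ)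
    (W : Fin L → Fin m → Fin m → ℝ) (x : Fin 𝔡 → ℝ) (y : Fin d → ℝ) : ℝ :=
  (1 / 2) * l2 (lossVec B A W x y) ^ 2

/-- total objective `F` -/
def objF {n : ℕ} (B : Fin d → Fin m → ℝ) (A : Fin m → Fin 𝔡 → ℝ)
    (W : Fin L → Fin m → Fin m → ℝ) (x : Fin n → Fin 𝔡 → ℝ)
    (y : Fin n → Fin d → ℝ) : ℝ :=
  ∑ i, objFi B A W (x i) (y i)

/-- formula gradient of the total objective w.r.t. `W_ℓ` -/
def gradF {n : ℕ} (B : Fin d → Fin m → ℝ) (A : Fin m → Fin 𝔡 → ℝ)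
    (W : Fin L → Fin m → Fin m → ℝ) (x : Fin n → Fin 𝔡 → ℝ)
    (y : Fin n → Fin d → ℝ) (ℓ : ℕ) : Fin m → Fin m → ℝ :=
  ∑ i, gradW B A W (x i) (lossVec B A W (x i) (y i)) ℓ

/-! ### Random initialization -/

/-- a `p × q` random matrix with i.i.d. `N(0, v)` entries -/
def gaussMat (p q : ℕ) (v : NNReal) : Measure (Fin p → Fin q → ℝ) :=
  Measure.pi fun _ => Measure.pi fun _ => gaussianReal 0 v

/-- joint law of `(A, W)` at random initialization -/
def initAW (𝔡 m L : ℕ) :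
    Measure ((Fin m → Fin 𝔡 → ℝ) × (Fin L → Fin m → Fin m → ℝ)) :=
  (gaussMat m 𝔡 (2 / m)).prod (Measure.pi fun _ : Fin L => gaussMat m m (2 / m))

/-- joint law of `(A, W, B)` at random initialization -/
def initMeasure (𝔡 m d L : ℕ) :
    Measure ((Fin m → Fin 𝔡 → ℝ) ×
      (Fin L → Fin m → Fin m → ℝ) × (Fin d → Fin m → ℝ)) :=
  (gaussMat m 𝔡 (2 / m)).prod
    ((Measure.pi fun _ : Fin L => gaussMat m m (2 / m)).prod (gaussMat d m (1 / d)))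

/-! ### Scalar Gaussian estimates -/

/-- One-dimensional Gaussian chi-square moment generating function bound. -/
lemma lintegral_exp_sq_gaussian (σ : NNReal) (θ : ℝ) (hθ : 0 ≤ θ) (h : θ * σ ≤ 1 / 4) :
    ∫⁻ x, ENNReal.ofReal (Real.exp (θ * x ^ 2)) ∂(gaussianReal 0 σ) ≤
      ENNReal.ofReal (1 + θ * σ + 4 * (θ * σ) ^ 2) := by
  by_cases hσ : σ = 0
  · subst hσ
    simp [gaussianReal_zero_var]
  have hσ' : (0 : ℝ) < σ := by positivity
  rw [gaussianReal_of_var_ne_zero 0 hσ,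
    lintegral_withDensity_eq_lintegral_mul _ (measurable_gaussianPDF _ _) (by fun_prop)]
  have hb : 0 < 1 / (2 * (σ : ℝ)) - θ := by
    rw [sub_pos, lt_div_iff₀ (by positivity)]; nlinarith
  have hpt : ∀ x : ℝ, ((gaussianPDF 0 σ) * fun x => ENNReal.ofReal (Real.exp (θ * x ^ 2))) x =
      ENNReal.ofReal ((Real.sqrt (2 * Real.pi * σ))⁻¹ *
        Real.exp (-(1 / (2 * (σ : ℝ)) - θ) * x ^ 2)) := by
    intro x
    simp only [Pi.mul_apply, gaussianPDF, gaussianPDFReal]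
    rw [← ENNReal.ofReal_mul (by positivity), mul_assoc, ← Real.exp_add]
    congr 3
    simp
    field_simp
    ring
  simp_rw [hpt]
  rw [← ofReal_integral_eq_lintegral_ofReal
    ((integrable_exp_neg_mul_sq hb).const_mul _) (ae_of_all _ fun x => by positivity),
    integral_const_mul, integral_gaussian]
  apply ENNReal.ofReal_le_ofReal
  rw [← Real.sqrt_inv, ← Real.sqrt_mul (by positivity)]
  apply Real.sqrt_le_iff.mpr
  refine ⟨by positivity, ?_⟩
  set t := θ * (σ : ℝ) with ht
  have ht0 : 0 ≤ t := by positivity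
  have e1 : (2 * Real.pi * (σ : ℝ))⁻¹ * (Real.pi / (1 / (2 * (σ : ℝ)) - θ)) = 1 / (1 - 2 * t) := by
    have : 1 - 2 * t ≠ 0 := by linarith
    have h2 : 1 - θ * (2 * (σ : ℝ)) ≠ 0 := by rw [ht] at this; intro h'; apply this; linarith
    have h3 : 1 / (2 * (σ : ℝ)) - θ = (1 - 2 * t) / (2 * σ) := by field_simp; ring
    rw [h3]
    have := Real.pi_pos.ne'
    field_simp
  rw [e1, div_le_iff₀ (by linarith)]
  nlinarith [mul_nonneg ht0 ht0, mul_nonneg (mul_nonneg ht0 ht0) (by linarith : 0 ≤ 1 / 4 - t), mul_nonneg (mul_nonneg ht0 (mul_nonneg ht0 ht0)) (by linarith : 0 ≤ 1 / 4 - t), mul_nonneg (mul_nonneg (mul_nonneg ht0 ht0) (mul_nonneg ht0 ht0)) (by linarith : 0 ≤ 1 / 4 - t)]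

lemma integrable_pow_gaussian (σ : NNReal) (k : ℕ) :
    Integrable (fun x : ℝ => x ^ k) (gaussianReal 0 σ) := by
  have := (memLp_id_gaussianReal (μ := 0) (v := σ) k)
  have h2 := this.integrable_norm_pow'
  simp only [id] at h2
  refine h2.mono' (by fun_prop) (ae_of_all _ fun x => by simp)

lemma integral_sq_gaussian (σ : NNReal) : ∫ x, x ^ 2 ∂(gaussianReal 0 σ) = σ := by
  have := variance_fun_id_gaussianReal (μ := 0) (v := σ)
  rw [variance_of_integral_eq_zero (by fun_prop) (by simp)] at this
  simpa using this

/-- Crude fourth moment bound (the sharp constant is `3`). -/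
lemma integral_pow_four_gaussian (σ : NNReal) :
    ∫ x, x ^ 4 ∂(gaussianReal 0 σ) ≤ 48 * (σ : ℝ) ^ 2 := by
  by_cases hσ : σ = 0
  · subst hσ
    simp [gaussianReal_zero_var]
  have hσ' : (0 : ℝ) < σ := by positivity
  rw [integral_eq_lintegral_of_nonneg_ae (ae_of_all _ fun x => by positivity) (by fun_prop)]
  apply ENNReal.toReal_le_of_le_ofReal (by positivity)
  have h1 := lintegral_exp_sq_gaussian σ (1 / (4 * σ)) (by positivity)
    (by rw [div_mul_eq_mul_div, div_le_div_iff₀ (by positivity) (by norm_num)]; linarith)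
  have h2 : (1 / (4 * (σ : ℝ))) * σ = 1 / 4 := by field_simp
  rw [h2] at h1
  calc ∫⁻ x, ENNReal.ofReal (x ^ 4) ∂(gaussianReal 0 σ)
      ≤ ∫⁻ x, ENNReal.ofReal (32 * (σ : ℝ) ^ 2) *
          ENNReal.ofReal (Real.exp (1 / (4 * (σ : ℝ)) * x ^ 2)) ∂(gaussianReal 0 σ) := by
        apply lintegral_mono
        intro x
        simp only
        rw [← ENNReal.ofReal_mul (by positivity)]
        apply ENNReal.ofReal_le_ofReal
        have := Real.quadratic_le_exp_of_nonneg (x := 1 / (4 * (σ : ℝ)) * x ^ 2) (by positivity)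
        have h3 : x ^ 4 = 32 * (σ : ℝ) ^ 2 * ((1 / (4 * (σ : ℝ)) * x ^ 2) ^ 2 / 2) := by
          field_simp; ring
        rw [h3]
        gcongr
        have : 0 ≤ 1 / (4 * (σ : ℝ)) * x ^ 2 := by positivity
        linarith
    _ ≤ ENNReal.ofReal (32 * (σ : ℝ) ^ 2) * ENNReal.ofReal (1 + 1 / 4 + 4 * (1 / 4) ^ 2) := by
        rw [lintegral_const_mul _ (by fun_prop)]
        gcongr
    _ = ENNReal.ofReal (48 * (σ : ℝ) ^ 2) := by
        rw [← ENNReal.ofReal_mul (by positivity)]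
        congr 1; ring

lemma sqrt_two_pi_bounds (σ : NNReal) :
    2 * Real.sqrt σ ≤ Real.sqrt (2 * Real.pi * σ) ∧
      Real.sqrt (2 * Real.pi * σ) ≤ 3 * Real.sqrt σ := by
  have h3 := Real.pi_gt_three
  have h4 := Real.pi_le_four
  constructor
  · apply Real.le_sqrt_of_sq_le
    rw [mul_pow, Real.sq_sqrt (by positivity)]
    have := σ.2
    nlinarith [mul_nonneg (NNReal.coe_nonneg σ) (by linarith : 0 ≤ Real.pi - 3)]
  · apply Real.sqrt_le_iff.mpr
    refine ⟨by positivity, ?_⟩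
    rw [mul_pow, Real.sq_sqrt (by positivity)]
    nlinarith [mul_nonneg (NNReal.coe_nonneg σ) (by linarith : 0 ≤ 4 - Real.pi)]

lemma gaussian_small_ball (σ : NNReal) (hσ : σ ≠ 0) (r : ℝ) (hr : 0 ≤ r) :
    gaussianReal 0 σ {t | |t| ≤ r} ≤ ENNReal.ofReal (r / Real.sqrt σ) := by
  have hs : 0 < Real.sqrt σ := Real.sqrt_pos.mpr (by positivity)
  have hset : {t : ℝ | |t| ≤ r} = Set.Icc (-r) r := by ext t; simp [abs_le]
  rw [gaussianReal_apply 0 hσ, hset]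
  calc ∫⁻ x in Set.Icc (-r) r, gaussianPDF 0 σ x
      ≤ ∫⁻ x in Set.Icc (-r) r, ENNReal.ofReal (1 / (2 * Real.sqrt σ)) := by
        apply lintegral_mono
        intro x
        apply ENNReal.ofReal_le_ofReal
        unfold gaussianPDFReal
        have h1 : Real.exp (-(x - 0) ^ 2 / (2 * σ)) ≤ 1 := by
          rw [Real.exp_le_one_iff]
          apply div_nonpos_of_nonpos_of_nonneg <;> [nlinarith [sq_nonneg (x - 0)]; positivity]
        have h2 : (Real.sqrt (2 * Real.pi * σ))⁻¹ ≤ 1 / (2 * Real.sqrt σ) := by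
          rw [one_div]
          exact inv_anti₀ (by positivity) (sqrt_two_pi_bounds σ).1
        calc _ ≤ 1 / (2 * Real.sqrt σ) * 1 := by gcongr
          _ = _ := by ring
    _ = ENNReal.ofReal (1 / (2 * Real.sqrt σ)) * ENNReal.ofReal (r - -r) := by
        rw [setLIntegral_const, Real.volume_Icc]
    _ = _ := by
        rw [← ENNReal.ofReal_mul (by positivity)]
        congr 1; field_simp; ring

lemma gaussian_small_ball_lower (σ : NNReal) (hσ : σ ≠ 0) (r : ℝ) (hr : 0 ≤ r)
    (hr2 : r ^ 2 ≤ σ) :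
    ENNReal.ofReal (r / (3 * Real.sqrt σ)) ≤ gaussianReal 0 σ {t | 0 < |t| ∧ |t| ≤ r} := by
  have hs : 0 < Real.sqrt σ := Real.sqrt_pos.mpr (by positivity)
  have hσ' : (0 : ℝ) < σ := by positivity
  have : NullSingletonClass (gaussianReal 0 σ) := nullSingletonClass_gaussianReal hσ
  have hset : {t : ℝ | 0 < |t| ∧ |t| ≤ r} = Set.Icc (-r) r \ {0} := by
    ext t; simp [abs_le, and_comm]
  rw [hset, measure_sdiff_null (measure_singleton 0), gaussianReal_apply 0 hσ]
  have hexp : (1 : ℝ) / 2 ≤ Real.exp (-1 / 2) := by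
    have := Real.add_one_le_exp (-1 / 2 : ℝ); linarith
  calc ENNReal.ofReal (r / (3 * Real.sqrt σ))
      = ENNReal.ofReal (1 / (6 * Real.sqrt σ)) * ENNReal.ofReal (r - -r) := by
        rw [← ENNReal.ofReal_mul (by positivity)]
        congr 1; field_simp; ring
    _ = ∫⁻ x in Set.Icc (-r) r, ENNReal.ofReal (1 / (6 * Real.sqrt σ)) := by
        rw [setLIntegral_const, Real.volume_Icc]
    _ ≤ _ := by
        apply setLIntegral_mono' measurableSet_Icc
        intro x hx
        apply ENNReal.ofReal_le_ofReal
        unfold gaussianPDFReal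
        have hx2 : x ^ 2 ≤ r ^ 2 := sq_le_sq' hx.1 hx.2
        have h1 : (1 : ℝ) / 2 ≤ Real.exp (-(x - 0) ^ 2 / (2 * σ)) := by
          refine hexp.trans (Real.exp_le_exp.mpr ?_)
          rw [div_le_div_iff₀ (by norm_num) (by positivity)]
          nlinarith
        have h2 : (3 * Real.sqrt σ)⁻¹ ≤ (Real.sqrt (2 * Real.pi * σ))⁻¹ :=
          inv_anti₀ (by nlinarith [(sqrt_two_pi_bounds σ).1]) (sqrt_two_pi_bounds σ).2
        calc 1 / (6 * Real.sqrt σ) = (3 * Real.sqrt σ)⁻¹ * (1 / 2) := by field_simp; norm_num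
          _ ≤ _ := by gcongr

lemma gaussian_nonneg_le_half (σ : NNReal) (hσ : σ ≠ 0) :
    gaussianReal 0 σ {t | 0 ≤ t} ≤ ENNReal.ofReal (1 / 2) := by
  have : NullSingletonClass (gaussianReal 0 σ) := nullSingletonClass_gaussianReal hσ
  have h1 : gaussianReal 0 σ {t : ℝ | 0 ≤ t} = gaussianReal 0 σ {t : ℝ | t ≤ 0} := by
    have hm := gaussianReal_map_neg (μ := 0) (v := σ)
    rw [neg_zero] at hm
    calc gaussianReal 0 σ {t : ℝ | 0 ≤ t}
        = (gaussianReal 0 σ).map (fun x => -x) (Set.Ici 0) := by rw [hm]; rfl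
      _ = _ := by
        rw [Measure.map_apply (by fun_prop) measurableSet_Ici]
        congr 1; ext t; simp
  have h2 : gaussianReal 0 σ {t : ℝ | t ≤ 0} = gaussianReal 0 σ {t : ℝ | t < 0} :=
    measure_congr Iio_ae_eq_Iic.symm
  have h3 : gaussianReal 0 σ {t : ℝ | 0 ≤ t} + gaussianReal 0 σ {t : ℝ | t < 0} = 1 := by
    rw [← prob_add_prob_compl (μ := gaussianReal 0 σ) (measurableSet_Ici (a := (0 : ℝ)))]
    congr 2; ext t; simp
  rw [← h2, ← h1, ← two_mul] at h3
  rw [ENNReal.ofReal_div_of_pos (by norm_num), ENNReal.le_div_iff_mul_le (by simp) (by simp)]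
  simp [mul_comm] at h3 ⊢
  exact h3.le

/-! ### Gaussian vectors and matrices -/

/-- Squared Euclidean norm. -/
def nsq {p : ℕ} (v : Fin p → ℝ) : ℝ := ∑ k, v k ^ 2

lemma nsq_nonneg {p : ℕ} (v : Fin p → ℝ) : 0 ≤ nsq v := Finset.sum_nonneg fun _ _ => sq_nonneg _

lemma l2_sq {p : ℕ} (v : Fin p → ℝ) : l2 v ^ 2 = nsq v := Real.sq_sqrt (nsq_nonneg v)

lemma nsq_eq_zero {p : ℕ} {v : Fin p → ℝ} : nsq v = 0 ↔ v = 0 := by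
  unfold nsq
  rw [Finset.sum_eq_zero_iff_of_nonneg fun _ _ => sq_nonneg _]
  simp [funext_iff]

lemma nsq_pos {p : ℕ} {v : Fin p → ℝ} (h : v ≠ 0) : 0 < nsq v :=
  lt_of_le_of_ne (nsq_nonneg v) fun h' => h (nsq_eq_zero.mp h'.symm)

lemma nsq_smul {p : ℕ} (c : ℝ) (v : Fin p → ℝ) : nsq (c • v) = c ^ 2 * nsq v := by
  simp [nsq, mul_pow, Finset.mul_sum]

/-- Law of a vector with `q` i.i.d. `N(0, v)` coordinates. -/
def gvec (q : ℕ) (v : NNReal) : Measure (Fin q → ℝ) := Measure.pi fun _ => gaussianReal 0 v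

instance (q : ℕ) (v : NNReal) : IsProbabilityMeasure (gvec q v) := by unfold gvec; infer_instance

instance (p q : ℕ) (v : NNReal) : IsProbabilityMeasure (gaussMat p q v) := by
  unfold gaussMat; infer_instance

lemma gaussMat_eq (p q : ℕ) (v : NNReal) : gaussMat p q v = Measure.pi fun _ => gvec q v := rfl

/-- `dot · a` as a continuous linear functional. -/
def dotL {q : ℕ} (a : Fin q → ℝ) : (Fin q → ℝ) →L[ℝ] ℝ :=
  ∑ j, a j • ContinuousLinearMap.proj (R := ℝ) (φ := fun _ : Fin q => ℝ) j

lemma dotL_apply {q : ℕ} (a w : Fin q → ℝ) : dotL a w = dot w a := by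
  simp [dotL, dot, mul_comm]

lemma cf_gaussianReal (v : NNReal) (l : StrongDual ℝ ℝ) :
    charFunDual (gaussianReal 0 v) l = Complex.exp (((-(v * (l 1) ^ 2 / 2) : ℝ)) : ℂ) := by
  rw [charFunDual_eq_charFun_map_one, gaussianReal_map_continuousLinearMap, charFun_gaussianReal]
  congr 1
  simp [max_eq_left (sq_nonneg (l 1))]
  ring

lemma cf_gvec (q : ℕ) (v : NNReal) (l : StrongDual ℝ (Fin q → ℝ)) :
    charFunDual (gvec q v) l =
      Complex.exp (((-(v * (∑ j, (l (Pi.single j 1)) ^ 2) / 2) : ℝ)) : ℂ) := by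
  unfold gvec
  rw [charFunDual_pi]
  simp_rw [cf_gaussianReal]
  rw [← Complex.exp_sum, ← Complex.ofReal_sum]
  congr 2
  simp [Finset.mul_sum, Finset.sum_div]

lemma gvec_map_dot (q : ℕ) (v σ : NNReal) (a : Fin q → ℝ) (hσ : (σ : ℝ) = v * nsq a) :
    (gvec q v).map (fun w => dot w a) = gaussianReal 0 σ := by
  have : (fun w => dot w a) = ⇑(dotL a) := by ext w; rw [dotL_apply]
  rw [this]
  have : IsProbabilityMeasure ((gvec q v).map (dotL a)) :=
    Measure.isProbabilityMeasure_map (by fun_prop)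
  apply Measure.ext_of_charFunDual
  ext l
  rw [charFunDual_map, cf_gvec, cf_gaussianReal, hσ]
  congr 3
  have h1 : ∀ j, (l.comp (dotL a)) (Pi.single j 1) = a j * l 1 := by
    intro j
    simp only [ContinuousLinearMap.comp_apply, dotL_apply]
    have : dot (Pi.single j 1) a = a j := by simp [dot, Pi.single_apply]
    rw [this]
    have := l.map_smul (a j) 1
    simpa using this
  simp_rw [h1, mul_pow, ← Finset.sum_mul]
  unfold nsq; ring

lemma measurable_dot {q : ℕ} (a : Fin q → ℝ) : Measurable fun w => dot w a := by
  unfold dot; fun_prop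

/-- Law of `W h` for a Gaussian matrix `W`. -/
lemma gaussMat_map_mulVec (p q : ℕ) (v σ : NNReal) (h : Fin q → ℝ) (hσ : (σ : ℝ) = v * nsq h) :
    (gaussMat p q v).map (fun W => mulVec W h) = gvec p σ := by
  unfold gvec
  rw [gaussMat_eq, ← gvec_map_dot q v σ h hσ,
    ← Measure.pi_map_pi (fun _ => (measurable_dot h).aemeasurable)]
  rfl

/-- The row vector `bᵀ W`. -/
def tmul {p q : ℕ} (W : Fin p → Fin q → ℝ) (b : Fin p → ℝ) : Fin q → ℝ :=
  fun j => ∑ k, W k j * b k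

/-- Law of `Wᵀ b` for a Gaussian matrix `W`. -/
lemma gaussMat_map_tmul (p q : ℕ) (v σ : NNReal) (b : Fin p → ℝ) (hσ : (σ : ℝ) = v * nsq b) :
    (gaussMat p q v).map (fun W => tmul W b) = gvec q σ := by
  let T : (Fin p → Fin q → ℝ) →L[ℝ] (Fin q → ℝ) :=
    ∑ k, b k • ContinuousLinearMap.proj (R := ℝ) (φ := fun _ : Fin p => Fin q → ℝ) k
  have hT : (fun W => tmul W b) = ⇑T := by
    ext W j; simp [tmul, T, mul_comm]
  rw [hT]
  have : IsProbabilityMeasure ((gaussMat p q v).map T) :=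
    Measure.isProbabilityMeasure_map (by fun_prop)
  apply Measure.ext_of_charFunDual
  ext l
  rw [charFunDual_map, gaussMat_eq, charFunDual_pi]
  simp_rw [cf_gvec]
  rw [← Complex.exp_sum, ← Complex.ofReal_sum]
  congr 2
  have h1 : ∀ k j, ((l.comp T).comp (.single ℝ (fun _ : Fin p => Fin q → ℝ) k)) (Pi.single j 1) =
      b k * l (Pi.single j 1) := by
    intro k j
    simp only [ContinuousLinearMap.comp_apply, T]
    have : (∑ k, b k • ContinuousLinearMap.proj (R := ℝ) (φ := fun _ : Fin p => Fin q → ℝ) k)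
        ((ContinuousLinearMap.single ℝ (fun _ : Fin p => Fin q → ℝ) k) (Pi.single j 1)) =
        b k • (Pi.single j 1 : Fin q → ℝ) := by
      ext i
      simp only [_root_.sum_apply, _root_.smul_apply,
        ContinuousLinearMap.proj_apply, ContinuousLinearMap.single_apply, Finset.sum_apply,
        Pi.smul_apply, smul_eq_mul]
      rw [Finset.sum_eq_single k]
      · simp
      · intro c _ hc; simp [hc]
      · simp
    rw [this, l.map_smul, smul_eq_mul]
  simp_rw [h1, mul_pow, ← Finset.mul_sum, hσ]
  unfold nsq
  rw [Finset.sum_neg_distrib, ← Finset.sum_div, ← Finset.mul_sum, ← Finset.sum_mul]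
  ring

/-- Replace the component of `w'` along `e` by that of `w`. -/
def resamp {q : ℕ} (e w w' : Fin q → ℝ) : Fin q → ℝ :=
  fun j => w' j + (dot w e - dot w' e) * e j

lemma measurable_resamp {q : ℕ} (e : Fin q → ℝ) :
    Measurable fun z : (Fin q → ℝ) × (Fin q → ℝ) => resamp e z.1 z.2 := by
  unfold resamp dot; fun_prop

/-- The component along a unit vector and the orthogonal component of an isotropic Gaussian
vector are independent, in resampling form. -/
lemma gvec_resamp (q : ℕ) (v : NNReal) (e : Fin q → ℝ) (he : nsq e = 1) :
    ((gvec q v).prod (gvec q v)).map (fun z => resamp e z.1 z.2) = gvec q v := by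
  let T : (Fin q → ℝ) × (Fin q → ℝ) →L[ℝ] (Fin q → ℝ) :=
    ContinuousLinearMap.snd ℝ _ _ +
      ((dotL e).comp (ContinuousLinearMap.fst ℝ _ _) -
        (dotL e).comp (ContinuousLinearMap.snd ℝ _ _)).smulRight e
  have hT : (fun z : (Fin q → ℝ) × (Fin q → ℝ) => resamp e z.1 z.2) = ⇑T := by
    ext z j; simp [resamp, T, dotL_apply]
  rw [hT]
  have : IsProbabilityMeasure (((gvec q v).prod (gvec q v)).map T) :=
    Measure.isProbabilityMeasure_map (by fun_prop)
  apply Measure.ext_of_charFunDual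
  ext l
  rw [charFunDual_map, charFunDual_prod]
  simp_rw [cf_gvec]
  rw [← Complex.exp_add, ← Complex.ofReal_add]
  congr 2
  have hd : ∀ j, dot (Pi.single j 1) e = e j := fun j => by simp [dot, Pi.single_apply]
  have h1 : ∀ j, ((l.comp T).comp (.inl ℝ (Fin q → ℝ) (Fin q → ℝ))) (Pi.single j 1) =
      e j * l e := by
    intro j
    simp [T, dotL_apply, hd]
    left
    simp [dot]
  have h2 : ∀ j, ((l.comp T).comp (.inr ℝ (Fin q → ℝ) (Fin q → ℝ))) (Pi.single j 1) =
      l (Pi.single j 1) - e j * l e := by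
    intro j
    simp [T, dotL_apply, hd]
    have : dot (0 : Fin q → ℝ) e = 0 := by simp [dot]
    rw [this]; ring
  have h3 : l e = ∑ j, e j * l (Pi.single j 1) := by
    conv_lhs => rw [pi_eq_sum_univ' e]
    simp [map_sum]
  simp_rw [h1, h2]
  set a := l e
  have e1 : ∑ j, (e j * a) ^ 2 = a ^ 2 := by
    simp_rw [mul_pow, ← Finset.sum_mul]
    change nsq e * a ^ 2 = _
    rw [he, one_mul]
  have e2 : ∑ j, (l (Pi.single j 1) - e j * a) ^ 2 =
      ∑ j, (l (Pi.single j 1)) ^ 2 - a ^ 2 := by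
    have : ∀ j, (l (Pi.single j 1) - e j * a) ^ 2 = (l (Pi.single j 1)) ^ 2
        - 2 * a * (e j * l (Pi.single j 1)) + (e j * a) ^ 2 := fun j => by ring
    simp_rw [this, Finset.sum_add_distrib, Finset.sum_sub_distrib, ← Finset.mul_sum, e1, ← h3]
    ring
  rw [e1, e2]; ring

/-- Row-wise resampling: `W e eᵀ + W' (I - e eᵀ)`. -/
def resampM {p q : ℕ} (e : Fin q → ℝ) (W W' : Fin p → Fin q → ℝ) : Fin p → Fin q → ℝ :=
  fun k => resamp e (W k) (W' k)

lemma gaussMat_resamp (p q : ℕ) (v : NNReal) (e : Fin q → ℝ) (he : nsq e = 1) :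
    ((gaussMat p q v).prod (gaussMat p q v)).map (fun z => resampM e z.1 z.2) =
      gaussMat p q v := by
  have h1 : gaussMat p q v =
      (Measure.pi fun _ : Fin p => (gvec q v).prod (gvec q v)).map
        (fun z k => resamp e (z k).1 (z k).2) := by
    have hf : IsProbabilityMeasure
      (((gvec q v).prod (gvec q v)).map (fun z => resamp e z.1 z.2)) := by
        rw [gvec_resamp q v e he]; infer_instance
    rw [Measure.pi_map_pi (fun _ : Fin p => (measurable_resamp e).aemeasurable)]
    rw [gvec_resamp q v e he]; rfl
  have hmp := measurePreserving_arrowProdEquivProdArrow (Fin q → ℝ) (Fin q → ℝ) (Fin p)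
    (fun _ => gvec q v) (fun _ => gvec q v)
  conv_rhs => rw [h1]
  conv_lhs => rw [gaussMat_eq, ← hmp.map_eq]
  rw [Measure.map_map ?_ hmp.measurable]
  · rfl
  · unfold resampM resamp dot; fun_prop

/-- Unconditional Fubini-type bound for products of independent coordinates. -/
lemma lintegral_pi_prod_le {α : Type*} [MeasurableSpace α] (p : ℕ) (μ : Measure α)
    [IsProbabilityMeasure μ] (f : Fin p → α → ENNReal) (hf : ∀ k, Measurable (f k)) :
    ∫⁻ x, ∏ k, f k (x k) ∂(Measure.pi fun _ : Fin p => μ) ≤ ∏ k, ∫⁻ y, f k y ∂μ := by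
  induction p with
  | zero => simp
  | succ p ih =>
    have hmp := (measurePreserving_piFinSuccAbove (fun _ : Fin (p + 1) => μ) 0).symm
    rw [← hmp.map_eq, lintegral_map_equiv]
    refine (lintegral_prod_le _).trans ?_
    rw [Fin.prod_univ_succ]
    calc _ = ∫⁻ x, f 0 x * ∫⁻ y, ∏ k : Fin p, f k.succ (y k)
            ∂(Measure.pi fun _ : Fin p => μ) ∂μ := by
          refine lintegral_congr fun x => ?_
          rw [← lintegral_const_mul _ (by fun_prop)]
          refine lintegral_congr fun y => ?_
          rw [Fin.prod_univ_succ]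
          simp [MeasurableEquiv.piFinSuccAbove]
      _ ≤ ∫⁻ x, f 0 x * ∏ k : Fin p, ∫⁻ y, f k.succ y ∂μ ∂μ := by
          gcongr with x
          exact ih _ fun k => hf _
      _ = _ := by rw [lintegral_mul_const _ (hf 0)]

/-! ### One random layer acting on one or two fixed vectors -/

lemma dot_sub_right {q : ℕ} (w a b : Fin q → ℝ) : dot w (a - b) = dot w a - dot w b := by
  simp [dot, mul_sub]

lemma dot_smul_right {q : ℕ} (c : ℝ) (w a : Fin q → ℝ) : dot w (c • a) = c * dot w a := by
  simp only [dot, Pi.smul_apply, smul_eq_mul, Finset.mul_sum]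
  exact Finset.sum_congr rfl fun _ _ => by ring

lemma dot_neg_left {q : ℕ} (w a : Fin q → ℝ) : dot (-w) a = -dot w a := by
  simp [dot]

lemma dot_comm {q : ℕ} (a b : Fin q → ℝ) : dot a b = dot b a := by
  simp [dot, mul_comm]

lemma dot_self {q : ℕ} (a : Fin q → ℝ) : dot a a = nsq a := by
  simp [dot, nsq, sq]

lemma dot_sq_le {q : ℕ} (a b : Fin q → ℝ) : dot a b ^ 2 ≤ nsq a * nsq b :=
  Finset.sum_mul_sq_le_sq_mul_sq _ _ _

lemma dot_resamp {q : ℕ} (e w w' b : Fin q → ℝ) :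
    dot (resamp e w w') b = dot w' b + (dot w e - dot w' e) * dot e b := by
  simp only [dot, resamp, add_mul, Finset.sum_add_distrib, mul_assoc, Finset.mul_sum]

lemma nsq_sub {q : ℕ} (a b : Fin q → ℝ) : nsq (a - b) = nsq a - 2 * dot a b + nsq b := by
  simp only [nsq, dot, Pi.sub_apply, Finset.mul_sum, ← Finset.sum_sub_distrib,
    ← Finset.sum_add_distrib]
  exact Finset.sum_congr rfl fun _ _ => by ring

lemma nsq_sub_proj {q : ℕ} (e a : Fin q → ℝ) (he : nsq e = 1) :
    nsq (a - dot e a • e) = nsq a - dot e a ^ 2 := by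
  rw [nsq_sub, dot_smul_right, nsq_smul, he, dot_comm a e]; ring

lemma gvec_neg (q : ℕ) (v : NNReal) : (gvec q v).map (fun w => -w) = gvec q v := by
  have h := gaussianReal_map_neg (μ := 0) (v := v)
  rw [neg_zero] at h
  have hp : IsProbabilityMeasure ((gaussianReal 0 v).map (fun x => -x)) := by
    rw [h]; infer_instance
  have h2 := Measure.pi_map_pi (μ := fun _ : Fin q => gaussianReal 0 v)
    (f := fun _ x => -x) (fun _ => measurable_neg.aemeasurable)
  rw [h] at h2
  exact h2

lemma gvec_resamp_swap (q : ℕ) (v : NNReal) (e : Fin q → ℝ) (he : nsq e = 1) :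
    ((gvec q v).prod (gvec q v)).map (fun z => resamp e z.2 z.1) = gvec q v := by
  conv_rhs => rw [← gvec_resamp q v e he, ← Measure.prod_swap]
  rw [Measure.map_map (measurable_resamp e) measurable_swap]
  rfl

section Row
variable {q : ℕ}

/-- The variance `2/m` of the weights. -/
abbrev vr (m : ℕ) : NNReal := 2 / m

lemma integrable_dot_pow (v : NNReal) (a : Fin q → ℝ) (k : ℕ) :
    Integrable (fun w => dot w a ^ k) (gvec q v) := by
  have h := gvec_map_dot q v ⟨v * nsq a, mul_nonneg v.2 (nsq_nonneg a)⟩ a rfl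
  have h2 := integrable_pow_gaussian ⟨v * nsq a, mul_nonneg v.2 (nsq_nonneg a)⟩ k
  rw [← h] at h2
  exact h2.comp_measurable (measurable_dot a)

lemma integral_dot_sq (v : NNReal) (a : Fin q → ℝ) :
    ∫ w, dot w a ^ 2 ∂(gvec q v) = v * nsq a := by
  have h := gvec_map_dot q v ⟨v * nsq a, mul_nonneg v.2 (nsq_nonneg a)⟩ a rfl
  have h2 := integral_sq_gaussian ⟨v * nsq a, mul_nonneg v.2 (nsq_nonneg a)⟩
  rw [← h, integral_map (measurable_dot a).aemeasurable (by fun_prop)] at h2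
  exact h2

lemma integral_dot_four (v : NNReal) (a : Fin q → ℝ) :
    ∫ w, dot w a ^ 4 ∂(gvec q v) ≤ 48 * (v * nsq a) ^ 2 := by
  have h := gvec_map_dot q v ⟨v * nsq a, mul_nonneg v.2 (nsq_nonneg a)⟩ a rfl
  have h2 := integral_pow_four_gaussian ⟨v * nsq a, mul_nonneg v.2 (nsq_nonneg a)⟩
  rw [← h, integral_map (measurable_dot a).aemeasurable (by fun_prop)] at h2
  exact h2

/-- Squared change of the ReLU output of one neuron with weight `w`. -/
def Zr (h h' w : Fin q → ℝ) : ℝ := (max (dot w h) 0 - max (dot w h') 0) ^ 2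

lemma measurable_Zr (h h' : Fin q → ℝ) : Measurable (Zr h h') := by
  unfold Zr dot; fun_prop

lemma Zr_nonneg (h h' w : Fin q → ℝ) : 0 ≤ Zr h h' w := sq_nonneg _

lemma relu_diff_sq_le (a b : ℝ) : (max a 0 - max b 0) ^ 2 ≤ (a - b) ^ 2 := by
  apply sq_le_sq.mpr
  exact abs_max_sub_max_le_abs a b 0

lemma Zr_le (h h' w : Fin q → ℝ) : Zr h h' w ≤ dot w (h - h') ^ 2 := by
  rw [dot_sub_right]; exact relu_diff_sq_le _ _

lemma integrable_Zr (v : NNReal) (h h' : Fin q → ℝ) : Integrable (Zr h h') (gvec q v) :=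
  (integrable_dot_pow v (h - h') 2).mono' (measurable_Zr h h').aestronglyMeasurable
    (ae_of_all _ fun w => by
      rw [Real.norm_of_nonneg (Zr_nonneg _ _ _)]; exact Zr_le _ _ _)

lemma integral_Zr_symm (v : NNReal) (h h' : Fin q → ℝ) :
    2 * ∫ w, Zr h h' w ∂(gvec q v) = ∫ w, (Zr h h' w + Zr h h' (-w)) ∂(gvec q v) := by
  have h1 : ∫ w, Zr h h' w ∂(gvec q v) = ∫ w, Zr h h' (-w) ∂(gvec q v) := by
    conv_lhs => rw [← gvec_neg q v]
    rw [integral_map measurable_neg.aemeasurable (measurable_Zr h h').aestronglyMeasurable]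
  have hi : Integrable (fun w => Zr h h' (-w)) (gvec q v) := by
    have := integrable_Zr v h h'
    rw [← gvec_neg q v] at this
    exact this.comp_measurable measurable_neg
  rw [integral_add (integrable_Zr v h h') hi, ← h1]; ring

/-- For `w` and `-w` together, ReLU preserves the energy `(a - b)²`, except for at most half of it
when the signs of `a` and `b` may disagree. -/
lemma relu_pair (a b : ℝ) (c : ℝ) (hc : c = if |a| < |a - b| then 1 else 0) :
    (a - b) ^ 2 - 1 / 2 * ((a - b) ^ 2 * c) ≤
      (max a 0 - max b 0) ^ 2 + (max (-a) 0 - max (-b) 0) ^ 2 := by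
  rcases le_or_gt 0 a with ha | ha <;> rcases le_or_gt 0 b with hb | hb
  · rw [max_eq_left ha, max_eq_left hb, max_eq_right (by linarith : -a ≤ 0),
      max_eq_right (by linarith : -b ≤ 0)]
    have : 0 ≤ c := by rw [hc]; split_ifs <;> norm_num
    nlinarith [mul_nonneg (sq_nonneg (a - b)) this]
  · have h1 : |a| < |a - b| := by
      rw [abs_of_nonneg ha, abs_of_nonneg (by linarith)]; linarith
    rw [if_pos h1] at hc
    rw [max_eq_left ha, max_eq_right hb.le, max_eq_right (by linarith : -a ≤ 0),
      max_eq_left (by linarith : 0 ≤ -b), hc]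
    nlinarith [sq_nonneg (a + b)]
  · rw [max_eq_right ha.le, max_eq_left hb, max_eq_left (by linarith : 0 ≤ -a),
      max_eq_right (by linarith : -b ≤ 0)]
    rcases hb.eq_or_lt with hb0 | hb0
    · subst hb0
      rw [hc]; split_ifs <;> nlinarith [sq_nonneg a]
    · have h1 : |a| < |a - b| := by
        rw [abs_of_neg ha, abs_of_neg (by linarith)]; linarith
      rw [if_pos h1] at hc
      rw [hc]; nlinarith [sq_nonneg (a + b)]
  · rw [max_eq_right ha.le, max_eq_right hb.le, max_eq_left (by linarith : 0 ≤ -a),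
      max_eq_left (by linarith : 0 ≤ -b)]
    have : 0 ≤ c := by rw [hc]; split_ifs <;> norm_num
    nlinarith [mul_nonneg (sq_nonneg (a - b)) this]

/-- The event that the perturbation `⟨w, h - h'⟩` dominates `⟨w, h⟩`, weighted by its square. -/
def Cr (h h' w : Fin q → ℝ) : ℝ :=
  dot w (h - h') ^ 2 * if |dot w h| < |dot w (h - h')| then 1 else 0

lemma measurable_Cr (h h' : Fin q → ℝ) : Measurable (Cr h h') := by
  unfold Cr
  refine ((measurable_dot _).pow_const 2).mul (Measurable.ite ?_ measurable_const measurable_const)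
  exact measurableSet_lt (by have := measurable_dot h; fun_prop)
    (by have := measurable_dot (h - h'); fun_prop)

lemma Cr_nonneg (h h' w : Fin q → ℝ) : 0 ≤ Cr h h' w := by
  unfold Cr; split_ifs <;> simp [sq_nonneg]

lemma Cr_le (h h' w : Fin q → ℝ) : Cr h h' w ≤ dot w (h - h') ^ 2 := by
  unfold Cr; split_ifs <;> simp [sq_nonneg]

lemma integrable_Cr (v : NNReal) (h h' : Fin q → ℝ) : Integrable (Cr h h') (gvec q v) :=
  (integrable_dot_pow v (h - h') 2).mono' (measurable_Cr h h').aestronglyMeasurable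
    (ae_of_all _ fun w => by
      rw [Real.norm_of_nonneg (Cr_nonneg _ _ _)]; exact Cr_le _ _ _)

/-- The mean energy of one neuron is half that of the linear map, up to the contribution `Cr` of
sign disagreements; the symmetry `w ↦ -w` reduces this to `relu_pair`. -/
lemma integral_Zr_ge (v : NNReal) (h h' : Fin q → ℝ) :
    v * nsq (h - h') / 2 - 1 / 4 * ∫ w, Cr h h' w ∂(gvec q v) ≤ ∫ w, Zr h h' w ∂(gvec q v) := by
  have h1 := integral_Zr_symm v h h'
  have h2 : ∫ w, (dot w (h - h') ^ 2 - 1 / 2 * Cr h h' w) ∂(gvec q v) ≤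
      ∫ w, (Zr h h' w + Zr h h' (-w)) ∂(gvec q v) := by
    apply integral_mono
    · exact (integrable_dot_pow v _ 2).sub ((integrable_Cr v h h').const_mul _)
    · have hi : Integrable (fun w => Zr h h' (-w)) (gvec q v) := by
        have := integrable_Zr v h h'
        rw [← gvec_neg q v] at this
        exact this.comp_measurable measurable_neg
      exact (integrable_Zr v h h').add hi
    · intro w
      have := relu_pair (dot w h) (dot w h') _ rfl
      simp only [Cr, Zr, dot_neg_left, dot_sub_right]
      exact this
  rw [integral_sub (integrable_dot_pow v _ 2) ((integrable_Cr v h h').const_mul _),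
    integral_const_mul, integral_dot_sq] at h2
  linarith

lemma integral_Zr_half (v : NNReal) (h h' : Fin q → ℝ) :
    v * nsq (h - h') / 4 ≤ ∫ w, Zr h h' w ∂(gvec q v) := by
  have h1 := integral_Zr_ge v h h'
  have h2 : ∫ w, Cr h h' w ∂(gvec q v) ≤ v * nsq (h - h') := by
    rw [← integral_dot_sq]
    exact integral_mono (integrable_Cr v h h') (integrable_dot_pow v _ 2) fun w => Cr_le _ _ _
  linarith

lemma integral_Zr_zero (v : NNReal) (h : Fin q → ℝ) :
    v * nsq h / 2 ≤ ∫ w, Zr h 0 w ∂(gvec q v) := by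
  have h1 := integral_Zr_ge v h 0
  have h2 : ∀ w, Cr h 0 w = 0 := fun w => by simp [Cr]
  simpa [h2] using h1

lemma cube_le (x D : ℝ) (hD : 0 < D) (m : ℝ) (hm : 0 < m) :
    Real.sqrt m * |x| ^ 3 ≤ 1 / 2 * (x ^ 2 * D + m * x ^ 4 / D) := by
  set s := Real.sqrt m with hs
  have hs2 : m = s ^ 2 := (Real.sq_sqrt hm.le).symm
  rw [hs2]
  have e : s ^ 2 * x ^ 4 / D = (s * x ^ 2) ^ 2 / D := by ring
  have h4 : x ^ 2 = |x| ^ 2 := (sq_abs x).symm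
  rw [e, h4]
  set y := |x|
  have : 1 / 2 * (y ^ 2 * D + (s * y ^ 2) ^ 2 / D) - s * y ^ 3 = y ^ 2 * (D - s * y) ^ 2 / (2 * D) := by
    field_simp; ring
  have : 0 ≤ y ^ 2 * (D - s * y) ^ 2 / (2 * D) := by positivity
  linarith

/-- If `h'` is close to `h` relative to `‖h‖`, sign disagreements are rare. -/
lemma integral_Cr_le (hm : 0 < m) (h h' : Fin q → ℝ) (hh : h ≠ h')
    (hD : 4 * nsq (h - h') ≤ nsq h) :
    ∫ w, Cr h h' w ∂(gvec q (vr m)) ≤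
      776 * (Real.sqrt (nsq (h - h')) / Real.sqrt (nsq h)) * (nsq (h - h') / m) := by
  have hm' : (0 : ℝ) < m := by exact_mod_cast hm
  have hDpos : 0 < nsq (h - h') := nsq_pos (sub_ne_zero.mpr hh)
  have hHpos : 0 < nsq h := by linarith
  set D := Real.sqrt (nsq (h - h')) with hDdef
  set H := Real.sqrt (nsq h) with hHdef
  have hDp : 0 < D := Real.sqrt_pos.mpr hDpos
  have hHp : 0 < H := Real.sqrt_pos.mpr hHpos
  have hD2 : nsq (h - h') = D ^ 2 := (Real.sq_sqrt hDpos.le).symm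
  have hH2 : nsq h = H ^ 2 := (Real.sq_sqrt hHpos.le).symm
  have hDH : 2 * D ≤ H := by
    rw [hD2, hH2] at hD
    nlinarith
  set Δ := h - h' with hΔ
  set e := H⁻¹ • h with he
  have he1 : nsq e = 1 := by rw [he, nsq_smul, hH2]; field_simp
  set β := dot e Δ with hβ
  have hβ2 : |β| ≤ D := by
    apply abs_le_of_sq_le_sq _ hDp.le
    have := dot_sq_le e Δ
    rw [he1, one_mul, hD2] at this
    exact this
  set Δp := Δ - β • e with hΔp
  have hΔpD : nsq Δp ≤ D ^ 2 := by
    have : nsq Δp = nsq Δ - β ^ 2 := nsq_sub_proj e Δ he1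
    rw [this, hD2]; nlinarith [sq_nonneg β]
  have hsig : ((vr m : NNReal) : ℝ) = 2 / m := by simp [vr]
  have hvne : vr m ≠ 0 := by
    intro h0
    have : ((vr m : NNReal) : ℝ) = 0 := by rw [h0]; rfl
    rw [hsig] at this
    have : (0 : ℝ) < 2 / m := by positivity
    linarith
  have hsqv : 1 / Real.sqrt (vr m : NNReal) ≤ Real.sqrt m := by
    rw [hsig, div_le_iff₀ (Real.sqrt_pos.mpr (by positivity)), ← Real.sqrt_mul hm'.le]
    rw [show (m : ℝ) * (2 / m) = 2 by field_simp]
    rw [Real.one_le_sqrt]; norm_num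
  rw [integral_eq_lintegral_of_nonneg_ae (ae_of_all _ fun w => Cr_nonneg _ _ _)
    (measurable_Cr h h').aestronglyMeasurable]
  apply ENNReal.toReal_le_of_le_ofReal (by positivity)
  have hint : Integrable (fun w => 8 / H * (1 / 2 * (dot w Δp ^ 2 * D + m * dot w Δp ^ 4 / D)))
      (gvec q (vr m)) := by
    refine Integrable.const_mul (Integrable.const_mul (Integrable.add ?_ ?_) _) _
    · exact (integrable_dot_pow _ _ 2).mul_const _
    · exact ((integrable_dot_pow _ _ 4).const_mul _).div_const _
  calc ∫⁻ w, ENNReal.ofReal (Cr h h' w) ∂(gvec q (vr m))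
      = ∫⁻ w, ENNReal.ofReal (Cr h h' w)
          ∂(((gvec q (vr m)).prod (gvec q (vr m))).map (fun z => resamp e z.2 z.1)) := by
        rw [gvec_resamp_swap q _ e he1]
    _ ≤ ∫⁻ w', ∫⁻ w, ENNReal.ofReal (Cr h h' (resamp e w w')) ∂(gvec q (vr m))
          ∂(gvec q (vr m)) := (lintegral_map_le _ _).trans (lintegral_prod_le _)
    _ ≤ ∫⁻ w', ENNReal.ofReal (8 / H * (1 / 2 * (dot w' Δp ^ 2 * D + m * dot w' Δp ^ 4 / D)))
          ∂(gvec q (vr m)) := by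
        apply lintegral_mono
        intro w'
        set x := dot w' Δp with hx
        -- with the part of the row orthogonal to `e` frozen, `|⟨w, h⟩| < |⟨w, h - h'⟩|` confines the
        -- component `⟨w, e⟩` along `h` to an interval of length `O(|x| / H)`
        have key : ∀ w, ENNReal.ofReal (Cr h h' (resamp e w w')) ≤
            ({t : ℝ | |t| ≤ 2 * |x| / H}.indicator (fun _ => ENNReal.ofReal (4 * x ^ 2)))
              (dot w e) := by
          intro w
          have hx' : x = dot w' Δ - β * dot w' e := by
            rw [hx, hΔp, dot_sub_right, dot_smul_right]
          have hdΔ : dot (resamp e w w') Δ = x + dot w e * β := by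
            rw [dot_resamp, hx', ← hβ]; ring
          have hee : dot e e = 1 := by rw [dot_self, he1]
          have hdh : dot (resamp e w w') h = H * dot w e := by
            have : h = H • e := by rw [he, smul_smul, mul_inv_cancel₀ hHp.ne', one_smul]
            conv_lhs => rw [this]
            rw [dot_smul_right, dot_resamp, hee]; ring
          set t := dot w e
          unfold Cr
          rw [← hΔ, hdΔ, hdh]
          split_ifs with hlt
          · have h1 : |x + t * β| ≤ |x| + |t| * D := by
              calc |x + t * β| ≤ |x| + |t * β| := abs_add_le _ _
                _ ≤ _ := by rw [abs_mul]; gcongr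
            rw [abs_mul, abs_of_pos hHp] at hlt
            have ht0 := abs_nonneg t
            have h2 : H * |t| ≤ 2 * |x| := by nlinarith
            have h3 : |t| ≤ 2 * |x| / H := by rw [le_div_iff₀ hHp]; linarith
            rw [Set.indicator_of_mem (by exact h3)]
            apply ENNReal.ofReal_le_ofReal
            have h4 : |x + t * β| ≤ 2 * |x| := by nlinarith
            rw [← sq_abs]
            have := pow_le_pow_left₀ (abs_nonneg _) h4 2
            rw [mul_pow, sq_abs x] at this
            linarith
          · simp
        have hS : MeasurableSet {t : ℝ | |t| ≤ 2 * |x| / H} :=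
          measurableSet_le (by fun_prop) measurable_const
        refine (lintegral_mono key).trans ?_
        rw [← lintegral_map (μ := gvec q (vr m)) (f := {t : ℝ | |t| ≤ 2 * |x| / H}.indicator
            (fun _ => ENNReal.ofReal (4 * x ^ 2))) (measurable_const.indicator hS)
            (measurable_dot e), gvec_map_dot q (vr m) (vr m) e (by rw [he1, mul_one]),
          lintegral_indicator_const hS]
        calc _ ≤ ENNReal.ofReal (4 * x ^ 2) *
              ENNReal.ofReal (2 * |x| / H / Real.sqrt (vr m : NNReal)) := by
              gcongr
              exact gaussian_small_ball _ hvne _ (by positivity)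
          _ ≤ _ := by
              rw [← ENNReal.ofReal_mul (by positivity)]
              apply ENNReal.ofReal_le_ofReal
              have hc := cube_le x D hDp m hm'
              calc 4 * x ^ 2 * (2 * |x| / H / Real.sqrt (vr m : NNReal))
                  = 8 / H * ((1 / Real.sqrt (vr m : NNReal)) * |x| ^ 3) := by
                    rw [← sq_abs x]; field_simp; ring
                _ ≤ 8 / H * (Real.sqrt m * |x| ^ 3) := by gcongr
                _ ≤ _ := by gcongr
    _ ≤ _ := by
        rw [← ofReal_integral_eq_lintegral_ofReal hint (ae_of_all _ fun w => by positivity)]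
        apply ENNReal.ofReal_le_ofReal
        rw [integral_const_mul, integral_const_mul, integral_add
          ((integrable_dot_pow _ _ 2).mul_const _)
          (((integrable_dot_pow _ _ 4).const_mul _).div_const _), integral_mul_const,
          integral_div, integral_const_mul, integral_dot_sq, hsig]
        have h4 := integral_dot_four (vr m) Δp
        rw [hsig] at h4
        have h40 : 48 * (2 / (m : ℝ) * nsq Δp) ^ 2 ≤ 48 * (2 / (m : ℝ) * D ^ 2) ^ 2 := by
          have := nsq_nonneg Δp
          gcongr
        calc _ ≤ 8 / H * (1 / 2 * (2 / m * D ^ 2 * D + m * (48 * (2 / (m : ℝ) * D ^ 2) ^ 2) / D)) := by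
              gcongr
              exact h4.trans h40
          _ = _ := by rw [hD2]; field_simp; ring

/-- For nearby vectors one neuron keeps, on average, its full share of the energy up to a relative
loss of order `‖h - h'‖ / ‖h‖`. -/
lemma integral_Zr_close (hm : 0 < m) (h h' : Fin q → ℝ) (hh : h ≠ h')
    (hD : 4 * nsq (h - h') ≤ nsq h) :
    (1 - 194 * (Real.sqrt (nsq (h - h')) / Real.sqrt (nsq h))) * (nsq (h - h') / m) ≤
      ∫ w, Zr h h' w ∂(gvec q (vr m)) := by
  have h1 := integral_Zr_ge (vr m) h h'
  have h2 := integral_Cr_le hm h h' hh hD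
  have hsig : ((vr m : NNReal) : ℝ) = 2 / m := by simp [vr]
  rw [hsig] at h1
  have e : 2 / (m : ℝ) * nsq (h - h') / 2 = nsq (h - h') / m := by ring
  rw [e] at h1
  linarith

end Row

section Step
variable {q : ℕ}

lemma vr_coe (m : ℕ) : ((vr m : NNReal) : ℝ) = 2 / m := by simp [vr]

lemma vr_ne_zero (hm : 0 < m) : vr m ≠ 0 := by
  unfold vr; positivity

/-- Energy ratio `‖φ(Wh) - φ(Wh')‖² / ‖h - h'‖²` of one layer. -/
def Sr (h h' : Fin q → ℝ) (W : Fin m → Fin q → ℝ) : ℝ :=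
  nsq (relu (mulVec W h) - relu (mulVec W h')) / nsq (h - h')

lemma measurable_Sr (h h' : Fin q → ℝ) : Measurable (Sr (m := m) h h') := by
  unfold Sr nsq relu mulVec; simp only [Pi.sub_apply]; fun_prop

lemma Sr_nonneg (h h' : Fin q → ℝ) (W : Fin m → Fin q → ℝ) : 0 ≤ Sr h h' W :=
  div_nonneg (nsq_nonneg _) (nsq_nonneg _)

lemma nsq_relu_sub (h h' : Fin q → ℝ) (W : Fin m → Fin q → ℝ) :
    nsq (relu (mulVec W h) - relu (mulVec W h')) = ∑ k, Zr h h' (W k) := rfl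

lemma exp_neg_le_quad {x : ℝ} (hx : 0 ≤ x) : Real.exp (-x) ≤ 1 - x + x ^ 2 / 2 := by
  have h1 := Real.quadratic_le_exp_of_nonneg hx
  have h2 : 0 < 1 + x + x ^ 2 / 2 := by positivity
  rw [Real.exp_neg]
  calc (Real.exp x)⁻¹ ≤ (1 + x + x ^ 2 / 2)⁻¹ := inv_anti₀ h2 h1
    _ ≤ _ := by
      rw [inv_le_iff_one_le_mul₀ h2]
      nlinarith [sq_nonneg (x ^ 2)]

lemma row_mgf_low (hm : 0 < m) (h h' : Fin q → ℝ) (hh : h ≠ h') (ν κ : ℝ) (hν : 0 ≤ ν)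
    (hκ : κ * (nsq (h - h') / m) ≤ ∫ w, Zr h h' w ∂(gvec q (vr m))) :
    ∫⁻ w, ENNReal.ofReal (Real.exp (-(ν / nsq (h - h') * Zr h h' w))) ∂(gvec q (vr m)) ≤
      ENNReal.ofReal (Real.exp (-(ν * κ / m) + 96 * ν ^ 2 / m ^ 2)) := by
  have hm' : (0 : ℝ) < m := by exact_mod_cast hm
  have hD : 0 < nsq (h - h') := nsq_pos (sub_ne_zero.mpr hh)
  set N := nsq (h - h') with hN
  set θ := ν / N with hθ
  have hθ0 : 0 ≤ θ := by positivity
  have hb : ∀ w, Real.exp (-(θ * Zr h h' w)) ≤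
      1 - θ * Zr h h' w + θ ^ 2 / 2 * dot w (h - h') ^ 4 := by
    intro w
    have h0 := Zr_nonneg h h' w
    have h1 := exp_neg_le_quad (mul_nonneg hθ0 h0)
    have h2 := pow_le_pow_left₀ h0 (Zr_le h h' w) 2
    have h3 : (dot w (h - h') ^ 2) ^ 2 = dot w (h - h') ^ 4 := by ring
    rw [h3] at h2
    have := mul_le_mul_of_nonneg_left h2 (by positivity : 0 ≤ θ ^ 2 / 2)
    nlinarith
  have hint : Integrable (fun w => 1 - θ * Zr h h' w + θ ^ 2 / 2 * dot w (h - h') ^ 4)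
      (gvec q (vr m)) :=
    ((integrable_const _).sub ((integrable_Zr _ _ _).const_mul _)).add
      ((integrable_dot_pow _ _ 4).const_mul _)
  calc _ ≤ ∫⁻ w, ENNReal.ofReal (1 - θ * Zr h h' w + θ ^ 2 / 2 * dot w (h - h') ^ 4)
        ∂(gvec q (vr m)) := lintegral_mono fun w => ENNReal.ofReal_le_ofReal (hb w)
    _ = ENNReal.ofReal (∫ w, (1 - θ * Zr h h' w + θ ^ 2 / 2 * dot w (h - h') ^ 4)
        ∂(gvec q (vr m))) := by
        rw [ofReal_integral_eq_lintegral_ofReal hint]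
        exact ae_of_all _ fun w => (Real.exp_pos _).le.trans (hb w)
    _ ≤ _ := by
        apply ENNReal.ofReal_le_ofReal
        have hi1 : Integrable (fun w => 1 - θ * Zr h h' w) (gvec q (vr m)) :=
          (integrable_const _).sub ((integrable_Zr _ _ _).const_mul _)
        rw [integral_add hi1 ((integrable_dot_pow _ _ 4).const_mul _),
          integral_sub (integrable_const _)
          ((integrable_Zr _ _ _).const_mul _), integral_const_mul, integral_const_mul]
        have h4 := integral_dot_four (vr m) (h - h')
        rw [vr_coe, ← hN] at h4
        simp only [integral_const, probReal_univ, smul_eq_mul, mul_one]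
        have e1 : θ * (κ * (N / m)) = ν * κ / m := by rw [hθ]; field_simp
        have e2 : θ ^ 2 / 2 * (48 * (2 / m * N) ^ 2) = 96 * ν ^ 2 / m ^ 2 := by
          rw [hθ]; field_simp; ring
        have h5 := mul_le_mul_of_nonneg_left hκ hθ0
        have h6 := mul_le_mul_of_nonneg_left h4 (by positivity : 0 ≤ θ ^ 2 / 2)
        have h7 := Real.add_one_le_exp (-(ν * κ / m) + 96 * ν ^ 2 / m ^ 2)
        linarith

lemma layer_mgf_low (hm : 0 < m) (h h' : Fin q → ℝ) (hh : h ≠ h') (ν κ : ℝ) (hν : 0 ≤ ν)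
    (hκ : κ * (nsq (h - h') / m) ≤ ∫ w, Zr h h' w ∂(gvec q (vr m))) :
    ∫⁻ W, ENNReal.ofReal (Real.exp (-(ν * Sr h h' W))) ∂(gaussMat m q (vr m)) ≤
      ENNReal.ofReal (Real.exp (-(ν * κ) + 96 * ν ^ 2 / m)) := by
  have hm' : (0 : ℝ) < m := by exact_mod_cast hm
  have e : ∀ W : Fin m → Fin q → ℝ, ENNReal.ofReal (Real.exp (-(ν * Sr h h' W))) =
      ∏ k, ENNReal.ofReal (Real.exp (-(ν / nsq (h - h') * Zr h h' (W k)))) := by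
    intro W
    rw [← ENNReal.ofReal_prod_of_nonneg fun _ _ => (Real.exp_pos _).le, ← Real.exp_sum]
    congr 2
    rw [Finset.sum_neg_distrib, ← Finset.mul_sum, Sr, nsq_relu_sub]
    ring
  simp_rw [e]
  rw [gaussMat_eq]
  have hmeas := measurable_Zr h h'
  refine (lintegral_pi_prod_le m (gvec q (vr m))
    (fun _ w => ENNReal.ofReal (Real.exp (-(ν / nsq (h - h') * Zr h h' w))))
    fun k => by fun_prop).trans ?_
  calc _ ≤ ∏ k : Fin m, ENNReal.ofReal (Real.exp (-(ν * κ / m) + 96 * ν ^ 2 / m ^ 2)) :=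
        Finset.prod_le_prod' fun k _ => row_mgf_low hm h h' hh ν κ hν hκ
    _ = _ := by
        rw [Finset.prod_const, Finset.card_univ, Fintype.card_fin,
          ← ENNReal.ofReal_pow (Real.exp_pos _).le, ← Real.exp_nat_mul]
        congr 2
        field_simp

open Classical in
/-- Loss (in log-scale) of the energy ratio in one layer: `1` for a drop below `1/4`, and otherwise
`(-log S)₊`, the latter only counted when the condition `c` holds. -/
def yfn (c : Prop) (S : ℝ) : ℝ :=
  if S < 1 / 4 then 1 else if c then max 0 (-Real.log S) else 0

lemma measurable_yfn (c : Prop) : Measurable (yfn c) := by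
  unfold yfn
  refine Measurable.ite (measurableSet_lt measurable_id measurable_const) measurable_const ?_
  split_ifs <;> fun_prop

lemma yfn_nonneg (c : Prop) (S : ℝ) : 0 ≤ yfn c S := by
  unfold yfn; split_ifs <;> simp

lemma log_lower {S : ℝ} (hS : 1 / 4 ≤ S) : -Real.log S ≤ max 0 (2 * (1 - S)) := by
  rcases le_or_gt 1 S with h1 | h1
  · exact le_max_of_le_left (by have := Real.log_nonneg h1; linarith)
  · apply le_max_of_le_right
    have hS0 : 0 < S := by linarith
    rcases le_or_gt (1 / 2) S with h2 | h2
    · have := Real.one_sub_inv_le_log_of_pos hS0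
      have h3 : S⁻¹ - 1 ≤ 2 * (1 - S) := by
        have : S⁻¹ - 1 = (1 - S) / S := by field_simp
        rw [this, div_le_iff₀ hS0]; nlinarith
      linarith
    · have h3 := Real.one_sub_inv_le_log_of_pos (by positivity : 0 < 2 ^ 2 * S)
      have h4 := Real.log_mul (by norm_num : (2 : ℝ) ^ 2 ≠ 0) hS0.ne'
      rw [Real.log_pow] at h4
      have h5 := Real.log_two_lt_d9
      have h6 : (2 ^ 2 * S)⁻¹ ≤ 3 / 2 - 2 * S := by
        rw [inv_le_iff_one_le_mul₀ (by positivity)]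
        nlinarith
      push_cast at h4
      rw [h4] at h3
      have h8 : Real.log 2 ≤ 7 / 10 := by linarith
      linarith

/-- Exponential moment of the loss in one layer. The three cases of `yfn` give three terms: a drop
below `1/4` is exponentially unlikely because the mean is at least `1/2`, and moderate losses are
controlled by the mean being at least `1 - τ`. -/
lemma step_low (hm : 0 < m) (c : Prop) (h h' : Fin q → ℝ) (hh : h ≠ h') (μ τ : ℝ) (hμ : 0 ≤ μ)
    (hμm : μ ≤ m / 6144)
    (hκ : c → (1 - τ) * (nsq (h - h') / m) ≤ ∫ w, Zr h h' w ∂(gvec q (vr m))) :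
    ∫⁻ W, ENNReal.ofReal (Real.exp (μ * yfn c (Sr h h' W))) ∂(gaussMat m q (vr m)) ≤
      ENNReal.ofReal (2 + Real.exp (2 * μ * τ + 384 * μ ^ 2 / m)) := by
  have hm' : (0 : ℝ) < m := by exact_mod_cast hm
  have hSm := measurable_Sr (m := m) h h'
  -- this choice gives `96 ν² / m = ν / 8`, half of the gain `ν / 2 - ν / 4` of Chernoff's bound
  set ν : ℝ := m / 768 with hν
  have hhalf : (1 / 2) * (nsq (h - h') / m) ≤ ∫ w, Zr h h' w ∂(gvec q (vr m)) := by
    have := integral_Zr_half (vr m) h h'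
    rw [vr_coe] at this
    calc _ = 2 / (m : ℝ) * nsq (h - h') / 4 := by ring
      _ ≤ _ := this
  have h1 := layer_mgf_low hm h h' hh ν (1 / 2) (by positivity) hhalf
  have hA : ∫⁻ W, ENNReal.ofReal (Real.exp (μ + ν / 4)) *
      ENNReal.ofReal (Real.exp (-(ν * Sr h h' W))) ∂(gaussMat m q (vr m)) ≤ 1 := by
    rw [lintegral_const_mul _ (by fun_prop)]
    calc _ ≤ ENNReal.ofReal (Real.exp (μ + ν / 4)) *
        ENNReal.ofReal (Real.exp (-(ν * (1 / 2)) + 96 * ν ^ 2 / m)) := by gcongr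
      _ ≤ 1 := by
        rw [← ENNReal.ofReal_mul (Real.exp_pos _).le, ← Real.exp_add]
        apply ENNReal.ofReal_le_one.mpr
        rw [Real.exp_le_one_iff]
        have : 96 * ν ^ 2 / m = ν / 8 := by rw [hν]; field_simp; norm_num
        rw [this, hν]; linarith
  by_cases hc : c
  · have h2 := layer_mgf_low hm h h' hh (2 * μ) (1 - τ) (by positivity) (hκ hc)
    have hB : ∫⁻ W, ENNReal.ofReal (Real.exp (2 * μ)) *
        ENNReal.ofReal (Real.exp (-(2 * μ * Sr h h' W))) ∂(gaussMat m q (vr m)) ≤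
        ENNReal.ofReal (Real.exp (2 * μ * τ + 384 * μ ^ 2 / m)) := by
      rw [lintegral_const_mul _ (by fun_prop)]
      calc _ ≤ ENNReal.ofReal (Real.exp (2 * μ)) *
          ENNReal.ofReal (Real.exp (-(2 * μ * (1 - τ)) + 96 * (2 * μ) ^ 2 / m)) := by gcongr
        _ = _ := by
          rw [← ENNReal.ofReal_mul (Real.exp_pos _).le, ← Real.exp_add]
          congr 2; ring
    calc _ ≤ ∫⁻ W, (1 + (ENNReal.ofReal (Real.exp (μ + ν / 4)) *
          ENNReal.ofReal (Real.exp (-(ν * Sr h h' W))) + ENNReal.ofReal (Real.exp (2 * μ)) *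
          ENNReal.ofReal (Real.exp (-(2 * μ * Sr h h' W))))) ∂(gaussMat m q (vr m)) := by
          apply lintegral_mono
          intro W
          simp only
          set S := Sr h h' W
          rw [← ENNReal.ofReal_mul (Real.exp_pos _).le, ← ENNReal.ofReal_mul (Real.exp_pos _).le,
            ← Real.exp_add, ← Real.exp_add, ← ENNReal.ofReal_one,
            ← ENNReal.ofReal_add (Real.exp_pos _).le (Real.exp_pos _).le,
            ← ENNReal.ofReal_add zero_le_one (by positivity)]
          apply ENNReal.ofReal_le_ofReal
          have p1 := Real.exp_pos (μ + ν / 4 + -(ν * S))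
          have p2 := Real.exp_pos (2 * μ + -(2 * μ * S))
          unfold yfn
          split_ifs with hS
          · have : Real.exp (μ * 1) ≤ Real.exp (μ + ν / 4 + -(ν * S)) := by
              apply Real.exp_le_exp.mpr
              have : 0 < ν := by positivity
              nlinarith
            linarith
          · have h3 : max 0 (-Real.log S) ≤ max 0 (2 * (1 - S)) :=
              max_le (le_max_left _ _) (log_lower (not_lt.mp hS))
            have h4 : Real.exp (μ * max 0 (-Real.log S)) ≤ Real.exp (μ * max 0 (2 * (1 - S))) :=
              Real.exp_le_exp.mpr (mul_le_mul_of_nonneg_left h3 hμ)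
            rcases max_choice 0 (2 * (1 - S)) with h5 | h5 <;> rw [h5] at h4
            · rw [mul_zero, Real.exp_zero] at h4; linarith
            · have : μ * (2 * (1 - S)) = 2 * μ + -(2 * μ * S) := by ring
              rw [this] at h4; linarith
      _ ≤ 1 + (1 + ENNReal.ofReal (Real.exp (2 * μ * τ + 384 * μ ^ 2 / m))) := by
          rw [lintegral_add_left measurable_const, lintegral_add_left (by fun_prop)]
          simp only [lintegral_one, measure_univ]
          gcongr
      _ = _ := by
          rw [← ENNReal.ofReal_one, ← ENNReal.ofReal_add zero_le_one (Real.exp_pos _).le,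
            ← ENNReal.ofReal_add zero_le_one (by positivity)]
          congr 1; ring
  · calc _ ≤ ∫⁻ W, (1 + (ENNReal.ofReal (Real.exp (μ + ν / 4)) *
          ENNReal.ofReal (Real.exp (-(ν * Sr h h' W))))) ∂(gaussMat m q (vr m)) := by
          apply lintegral_mono
          intro W
          simp only
          set S := Sr h h' W
          rw [← ENNReal.ofReal_mul (Real.exp_pos _).le,
            ← Real.exp_add, ← ENNReal.ofReal_one,
            ← ENNReal.ofReal_add zero_le_one (by positivity)]
          apply ENNReal.ofReal_le_ofReal
          have p1 := Real.exp_pos (μ + ν / 4 + -(ν * S))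
          unfold yfn
          split_ifs with hS
          · have : Real.exp (μ * 1) ≤ Real.exp (μ + ν / 4 + -(ν * S)) := by
              apply Real.exp_le_exp.mpr
              have : 0 < ν := by positivity
              nlinarith
            linarith
          · simp; positivity
      _ ≤ 1 + 1 := by
          rw [lintegral_add_left measurable_const]
          simp only [lintegral_one, measure_univ]
          gcongr
      _ ≤ _ := by
          rw [← ENNReal.ofReal_one, ← ENNReal.ofReal_add zero_le_one zero_le_one]
          apply ENNReal.ofReal_le_ofReal
          have := Real.exp_pos (2 * μ * τ + 384 * μ ^ 2 / m)
          linarith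

lemma row_mgf_up (hm : 0 < m) (h : Fin q → ℝ) (hh : h ≠ 0) (μ : ℝ) (hμ : 0 ≤ μ)
    (hμm : μ ≤ m / 8) :
    ∫⁻ w, ENNReal.ofReal (Real.exp (μ / nsq h * Zr h 0 w)) ∂(gvec q (vr m)) ≤
      ENNReal.ofReal (Real.exp (μ / m + 8 * μ ^ 2 / m ^ 2)) := by
  have hm' : (0 : ℝ) < m := by exact_mod_cast hm
  have hN : 0 < nsq h := nsq_pos hh
  have hZm := measurable_Zr h 0
  set θ := μ / nsq h with hθ
  set I := ∫⁻ w, ENNReal.ofReal (Real.exp (θ * Zr h 0 w)) ∂(gvec q (vr m)) with hI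
  have hneg : I = ∫⁻ w, ENNReal.ofReal (Real.exp (θ * Zr h 0 (-w))) ∂(gvec q (vr m)) := by
    rw [hI]
    conv_lhs => rw [← gvec_neg q (vr m)]
    rw [lintegral_map (by fun_prop) measurable_neg]
  have hσ : θ * (vr m * nsq h) = 2 * μ / m := by rw [hθ, vr_coe]; field_simp
  have hsq : ∫⁻ w, ENNReal.ofReal (Real.exp (θ * dot w h ^ 2)) ∂(gvec q (vr m)) ≤
      ENNReal.ofReal (1 + 2 * μ / m + 4 * (2 * μ / m) ^ 2) := by
    have h1 := gvec_map_dot q (vr m) ⟨vr m * nsq h, mul_nonneg (vr m).2 (nsq_nonneg h)⟩ h rfl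
    have h2 := lintegral_exp_sq_gaussian ⟨vr m * nsq h, mul_nonneg (vr m).2 (nsq_nonneg h)⟩ θ
      (by positivity) (by
        change θ * (vr m * nsq h) ≤ _
        rw [hσ, div_le_div_iff₀ hm' (by norm_num)]; linarith)
    rw [← h1, lintegral_map (by fun_prop) (measurable_dot h)] at h2
    change _ ≤ ENNReal.ofReal (1 + θ * (vr m * nsq h) + 4 * (θ * (vr m * nsq h)) ^ 2) at h2
    rwa [hσ] at h2
  have h2I : 2 * I ≤ ENNReal.ofReal (2 + 2 * μ / m + 4 * (2 * μ / m) ^ 2) := by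
    calc 2 * I = ∫⁻ w, (ENNReal.ofReal (Real.exp (θ * Zr h 0 w)) +
          ENNReal.ofReal (Real.exp (θ * Zr h 0 (-w)))) ∂(gvec q (vr m)) := by
          rw [lintegral_add_left (by fun_prop), ← hneg, two_mul]
      _ = ∫⁻ w, (1 + ENNReal.ofReal (Real.exp (θ * dot w h ^ 2))) ∂(gvec q (vr m)) := by
          refine lintegral_congr fun w => ?_
          have hz : dot w (0 : Fin q → ℝ) = 0 := by simp [dot]
          simp only [Zr, dot_neg_left, hz]
          rcases le_or_gt 0 (dot w h) with h0 | h0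
          · rw [max_eq_left h0, max_eq_right (by linarith : -dot w h ≤ 0)]
            simp [add_comm]
          · rw [max_eq_right h0.le, max_eq_left (by linarith : 0 ≤ -dot w h)]
            simp
      _ ≤ _ := by
          rw [lintegral_add_left measurable_const]
          simp only [lintegral_one, measure_univ]
          refine (add_le_add_right hsq 1).trans ?_
          rw [← ENNReal.ofReal_one, ← ENNReal.ofReal_add zero_le_one (by positivity)]
          apply ENNReal.ofReal_le_ofReal; linarith
  have h3 : I ≤ ENNReal.ofReal (2 + 2 * μ / m + 4 * (2 * μ / m) ^ 2) / 2 := by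
    rw [ENNReal.le_div_iff_mul_le (by simp) (by simp), mul_comm]; exact h2I
  refine h3.trans ?_
  have : (2 : ENNReal) = ENNReal.ofReal 2 := by simp
  rw [this, ← ENNReal.ofReal_div_of_pos (by norm_num)]
  apply ENNReal.ofReal_le_ofReal
  have h7 := Real.add_one_le_exp (μ / m + 8 * μ ^ 2 / m ^ 2)
  refine le_trans (le_of_eq ?_) h7
  field_simp; ring

lemma layer_mgf_up (hm : 0 < m) (h : Fin q → ℝ) (hh : h ≠ 0) (μ : ℝ) (hμ : 0 ≤ μ)
    (hμm : μ ≤ m / 8) :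
    ∫⁻ W, ENNReal.ofReal (Real.exp (μ * Sr h 0 W)) ∂(gaussMat m q (vr m)) ≤
      ENNReal.ofReal (Real.exp (μ + 8 * μ ^ 2 / m)) := by
  have hm' : (0 : ℝ) < m := by exact_mod_cast hm
  have e : ∀ W : Fin m → Fin q → ℝ, ENNReal.ofReal (Real.exp (μ * Sr h 0 W)) =
      ∏ k, ENNReal.ofReal (Real.exp (μ / nsq h * Zr h 0 (W k))) := by
    intro W
    rw [← ENNReal.ofReal_prod_of_nonneg fun _ _ => (Real.exp_pos _).le, ← Real.exp_sum]
    congr 2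
    rw [← Finset.mul_sum, Sr, nsq_relu_sub, sub_zero]
    ring
  simp_rw [e]
  rw [gaussMat_eq]
  have hmeas := measurable_Zr h 0
  refine (lintegral_pi_prod_le m (gvec q (vr m))
    (fun _ w => ENNReal.ofReal (Real.exp (μ / nsq h * Zr h 0 w)))
    fun k => by fun_prop).trans ?_
  calc _ ≤ ∏ k : Fin m, ENNReal.ofReal (Real.exp (μ / m + 8 * μ ^ 2 / m ^ 2)) :=
        Finset.prod_le_prod' fun k _ => row_mgf_up hm h hh μ hμ hμm
    _ = _ := by
        rw [Finset.prod_const, Finset.card_univ, Fintype.card_fin,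
          ← ENNReal.ofReal_pow (Real.exp_pos _).le, ← Real.exp_nat_mul]
        congr 2
        field_simp

/-- Exponential moment of the excess energy of one vector after one layer. -/
lemma step_up (hm : 0 < m) (h : Fin q → ℝ) (hh : h ≠ 0) (μ : ℝ) (hμ : 0 ≤ μ)
    (hμm : μ ≤ m / 8) :
    ∫⁻ W, ENNReal.ofReal (Real.exp (μ * max 0 (Sr h 0 W - 1))) ∂(gaussMat m q (vr m)) ≤
      ENNReal.ofReal (1 + Real.exp (8 * μ ^ 2 / m)) := by
  have hSm := measurable_Sr (m := m) h 0
  calc _ ≤ ∫⁻ W, (1 + ENNReal.ofReal (Real.exp (-μ)) * ENNReal.ofReal (Real.exp (μ * Sr h 0 W)))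
        ∂(gaussMat m q (vr m)) := by
        apply lintegral_mono
        intro W
        simp only
        rw [← ENNReal.ofReal_mul (Real.exp_pos _).le, ← Real.exp_add, ← ENNReal.ofReal_one,
          ← ENNReal.ofReal_add zero_le_one (Real.exp_pos _).le]
        apply ENNReal.ofReal_le_ofReal
        have := Real.exp_pos (-μ + μ * Sr h 0 W)
        rcases max_choice 0 (Sr h 0 W - 1) with h5 | h5 <;> rw [h5]
        · simp; positivity
        · rw [show μ * (Sr h 0 W - 1) = -μ + μ * Sr h 0 W by ring]; linarith
    _ ≤ 1 + ENNReal.ofReal (Real.exp (-μ)) * ENNReal.ofReal (Real.exp (μ + 8 * μ ^ 2 / m)) := by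
        rw [lintegral_add_left measurable_const, lintegral_const_mul _ (by fun_prop)]
        simp only [lintegral_one, measure_univ]
        gcongr
        exact layer_mgf_up hm h hh μ hμ hμm
    _ = _ := by
        rw [← ENNReal.ofReal_mul (Real.exp_pos _).le, ← Real.exp_add, ← ENNReal.ofReal_one,
          ← ENNReal.ofReal_add zero_le_one (Real.exp_pos _).le]
        congr 3; ring

end Step

/-! ### Multiplicative functionals along the layers -/

/-- Product of a functional `f` of (state, weight) along a chain with transition `nx`. -/
def acc {S M : Type*} (nx : S → M → S) (f : S → M → ENNReal) :
    (p : ℕ) → S → (Fin p → M) → ENNReal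
  | 0, _, _ => 1
  | p + 1, s, W => f s (W 0) * acc nx f p (nx s (W 0)) (Fin.tail W)

lemma acc_eq {S M : Type*} (nx : S → M → S) (f : S → M → ENNReal) (p : ℕ) (s : ℕ → S)
    (W : Fin p → M) (hs : ∀ ℓ : Fin p, s (ℓ + 1) = nx (s ℓ) (W ℓ)) :
    acc nx f p (s 0) W = ∏ ℓ : Fin p, f (s ℓ) (W ℓ) := by
  induction p generalizing s with
  | zero => simp [acc]
  | succ p ih =>
    rw [acc, Fin.prod_univ_succ]
    have h0 := hs 0
    simp only [Fin.val_zero, zero_add] at h0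
    rw [← h0]
    have := ih (fun k => s (k + 1)) (Fin.tail W) (fun ℓ => by
      have := hs ℓ.succ; simpa [Fin.tail] using this)
    simp only [zero_add] at this
    rw [this]
    simp [Fin.tail]

/-- Split off the first coordinate of a product measure. -/
lemma lintegral_pi_succ_le {M : Type*} [MeasurableSpace M] (μ : Measure M)
    [IsProbabilityMeasure μ] (p : ℕ) (F : (Fin (p + 1) → M) → ENNReal) :
    ∫⁻ W, F W ∂(Measure.pi fun _ : Fin (p + 1) => μ) ≤
      ∫⁻ w, ∫⁻ V, F (Fin.cons w V) ∂(Measure.pi fun _ : Fin p => μ) ∂μ := by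
  have hmp := (measurePreserving_piFinSuccAbove (fun _ : Fin (p + 1) => μ) 0).symm
  rw [← hmp.map_eq, lintegral_map_equiv]
  refine (lintegral_prod_le _).trans (le_of_eq ?_)
  refine lintegral_congr fun w => lintegral_congr fun V => ?_
  congr 1
  ext i : 1
  refine Fin.cases ?_ (fun j => ?_) i <;>
    simp [MeasurableEquiv.piFinSuccAbove]

/-- A bound `K` on the conditional mean of each factor gives `K ^ p` for the mean of the product.
Only the direction of Tonelli's theorem valid for arbitrary functions is used, so `f` and `nx` need
not be measurable. -/
lemma lintegral_acc_le {S M : Type*} [MeasurableSpace M] (μ : Measure M) [IsProbabilityMeasure μ]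
    (nx : S → M → S) (f : S → M → ENNReal) (hfin : ∀ s w, f s w ≠ ⊤) (K : ENNReal) (hK : K ≠ ⊤)
    (hf : ∀ s, ∫⁻ w, f s w ∂μ ≤ K) (p : ℕ) (s : S) :
    ∫⁻ W, acc nx f p s W ∂(Measure.pi fun _ : Fin p => μ) ≤ K ^ p := by
  induction p generalizing s with
  | zero => simp [acc]
  | succ p ih =>
    refine (lintegral_pi_succ_le μ p _).trans ?_
    calc _ = ∫⁻ w, f s w * ∫⁻ V, acc nx f p (nx s w) V ∂(Measure.pi fun _ : Fin p => μ) ∂μ := by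
          refine lintegral_congr fun w => ?_
          rw [← lintegral_const_mul' _ _ (hfin s w)]
          refine lintegral_congr fun V => ?_
          simp [acc, Fin.tail_cons]
      _ ≤ ∫⁻ w, f s w * K ^ p ∂μ := by
          gcongr with w
          exact ih _
      _ ≤ _ := by
          rw [lintegral_mul_const' _ _ (ENNReal.pow_ne_top hK), pow_succ, mul_comm]
          gcongr
          exact hf s

/-- Exponential Markov inequality. -/
lemma exp_markov {Ω : Type*} [MeasurableSpace Ω] (P : Measure Ω) (F : Ω → ℝ) (hF : Measurable F)
    (K t : ℝ)
    (h : ∫⁻ z, ENNReal.ofReal (Real.exp (F z)) ∂P ≤ ENNReal.ofReal K) :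
    P {z | t ≤ F z} ≤ ENNReal.ofReal (Real.exp (-t) * K) := by
  have hm : Measurable fun z => ENNReal.ofReal (Real.exp (F z)) := by fun_prop
  have h1 := mul_meas_ge_le_lintegral hm (ENNReal.ofReal (Real.exp t)) (μ := P)
  have h2 : {z | t ≤ F z} ⊆
      {z | ENNReal.ofReal (Real.exp t) ≤ ENNReal.ofReal (Real.exp (F z))} := fun z hz =>
    ENNReal.ofReal_le_ofReal (Real.exp_le_exp.mpr hz)
  have hpos : ENNReal.ofReal (Real.exp t) ≠ 0 := by simp [Real.exp_pos]
  calc P {z | t ≤ F z} ≤ ENNReal.ofReal K / ENNReal.ofReal (Real.exp t) := by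
        rw [ENNReal.le_div_iff_mul_le (Or.inl hpos) (Or.inl ENNReal.ofReal_ne_top), mul_comm]
        exact (mul_le_mul_right (measure_mono h2) _).trans (h1.trans h)
    _ = _ := by
        rw [← ENNReal.ofReal_div_of_pos (Real.exp_pos _), Real.exp_neg]
        congr 1; field_simp

/-! ### The forward sequences -/


lemma Wat_succ (W : Fin L → Fin m → Fin m → ℝ) (ℓ : Fin L) : Wat W ((ℓ : ℕ) + 1) = W ℓ := by
  have : 1 ≤ (ℓ : ℕ) + 1 ∧ (ℓ : ℕ) + 1 ≤ L := ⟨by omega, by omega⟩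
  simp [Wat, this]

lemma hseq_succ (A : Fin m → Fin 𝔡 → ℝ) (W : Fin L → Fin m → Fin m → ℝ) (x : Fin 𝔡 → ℝ)
    (ℓ : Fin L) : hseq A W x ((ℓ : ℕ) + 1) = relu (mulVec (W ℓ) (hseq A W x ℓ)) := by
  rw [hseq, if_pos (by omega), Wat_succ]

lemma gseq_succ (A : Fin m → Fin 𝔡 → ℝ) (W : Fin L → Fin m → Fin m → ℝ) (x : Fin 𝔡 → ℝ)
    (ℓ : Fin L) : gseq A W x ((ℓ : ℕ) + 1) = mulVec (W ℓ) (hseq A W x ℓ) := by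
  rw [gseq, Wat_succ]

lemma hseq_eq_relu (A : Fin m → Fin 𝔡 → ℝ) (W : Fin L → Fin m → Fin m → ℝ) (x : Fin 𝔡 → ℝ)
    (ℓ : ℕ) (hℓ : ℓ ≤ L) : hseq A W x ℓ = relu (gseq A W x ℓ) := by
  cases ℓ with
  | zero => rfl
  | succ ℓ => rw [hseq, if_pos hℓ, gseq]

lemma mulVec_smul' {p q : ℕ} (M : Fin p → Fin q → ℝ) (c : ℝ) (v : Fin q → ℝ) :
    mulVec M (c • v) = c • mulVec M v := by
  ext i; exact dot_smul_right c (M i) v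

lemma relu_smul' {p : ℕ} (c : ℝ) (hc : 0 ≤ c) (v : Fin p → ℝ) : relu (c • v) = c • relu v := by
  ext i
  simp only [relu, Pi.smul_apply, smul_eq_mul]
  rw [mul_max_of_nonneg _ _ hc, mul_zero]

/-- Positive homogeneity of the network in its input. -/
lemma hseq_smul (A : Fin m → Fin 𝔡 → ℝ) (W : Fin L → Fin m → Fin m → ℝ) (x : Fin 𝔡 → ℝ)
    (c : ℝ) (hc : 0 ≤ c) (ℓ : ℕ) : hseq A W (c • x) ℓ = c • hseq A W x ℓ := by
  induction ℓ with
  | zero => simp only [hseq]; rw [mulVec_smul', relu_smul' c hc]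
  | succ ℓ ih =>
    simp only [hseq]
    rw [ih]
    split_ifs
    · rw [mulVec_smul', relu_smul' c hc]
    · rfl

lemma hseq_zero (A : Fin m → Fin 𝔡 → ℝ) (W : Fin L → Fin m → Fin m → ℝ) (ℓ : ℕ) :
    hseq A W (0 : Fin 𝔡 → ℝ) ℓ = 0 := by
  have := hseq_smul A W (0 : Fin 𝔡 → ℝ) 0 le_rfl ℓ
  simpa using this

/-- Sample space of the initialization `(A, W, B)`. -/
abbrev Om (𝔡 m d L : ℕ) : Type :=
  (Fin m → Fin 𝔡 → ℝ) × (Fin L → Fin m → Fin m → ℝ) × (Fin d → Fin m → ℝ)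

@[fun_prop]
lemma measurable_Wat {Ω : Type*} [MeasurableSpace Ω] {W : Ω → Fin L → Fin m → Fin m → ℝ}
    (hW : Measurable W) (ℓ : ℕ) : Measurable fun z => Wat (W z) ℓ := by
  unfold Wat
  split_ifs
  · fun_prop
  · exact measurable_const

@[fun_prop]
lemma measurable_mulVec {Ω : Type*} [MeasurableSpace Ω] {p q : ℕ} {M : Ω → Fin p → Fin q → ℝ}
    {v : Ω → Fin q → ℝ} (hM : Measurable M) (hv : Measurable v) :
    Measurable fun z => mulVec (M z) (v z) := by
  unfold mulVec; fun_prop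

@[fun_prop]
lemma measurable_relu {Ω : Type*} [MeasurableSpace Ω] {p : ℕ}
    {v : Ω → Fin p → ℝ} (hv : Measurable v) :
    Measurable fun z => relu (v z) := by
  unfold relu; fun_prop

@[fun_prop]
lemma measurable_hseq {Ω : Type*} [MeasurableSpace Ω] {A : Ω → Fin m → Fin 𝔡 → ℝ}
    {W : Ω → Fin L → Fin m → Fin m → ℝ} (hA : Measurable A) (hW : Measurable W) (x : Fin 𝔡 → ℝ)
    (ℓ : ℕ) : Measurable fun z => hseq (A z) (W z) x ℓ := by
  induction ℓ with
  | zero => simp only [hseq]; fun_prop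
  | succ ℓ ih =>
    simp only [hseq]
    split_ifs
    · fun_prop
    · exact ih

@[fun_prop]
lemma measurable_gseq {Ω : Type*} [MeasurableSpace Ω] {A : Ω → Fin m → Fin 𝔡 → ℝ}
    {W : Ω → Fin L → Fin m → Fin m → ℝ} (hA : Measurable A) (hW : Measurable W) (x : Fin 𝔡 → ℝ)
    (ℓ : ℕ) : Measurable fun z => gseq (A z) (W z) x ℓ := by
  cases ℓ with
  | zero => simp only [gseq]; fun_prop
  | succ ℓ => simp only [gseq]; fun_prop

@[fun_prop]
lemma measurable_nsq {Ω : Type*} [MeasurableSpace Ω] {p : ℕ}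
    {v : Ω → Fin p → ℝ} (hv : Measurable v) : Measurable fun z => nsq (v z) := by
  unfold nsq; fun_prop

@[fun_prop]
lemma measurable_dot' {Ω : Type*} [MeasurableSpace Ω] {p : ℕ}
    {v w : Ω → Fin p → ℝ} (hv : Measurable v) (hw : Measurable w) :
    Measurable fun z => dot (v z) (w z) := by
  unfold dot; fun_prop

@[fun_prop]
lemma measurable_Sr' {Ω : Type*} [MeasurableSpace Ω] {p q : ℕ} {W : Ω → Fin p → Fin q → ℝ}
    {v w : Ω → Fin q → ℝ} (hv : Measurable v) (hw : Measurable w) (hW : Measurable W) :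
    Measurable fun z => Sr (v z) (w z) (W z) := by
  unfold Sr
  fun_prop

/-- Tonelli bound for the joint law of the initialization. -/
lemma lintegral_init_le (F : Om 𝔡 m d L → ENNReal) :
    ∫⁻ z, F z ∂(initMeasure 𝔡 m d L) ≤
      ∫⁻ A, ∫⁻ W, ∫⁻ B, F (A, W, B) ∂(gaussMat d m (1 / d))
        ∂(Measure.pi fun _ : Fin L => gaussMat m m (vr m)) ∂(gaussMat m 𝔡 (vr m)) := by
  unfold initMeasure
  refine (lintegral_prod_le _).trans (lintegral_mono fun A => ?_)
  exact lintegral_prod_le _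

instance : IsProbabilityMeasure (initMeasure 𝔡 m d L) := by
  unfold initMeasure; infer_instance

open Classical in
/-- Exponent charged to one layer for a pair of states. -/
def yP {p q : ℕ} (c : Prop) (h h' : Fin q → ℝ) (W : Fin p → Fin q → ℝ) : ℝ :=
  if h = h' then 0 else yfn c (Sr h h' W)

lemma yP_nonneg {p q : ℕ} (c : Prop) (h h' : Fin q → ℝ) (W : Fin p → Fin q → ℝ) :
    0 ≤ yP c h h' W := by
  unfold yP; split_ifs <;> simp [yfn_nonneg]

lemma measurable_yP {Ω : Type*} [MeasurableSpace Ω] {p q : ℕ}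
    {c : Ω → Prop} (hc : MeasurableSet {z | c z}) {W : Ω → Fin p → Fin q → ℝ}
    {v w : Ω → Fin q → ℝ} (hv : Measurable v) (hw : Measurable w) (hW : Measurable W) :
    Measurable fun z => yP (c z) (v z) (w z) (W z) := by
  unfold yP yfn
  refine Measurable.ite (measurableSet_eq_fun hv hw) measurable_const ?_
  refine Measurable.ite (measurableSet_lt (by fun_prop) measurable_const) measurable_const ?_
  exact Measurable.ite hc (by fun_prop) measurable_const

/-- Total exponent along the network for two inputs. -/
def ytot (c : (Fin m → ℝ) → (Fin m → ℝ) → Prop) (x x' : Fin 𝔡 → ℝ) (A : Fin m → Fin 𝔡 → ℝ)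
    (W : Fin L → Fin m → Fin m → ℝ) : ℝ :=
  yP False x x' A + ∑ ℓ : Fin L, yP (c (hseq A W x ℓ) (hseq A W x' ℓ))
    (hseq A W x ℓ) (hseq A W x' ℓ) (W ℓ)

lemma lintegral_exp_yP_le {q : ℕ} (hm : 0 < m) (c : Prop) (h h' : Fin q → ℝ) (μ τ : ℝ)
    (hμ : 0 ≤ μ) (hτ : 0 ≤ τ) (hμm : μ ≤ m / 6144)
    (hκ : h ≠ h' → c → (1 - τ) * (nsq (h - h') / m) ≤ ∫ w, Zr h h' w ∂(gvec q (vr m))) :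
    ∫⁻ W, ENNReal.ofReal (Real.exp (μ * yP c h h' W)) ∂(gaussMat m q (vr m)) ≤
      ENNReal.ofReal (3 * Real.exp (2 * μ * τ + 384 * μ ^ 2 / m)) := by
  have h1 : 1 ≤ Real.exp (2 * μ * τ + 384 * μ ^ 2 / m) := Real.one_le_exp (by positivity)
  by_cases hh : h = h'
  · simp only [yP, hh, if_true, mul_zero, Real.exp_zero, ENNReal.ofReal_one, lintegral_one,
      measure_univ]
    rw [← ENNReal.ofReal_one]
    exact ENNReal.ofReal_le_ofReal (by linarith)
  · simp only [yP, hh, if_false]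
    refine (step_low hm c h h' hh μ τ hμ hμm (hκ hh)).trans (ENNReal.ofReal_le_ofReal ?_)
    linarith

/-- The total loss of a pair of inputs along the network is rarely at least `1`. -/
lemma pair_event (hm : 0 < m) (c : (Fin m → ℝ) → (Fin m → ℝ) → Prop)
    (hc : MeasurableSet {z : (Fin m → ℝ) × (Fin m → ℝ) | c z.1 z.2}) (x x' : Fin 𝔡 → ℝ) (μ τ : ℝ)
    (hμ : 0 ≤ μ) (hτ : 0 ≤ τ) (hμm : μ ≤ m / 6144)
    (hκ : ∀ h h' : Fin m → ℝ, h ≠ h' → c h h' →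
      (1 - τ) * (nsq (h - h') / m) ≤ ∫ w, Zr h h' w ∂(gvec m (vr m))) :
    initMeasure 𝔡 m d L {z | 1 ≤ ytot c x x' z.1 z.2.1} ≤
      ENNReal.ofReal (Real.exp (-μ) *
        (3 * Real.exp (2 * μ * τ + 384 * μ ^ 2 / m)) ^ (L + 1)) := by
  set K := 3 * Real.exp (2 * μ * τ + 384 * μ ^ 2 / m) with hK
  have hK0 : 0 ≤ K := by positivity
  have hmeas : Measurable fun z : Om 𝔡 m d L => ytot c x x' z.1 z.2.1 := by
    unfold ytot
    refine Measurable.add (measurable_yP (by simp) measurable_const measurable_const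
      (by fun_prop)) (Finset.measurable_sum _ fun ℓ _ => ?_)
    refine measurable_yP ?_ (by fun_prop) (by fun_prop) (by fun_prop)
    have : Measurable fun z : Om 𝔡 m d L =>
      (hseq z.1 z.2.1 x ℓ, hseq z.1 z.2.1 x' ℓ) := by fun_prop
    exact this hc
  have hint : ∫⁻ z, ENNReal.ofReal (Real.exp (μ * ytot c x x' z.1 z.2.1))
      ∂(initMeasure 𝔡 m d L) ≤ ENNReal.ofReal (K ^ (L + 1)) := by
    refine (lintegral_init_le _).trans ?_
    simp only [lintegral_const, measure_univ, mul_one]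
    calc _ ≤ ∫⁻ A, ENNReal.ofReal (Real.exp (μ * yP False x x' A)) *
          ENNReal.ofReal K ^ L ∂(gaussMat m 𝔡 (vr m)) := by
          apply lintegral_mono
          intro A
          simp only
          let nx : ((Fin m → ℝ) × (Fin m → ℝ)) → (Fin m → Fin m → ℝ) →
            ((Fin m → ℝ) × (Fin m → ℝ)) := fun s W => (relu (mulVec W s.1), relu (mulVec W s.2))
          let f : ((Fin m → ℝ) × (Fin m → ℝ)) → (Fin m → Fin m → ℝ) → ENNReal := fun s W =>
            ENNReal.ofReal (Real.exp (μ * yP (c s.1 s.2) s.1 s.2 W))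
          have h1 := lintegral_acc_le (gaussMat m m (vr m)) nx f
            (fun _ _ => ENNReal.ofReal_ne_top) (ENNReal.ofReal K) ENNReal.ofReal_ne_top
            (fun s => lintegral_exp_yP_le hm _ s.1 s.2 μ τ hμ hτ hμm (hκ s.1 s.2)) L
            (relu (mulVec A x), relu (mulVec A x'))
          calc _ = ∫⁻ W, ENNReal.ofReal (Real.exp (μ * yP False x x' A)) *
                acc nx f L (relu (mulVec A x), relu (mulVec A x')) W
                ∂(Measure.pi fun _ : Fin L => gaussMat m m (vr m)) := by
                refine lintegral_congr fun W => ?_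
                have := acc_eq nx f L (fun ℓ => (hseq A W x ℓ, hseq A W x' ℓ)) W
                  (fun ℓ => by simp only [hseq_succ, nx])
                have e : (relu (mulVec A x), relu (mulVec A x')) =
                  (fun ℓ => (hseq A W x ℓ, hseq A W x' ℓ)) 0 := rfl
                rw [e, this, ytot, mul_add, Real.exp_add, ENNReal.ofReal_mul (Real.exp_pos _).le,
                  Finset.mul_sum, Real.exp_sum,
                  ENNReal.ofReal_prod_of_nonneg fun _ _ => (Real.exp_pos _).le]
            _ ≤ _ := by
                rw [lintegral_const_mul' _ _ ENNReal.ofReal_ne_top]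
                gcongr
      _ ≤ _ := by
          rw [lintegral_mul_const' _ _ (ENNReal.pow_ne_top ENNReal.ofReal_ne_top),
            ENNReal.ofReal_pow hK0, pow_succ, mul_comm]
          gcongr
          exact lintegral_exp_yP_le hm False x x' μ τ hμ hτ hμm (fun _ h => h.elim)
  have := exp_markov _ (fun z : Om 𝔡 m d L => μ * ytot c x x' z.1 z.2.1) (by fun_prop) _ μ hint
  refine le_trans (measure_mono ?_) this
  intro z hz
  simp only [Set.mem_ofPred_eq] at hz ⊢
  nlinarith

open Classical in
/-- Exponent charged to one layer for the growth of the norm. -/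
def uP {p q : ℕ} (h : Fin q → ℝ) (W : Fin p → Fin q → ℝ) : ℝ :=
  if h = 0 then 0 else max 0 (Sr h 0 W - 1)

lemma uP_nonneg {p q : ℕ} (h : Fin q → ℝ) (W : Fin p → Fin q → ℝ) : 0 ≤ uP h W := by
  unfold uP; split_ifs <;> simp

lemma measurable_uP {Ω : Type*} [MeasurableSpace Ω] {p q : ℕ} {W : Ω → Fin p → Fin q → ℝ}
    {v : Ω → Fin q → ℝ} (hv : Measurable v) (hW : Measurable W) :
    Measurable fun z => uP (v z) (W z) := by
  unfold uP
  exact Measurable.ite (measurableSet_eq_fun hv measurable_const) measurable_const (by fun_prop)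

/-- Total growth exponent along the network. -/
def utot (x : Fin 𝔡 → ℝ) (A : Fin m → Fin 𝔡 → ℝ) (W : Fin L → Fin m → Fin m → ℝ) : ℝ :=
  uP x A + ∑ ℓ : Fin L, uP (hseq A W x ℓ) (W ℓ)

lemma lintegral_exp_uP_le {q : ℕ} (hm : 0 < m) (h : Fin q → ℝ) (μ : ℝ)
    (hμ : 0 ≤ μ) (hμm : μ ≤ m / 8) :
    ∫⁻ W, ENNReal.ofReal (Real.exp (μ * uP h W)) ∂(gaussMat m q (vr m)) ≤
      ENNReal.ofReal (2 * Real.exp (8 * μ ^ 2 / m)) := by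
  have h1 : 1 ≤ Real.exp (8 * μ ^ 2 / m) := Real.one_le_exp (by positivity)
  by_cases hh : h = 0
  · simp only [uP, hh, if_true, mul_zero, Real.exp_zero, ENNReal.ofReal_one, lintegral_one,
      measure_univ]
    rw [← ENNReal.ofReal_one]
    exact ENNReal.ofReal_le_ofReal (by linarith)
  · simp only [uP, hh, if_false]
    refine (step_up hm h hh μ hμ hμm).trans (ENNReal.ofReal_le_ofReal ?_)
    linarith

/-- The total growth of one input along the network is rarely at least `1`. -/
lemma up_event (hm : 0 < m) (x : Fin 𝔡 → ℝ) (μ : ℝ) (hμ : 0 ≤ μ) (hμm : μ ≤ m / 8) :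
    initMeasure 𝔡 m d L {z | 1 ≤ utot x z.1 z.2.1} ≤
      ENNReal.ofReal (Real.exp (-μ) * (2 * Real.exp (8 * μ ^ 2 / m)) ^ (L + 1)) := by
  set K := 2 * Real.exp (8 * μ ^ 2 / m) with hK
  have hK0 : 0 ≤ K := by positivity
  have hmeas : Measurable fun z : Om 𝔡 m d L => utot x z.1 z.2.1 := by
    unfold utot
    exact Measurable.add (measurable_uP measurable_const
      (by fun_prop)) (Finset.measurable_sum _ fun ℓ _ => measurable_uP (by fun_prop) (by fun_prop))
  have hint : ∫⁻ z, ENNReal.ofReal (Real.exp (μ * utot x z.1 z.2.1))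
      ∂(initMeasure 𝔡 m d L) ≤ ENNReal.ofReal (K ^ (L + 1)) := by
    refine (lintegral_init_le _).trans ?_
    simp only [lintegral_const, measure_univ, mul_one]
    calc _ ≤ ∫⁻ A, ENNReal.ofReal (Real.exp (μ * uP x A)) *
          ENNReal.ofReal K ^ L ∂(gaussMat m 𝔡 (vr m)) := by
          apply lintegral_mono
          intro A
          simp only
          let nx : (Fin m → ℝ) → (Fin m → Fin m → ℝ) → (Fin m → ℝ) := fun s W => relu (mulVec W s)
          let f : (Fin m → ℝ) → (Fin m → Fin m → ℝ) → ENNReal := fun s W =>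
            ENNReal.ofReal (Real.exp (μ * uP s W))
          have h1 := lintegral_acc_le (gaussMat m m (vr m)) nx f
            (fun _ _ => ENNReal.ofReal_ne_top) (ENNReal.ofReal K) ENNReal.ofReal_ne_top
            (fun s => lintegral_exp_uP_le hm s μ hμ hμm) L (relu (mulVec A x))
          calc _ = ∫⁻ W, ENNReal.ofReal (Real.exp (μ * uP x A)) *
                acc nx f L (relu (mulVec A x)) W
                ∂(Measure.pi fun _ : Fin L => gaussMat m m (vr m)) := by
                refine lintegral_congr fun W => ?_
                have := acc_eq nx f L (fun ℓ => hseq A W x ℓ) W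
                  (fun ℓ => by simp only [hseq_succ, nx])
                have e : relu (mulVec A x) = (fun ℓ => hseq A W x ℓ) 0 := rfl
                rw [e, this, utot, mul_add, Real.exp_add, ENNReal.ofReal_mul (Real.exp_pos _).le,
                  Finset.mul_sum, Real.exp_sum,
                  ENNReal.ofReal_prod_of_nonneg fun _ _ => (Real.exp_pos _).le]
            _ ≤ _ := by
                rw [lintegral_const_mul' _ _ ENNReal.ofReal_ne_top]
                gcongr
      _ ≤ _ := by
          rw [lintegral_mul_const' _ _ (ENNReal.pow_ne_top ENNReal.ofReal_ne_top),
            ENNReal.ofReal_pow hK0, pow_succ, mul_comm]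
          gcongr
          exact lintegral_exp_uP_le hm x μ hμ hμm
  have := exp_markov _ (fun z : Om 𝔡 m d L => μ * utot x z.1 z.2.1) (by fun_prop) _ μ hint
  refine le_trans (measure_mono ?_) this
  intro z hz
  simp only [Set.mem_ofPred_eq] at hz ⊢
  nlinarith

/-! ### Consequences of the layerwise exponents being small -/

/-- Discrete Grönwall: multiplicative losses `exp (-y ℓ)` accumulate additively. -/
lemma seq_low (L : ℕ) (Q : ℕ → ℝ) (y : Fin L → ℝ) (hy : ∀ ℓ, 0 ≤ y ℓ) (q : ℝ) (hq : 0 < q)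
    (h0 : q ≤ Q 0) (hstep : ∀ ℓ : Fin L, 0 < Q ℓ → Real.exp (-y ℓ) * Q ℓ ≤ Q (ℓ + 1)) :
    ∀ ℓ ≤ L, q * Real.exp (-∑ j, y j) ≤ Q ℓ := by
  set z : ℕ → ℝ := fun j => if h : j < L then y ⟨j, h⟩ else 0 with hz
  have hz0 : ∀ j, 0 ≤ z j := fun j => by simp only [hz]; split_ifs <;> simp [hy]
  have hzs : ∑ j, y j = ∑ j ∈ Finset.range L, z j := by
    rw [Finset.sum_range]; simp [hz]
  have key : ∀ ℓ ≤ L, q * Real.exp (-∑ j ∈ Finset.range ℓ, z j) ≤ Q ℓ := by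
    intro ℓ
    induction ℓ with
    | zero => intro _; simpa using h0
    | succ ℓ ih =>
      intro hℓ
      have h1 := ih (by omega)
      have hp : 0 < Q ℓ := lt_of_lt_of_le (by positivity) h1
      have h2 := hstep ⟨ℓ, by omega⟩ hp
      have e : z ℓ = y ⟨ℓ, by omega⟩ := by simp only [hz]; rw [dif_pos]
      rw [Finset.sum_range_succ, neg_add, Real.exp_add, e]
      simp only at h2
      have := mul_le_mul_of_nonneg_left h1 (Real.exp_pos (-y ⟨ℓ, by omega⟩)).le
      linarith
  intro ℓ hℓ
  refine le_trans ?_ (key ℓ hℓ)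
  rw [hzs]
  gcongr
  exact fun _ _ _ => hz0 _

lemma seq_up (L : ℕ) (Q : ℕ → ℝ) (y : Fin L → ℝ) (hy : ∀ ℓ, 0 ≤ y ℓ) (q : ℝ) (hq : 0 ≤ q)
    (h0 : Q 0 ≤ q) (hstep : ∀ ℓ : Fin L, Q (ℓ + 1) ≤ Real.exp (y ℓ) * Q ℓ) :
    ∀ ℓ ≤ L, Q ℓ ≤ q * Real.exp (∑ j, y j) := by
  set z : ℕ → ℝ := fun j => if h : j < L then y ⟨j, h⟩ else 0 with hz
  have hz0 : ∀ j, 0 ≤ z j := fun j => by simp only [hz]; split_ifs <;> simp [hy]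
  have hzs : ∑ j, y j = ∑ j ∈ Finset.range L, z j := by
    rw [Finset.sum_range]; simp [hz]
  have key : ∀ ℓ ≤ L, Q ℓ ≤ q * Real.exp (∑ j ∈ Finset.range ℓ, z j) := by
    intro ℓ
    induction ℓ with
    | zero => intro _; simpa using h0
    | succ ℓ ih =>
      intro hℓ
      have h1 := ih (by omega)
      have h2 := hstep ⟨ℓ, by omega⟩
      have e : z ℓ = y ⟨ℓ, by omega⟩ := by simp only [hz]; rw [dif_pos]
      rw [Finset.sum_range_succ, Real.exp_add, e]
      simp only at h2
      have := mul_le_mul_of_nonneg_left h1 (Real.exp_pos (y ⟨ℓ, by omega⟩)).le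
      linarith
  intro ℓ hℓ
  refine le_trans (key ℓ hℓ) ?_
  rw [hzs]
  gcongr
  exact fun _ _ _ => hz0 _

lemma yP_lt_one {p q : ℕ} {c : Prop} {h h' : Fin q → ℝ} (hh : h ≠ h') {W : Fin p → Fin q → ℝ}
    (hy : yP c h h' W < 1) : 1 / 4 ≤ Sr h h' W := by
  unfold yP at hy
  rw [if_neg hh] at hy
  by_contra hlt
  unfold yfn at hy
  rw [if_pos (not_le.mp hlt)] at hy
  exact lt_irrefl _ hy

lemma yP_exp {p q : ℕ} {c : Prop} (hc : c) {h h' : Fin q → ℝ} (hh : h ≠ h')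
    {W : Fin p → Fin q → ℝ} (hy : yP c h h' W < 1) :
    Real.exp (-yP c h h' W) ≤ Sr h h' W := by
  have h1 := yP_lt_one hh hy
  unfold yP yfn
  rw [if_neg hh, if_neg (not_lt.mpr h1), if_pos hc]
  calc Real.exp (-max 0 (-Real.log (Sr h h' W))) ≤ Real.exp (Real.log (Sr h h' W)) := by
        apply Real.exp_le_exp.mpr
        linarith [le_max_right 0 (-Real.log (Sr h h' W))]
    _ = _ := Real.exp_log (by linarith)

lemma nsq_layer {p q : ℕ} {h h' : Fin q → ℝ} (hh : h ≠ h') (W : Fin p → Fin q → ℝ) :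
    nsq (relu (mulVec W h) - relu (mulVec W h')) = Sr h h' W * nsq (h - h') := by
  have : 0 < nsq (h - h') := nsq_pos (sub_ne_zero.mpr hh)
  unfold Sr; field_simp

lemma exp_neg_one_bounds : (1 : ℝ) / 3 ≤ Real.exp (-1) ∧ Real.exp 1 ≤ 3 := by
  have h := Real.exp_one_lt_d9
  refine ⟨?_, by linarith⟩
  rw [Real.exp_neg, one_div]
  exact inv_anti₀ (Real.exp_pos _) (by linarith)

lemma ytot_terms (c : (Fin m → ℝ) → (Fin m → ℝ) → Prop) (x x' : Fin 𝔡 → ℝ)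
    (A : Fin m → Fin 𝔡 → ℝ) (W : Fin L → Fin m → Fin m → ℝ) (h : ytot c x x' A W < 1) :
    yP False x x' A < 1 ∧ ∑ ℓ : Fin L, yP (c (hseq A W x ℓ) (hseq A W x' ℓ))
    (hseq A W x ℓ) (hseq A W x' ℓ) (W ℓ) < 1 ∧ ∀ ℓ : Fin L, yP (c (hseq A W x ℓ) (hseq A W x' ℓ))
    (hseq A W x ℓ) (hseq A W x' ℓ) (W ℓ) < 1 := by
  unfold ytot at h
  have h1 := yP_nonneg False x x' A
  have h2 : 0 ≤ ∑ ℓ : Fin L, yP (c (hseq A W x ℓ) (hseq A W x' ℓ))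
    (hseq A W x ℓ) (hseq A W x' ℓ) (W ℓ) := Finset.sum_nonneg fun _ _ => yP_nonneg _ _ _ _
  refine ⟨by linarith, by linarith, fun ℓ => ?_⟩
  refine lt_of_le_of_lt (Finset.single_le_sum (f := fun ℓ : Fin L =>
    yP (c (hseq A W x ℓ) (hseq A W x' ℓ)) (hseq A W x ℓ) (hseq A W x' ℓ) (W ℓ))
    (fun _ _ => yP_nonneg _ _ _ _) (Finset.mem_univ ℓ)) (by linarith)

/-- No collapse of the forward norms. -/
lemma forward_low (x : Fin 𝔡 → ℝ) (hx : nsq x = 1) (A : Fin m → Fin 𝔡 → ℝ)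
    (W : Fin L → Fin m → Fin m → ℝ) (h : ytot (fun _ h' => h' = 0) x 0 A W < 1) :
    ∀ ℓ ≤ L, 1 / 12 ≤ nsq (hseq A W x ℓ) := by
  obtain ⟨h1, h2, h3⟩ := ytot_terms _ x 0 A W h
  have hx0 : x ≠ 0 := by rintro rfl; simp [nsq] at hx
  have hs0 := yP_lt_one hx0 h1
  have r0 : ∀ p q : ℕ, ∀ W : Fin p → Fin q → ℝ, relu (mulVec W 0) = 0 := by
    intro p q W; ext i; simp [relu, mulVec]
  have key := seq_low L (fun ℓ => nsq (hseq A W x ℓ)) _ (fun ℓ => yP_nonneg _ _ _ _) (1 / 4)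
    (by norm_num) (by
      have := nsq_layer hx0 A
      rw [r0, sub_zero, sub_zero, hx, mul_one] at this
      simp only [hseq]; rw [this]; exact hs0) (fun ℓ hpos => by
      have hne : hseq A W x ℓ ≠ hseq A W 0 ℓ := by
        rw [hseq_zero]; intro h0; rw [h0] at hpos; simp [nsq] at hpos
      have h4 := yP_exp (hseq_zero A W ℓ) hne (h3 ℓ)
      have h5 := nsq_layer hne (W ℓ)
      rw [hseq_succ]
      simp only [hseq_zero, r0, sub_zero] at h5 h4 ⊢
      rw [h5]
      exact mul_le_mul_of_nonneg_right h4 (nsq_nonneg _))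
  intro ℓ hℓ
  refine le_trans ?_ (key ℓ hℓ)
  have := Real.exp_le_exp.mpr (neg_le_neg h2.le)
  simp only [hseq_zero] at this ⊢
  linarith [exp_neg_one_bounds.1]

/-- No explosion of the forward norms. -/
lemma forward_up (x : Fin 𝔡 → ℝ) (hx : nsq x = 1) (A : Fin m → Fin 𝔡 → ℝ)
    (W : Fin L → Fin m → Fin m → ℝ) (h : utot x A W < 1) :
    ∀ ℓ ≤ L, nsq (hseq A W x ℓ) ≤ 3 := by
  have r0 : ∀ p q : ℕ, ∀ W : Fin p → Fin q → ℝ, relu (mulVec W 0) = 0 := by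
    intro p q W; ext i; simp [relu, mulVec]
  have step : ∀ (p q : ℕ) (h : Fin q → ℝ) (W : Fin p → Fin q → ℝ),
      nsq (relu (mulVec W h)) ≤ Real.exp (uP h W) * nsq h := by
    intro p q h W
    by_cases hh : h = 0
    · subst hh; rw [r0]; simp [nsq]
    · have := nsq_layer hh W
      rw [r0, sub_zero, sub_zero] at this
      rw [this]
      refine mul_le_mul_of_nonneg_right ?_ (nsq_nonneg _)
      unfold uP
      rw [if_neg hh]
      have h1 := Real.add_one_le_exp (max 0 (Sr h 0 W - 1))
      linarith [le_max_right 0 (Sr h 0 W - 1)]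
  have key := seq_up L (fun ℓ => nsq (hseq A W x ℓ)) (fun ℓ => uP (hseq A W x ℓ) (W ℓ))
    (fun ℓ => uP_nonneg _ _) (Real.exp (uP x A)) (Real.exp_pos _).le (by
      have := step _ _ x A
      rw [hx, mul_one] at this
      exact this) (fun ℓ => by
        have := step _ _ (hseq A W x ℓ) (W ℓ)
        simp only [hseq_succ]; exact this)
  intro ℓ hℓ
  refine (key ℓ hℓ).trans ?_
  rw [← Real.exp_add]
  unfold utot at h
  exact (Real.exp_le_exp.mpr h.le).trans exp_neg_one_bounds.2

/-- Condition under which the contraction of a pair is charged. -/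
def cSep (δ : ℝ) (h h' : Fin m → ℝ) : Prop := nsq (h - h') < δ ^ 2 / 4 ∧ 1 / 12 ≤ nsq h

lemma measurableSet_cSep (δ : ℝ) :
    MeasurableSet {z : (Fin m → ℝ) × (Fin m → ℝ) | cSep δ z.1 z.2} := by
  have h : Measurable fun z : (Fin m → ℝ) × (Fin m → ℝ) => nsq (z.1 - z.2) := by fun_prop
  have h' : Measurable fun z : (Fin m → ℝ) × (Fin m → ℝ) => nsq z.1 := by fun_prop
  exact (measurableSet_lt h measurable_const).inter (measurableSet_le measurable_const h')

/-- Separation of inputs is preserved through the layers up to a constant factor. -/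
lemma separation (δ : ℝ) (hδ : 0 < δ) (x x' : Fin 𝔡 → ℝ) (hx : δ ^ 2 / 2 ≤ nsq (x - x'))
    (A : Fin m → Fin 𝔡 → ℝ) (W : Fin L → Fin m → Fin m → ℝ)
    (h : ytot (cSep δ) x x' A W < 1) (hlow : ∀ ℓ ≤ L, 1 / 12 ≤ nsq (hseq A W x ℓ)) :
    ∀ ℓ ≤ L, δ ^ 2 / 48 ≤ nsq (hseq A W x ℓ - hseq A W x' ℓ) := by
  obtain ⟨h1, h2, h3⟩ := ytot_terms _ x x' A W h
  have hδ2 : 0 < δ ^ 2 := by positivity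
  have hxx : x ≠ x' := by rintro rfl; simp [nsq] at hx; linarith
  have hs0 := yP_lt_one hxx h1
  -- truncation at `δ² / 16`: a contraction is only charged when the squared distance is below
  -- `δ² / 4`, and otherwise a factor of at least `1/4` keeps it above `δ² / 16`
  have key := seq_low L (fun ℓ => min (nsq (hseq A W x ℓ - hseq A W x' ℓ)) (δ ^ 2 / 16)) _
    (fun ℓ => yP_nonneg (cSep δ (hseq A W x ℓ) (hseq A W x' ℓ)) _ _ _) (δ ^ 2 / 16)
    (by positivity) (by
      have := nsq_layer hxx A
      simp only [hseq]; rw [this, le_min_iff]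
      refine ⟨?_, le_rfl⟩
      nlinarith) (fun ℓ hpos => by
      have hpos' : 0 < nsq (hseq A W x ℓ - hseq A W x' ℓ) := (lt_min_iff.mp hpos).1
      have hne : hseq A W x ℓ ≠ hseq A W x' ℓ := by
        intro h0; rw [h0] at hpos'; simp [nsq] at hpos'
      have h5 := nsq_layer hne (W ℓ)
      have hS := yP_lt_one hne (h3 ℓ)
      have hy := yP_nonneg (cSep δ (hseq A W x ℓ) (hseq A W x' ℓ)) (hseq A W x ℓ)
        (hseq A W x' ℓ) (W ℓ)
      have he1 : Real.exp (-yP (cSep δ (hseq A W x ℓ) (hseq A W x' ℓ)) (hseq A W x ℓ)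
        (hseq A W x' ℓ) (W ℓ)) ≤ 1 := Real.exp_le_one_iff.mpr (by linarith)
      have he0 := Real.exp_pos (-yP (cSep δ (hseq A W x ℓ) (hseq A W x' ℓ)) (hseq A W x ℓ)
        (hseq A W x' ℓ) (W ℓ))
      simp only [hseq_succ]
      rw [h5, le_min_iff]
      constructor
      · by_cases hD : nsq (hseq A W x ℓ - hseq A W x' ℓ) < δ ^ 2 / 4
        · have h4 := yP_exp (c := cSep δ (hseq A W x ℓ) (hseq A W x' ℓ))
            ⟨hD, hlow ℓ (by omega)⟩ hne (h3 ℓ)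
          exact mul_le_mul h4 (min_le_left _ _) hpos.le (by linarith)
        · have : min (nsq (hseq A W x ℓ - hseq A W x' ℓ)) (δ ^ 2 / 16) ≤ δ ^ 2 / 16 :=
            min_le_right _ _
          nlinarith
      · have : min (nsq (hseq A W x ℓ - hseq A W x' ℓ)) (δ ^ 2 / 16) ≤ δ ^ 2 / 16 :=
            min_le_right _ _
        nlinarith)
  intro ℓ hℓ
  refine le_trans ?_ ((key ℓ hℓ).trans (min_le_left _ _))
  have := Real.exp_le_exp.mpr (neg_le_neg h2.le)
  nlinarith [exp_neg_one_bounds.1]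

lemma pair_num (hL : 2 ≤ L) (τ : ℝ) (hτ : 0 ≤ τ) (hτL : τ * L ≤ 3 / 100)
    (hm : 200000 * (L : ℝ) ^ 2 ≤ m) :
    Real.exp (-((m : ℝ) / (8000 * L))) *
        (3 * Real.exp (2 * ((m : ℝ) / (8000 * L)) * τ + 384 * ((m : ℝ) / (8000 * L)) ^ 2 / m)) ^ (L + 1)
      ≤ Real.exp (-((m : ℝ) / (16000 * L))) := by
  have hLr : (2 : ℝ) ≤ L := by exact_mod_cast hL
  have hL0 : (0 : ℝ) < L := by linarith
  have hm0 : (0 : ℝ) < m := lt_of_lt_of_le (by positivity) hm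
  have h3 : (3 : ℝ) ≤ Real.exp (12 / 10) := by
    have h1 := Real.exp_one_gt_d9
    have h2 := Real.add_one_le_exp (2 / 10 : ℝ)
    rw [show (12 / 10 : ℝ) = 1 + 2 / 10 by norm_num, Real.exp_add]
    nlinarith [Real.exp_pos (2 / 10 : ℝ)]
  set μ := (m : ℝ) / (8000 * L) with hμ
  have hμ0 : 0 < μ := by positivity
  have hmμ : (m : ℝ) = 8000 * L * μ := by rw [hμ]; field_simp
  have e1 : (m : ℝ) / (16000 * L) = μ / 2 := by rw [hμ]; field_simp; norm_num
  have e2 : 384 * μ ^ 2 / m = 384 / 8000 * (μ / L) := by rw [hmμ]; field_simp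
  rw [e1, e2]
  have hμL : 25 * (L : ℝ) ≤ μ := by
    rw [hmμ] at hm
    have : 200000 * (L : ℝ) ^ 2 = 8000 * L * (25 * L) := by ring
    rw [this] at hm
    exact le_of_mul_le_mul_left hm (by positivity)
  calc _ ≤ Real.exp (-μ) * (Real.exp (12 / 10) * Real.exp (2 * μ * τ + 384 / 8000 * (μ / L))) ^ (L + 1) := by
        gcongr
    _ = Real.exp (-μ + (L + 1) * (12 / 10 + (2 * μ * τ + 384 / 8000 * (μ / L)))) := by
        rw [← Real.exp_add, ← Real.exp_nat_mul, ← Real.exp_add]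
        push_cast; ring_nf
    _ ≤ _ := by
        apply Real.exp_le_exp.mpr
        have hx : μ / L * L = μ := by field_simp
        have hx0 : 0 < μ / L := by positivity
        have b1 : ((L : ℝ) + 1) * τ ≤ 9 / 200 := by nlinarith
        have b2 : ((L : ℝ) + 1) * (μ / L) ≤ 3 / 2 * μ := by nlinarith
        nlinarith

lemma up_num (hL : 2 ≤ L) (hm : 200000 * (L : ℝ) ^ 2 ≤ m) :
    Real.exp (-((m : ℝ) / (8000 * L))) *
        (2 * Real.exp (8 * ((m : ℝ) / (8000 * L)) ^ 2 / m)) ^ (L + 1)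
      ≤ Real.exp (-((m : ℝ) / (16000 * L))) := by
  refine le_trans ?_ (pair_num hL 0 le_rfl (by norm_num) hm)
  gcongr
  · norm_num
  · have : (0:ℝ) ≤ ((m : ℝ) / (8000 * L)) ^ 2 / m := by positivity
    rw [mul_zero, zero_add, mul_div_assoc, mul_div_assoc]
    nlinarith

lemma mu_le (hL : 2 ≤ L) : (m : ℝ) / (8000 * L) ≤ m / 6144 := by
  have hLr : (2 : ℝ) ≤ L := by exact_mod_cast hL
  gcongr
  linarith

lemma low_event (hL : 2 ≤ L) (hm : 200000 * (L : ℝ) ^ 2 ≤ m) (x : Fin 𝔡 → ℝ) :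
    initMeasure 𝔡 m d L {z | 1 ≤ ytot (fun _ h' => h' = 0) x 0 z.1 z.2.1} ≤
      ENNReal.ofReal (Real.exp (-((m : ℝ) / (16000 * L)))) := by
  have hLr : (2 : ℝ) ≤ L := by exact_mod_cast hL
  have hm0 : 0 < m := by
    have : (0 : ℝ) < m := lt_of_lt_of_le (by positivity) hm
    exact_mod_cast this
  refine (pair_event hm0 (fun _ h' => h' = 0) (measurableSet_eq_fun measurable_snd measurable_const) x 0
    ((m : ℝ) / (8000 * L)) 0 (by positivity) le_rfl (mu_le hL) ?_).trans
    (ENNReal.ofReal_le_ofReal (pair_num hL 0 le_rfl (by norm_num) hm))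
  rintro h h' - rfl
  have := integral_Zr_zero (vr m) h
  rw [vr_coe] at this
  refine le_trans (le_of_eq ?_) this
  simp only [sub_zero]; ring

lemma growth_event (hL : 2 ≤ L) (hm : 200000 * (L : ℝ) ^ 2 ≤ m) (x : Fin 𝔡 → ℝ) :
    initMeasure 𝔡 m d L {z | 1 ≤ utot x z.1 z.2.1} ≤
      ENNReal.ofReal (Real.exp (-((m : ℝ) / (16000 * L)))) := by
  have hLr : (2 : ℝ) ≤ L := by exact_mod_cast hL
  have hm0 : 0 < m := by
    have : (0 : ℝ) < m := lt_of_lt_of_le (by positivity) hm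
    exact_mod_cast this
  refine (up_event hm0 x ((m : ℝ) / (8000 * L)) (by positivity) ?_).trans
    (ENNReal.ofReal_le_ofReal (up_num hL hm))
  exact (mu_le hL).trans (by gcongr; norm_num)

lemma sep_event (hL : 2 ≤ L) (hm : 200000 * (L : ℝ) ^ 2 ≤ m) (δ : ℝ) (hδ : 0 < δ)
    (hδL : δ * L ≤ 1 / 20000) (x x' : Fin 𝔡 → ℝ) :
    initMeasure 𝔡 m d L {z | 1 ≤ ytot (cSep δ) x x' z.1 z.2.1} ≤
      ENNReal.ofReal (Real.exp (-((m : ℝ) / (16000 * L)))) := by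
  have hLr : (2 : ℝ) ≤ L := by exact_mod_cast hL
  have hm0 : 0 < m := by
    have : (0 : ℝ) < m := lt_of_lt_of_le (by positivity) hm
    exact_mod_cast this
  have hδ1 : δ ≤ 1 / 20000 := by nlinarith
  refine (pair_event hm0 _ (measurableSet_cSep δ) x x'
    ((m : ℝ) / (8000 * L)) (340 * δ) (by positivity) (by positivity) (mu_le hL) ?_).trans
    (ENNReal.ofReal_le_ofReal (pair_num hL (340 * δ) (by positivity) (by nlinarith) hm))
  rintro h h' hne ⟨hc1, hc2⟩
  refine le_trans ?_ (integral_Zr_close hm0 h h' hne (by nlinarith))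
  have hh : 0 < nsq h := by linarith
  have : √(nsq (h - h')) / √(nsq h) ≤ 340 / 194 * δ := by
    rw [← Real.sqrt_div (nsq_nonneg _)]
    apply Real.sqrt_le_iff.mpr
    refine ⟨by positivity, ?_⟩
    rw [div_le_iff₀ hh]
    nlinarith [sq_nonneg δ]
  have hn := nsq_nonneg (h - h')
  refine mul_le_mul_of_nonneg_right (by linarith) (by positivity)

/-! ### Backward propagation -/

lemma signOf_sq {p : ℕ} (g : Fin p → ℝ) (k : Fin p) : signOf g k ^ 2 = signOf g k := by
  unfold signOf; split_ifs <;> norm_num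

lemma signOf_nonneg {p : ℕ} (g : Fin p → ℝ) (k : Fin p) : 0 ≤ signOf g k := by
  unfold signOf; split_ifs <;> norm_num

lemma signOf_relu {p : ℕ} (g : Fin p → ℝ) (k : Fin p) : signOf g k * relu g k = relu g k := by
  unfold signOf relu
  split_ifs with h
  · simp
  · simp [max_eq_right (not_le.mp h).le]

lemma signOf_mul_self {p : ℕ} (g : Fin p → ℝ) (k : Fin p) : g k * signOf g k = relu g k := by
  unfold signOf relu
  split_ifs with h
  · simp [max_eq_left h]
  · simp [max_eq_right (not_le.mp h).le]

@[fun_prop]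
lemma measurable_signOf {Ω : Type*} [MeasurableSpace Ω] {p : ℕ}
    {v : Ω → Fin p → ℝ} (hv : Measurable v) (k : Fin p) :
    Measurable fun z => signOf (v z) k := by
  unfold signOf
  exact Measurable.ite (measurableSet_le measurable_const (by fun_prop)) measurable_const
    measurable_const

@[fun_prop]
lemma measurable_tmul {Ω : Type*} [MeasurableSpace Ω] {p q : ℕ} {M : Ω → Fin p → Fin q → ℝ}
    {v : Ω → Fin p → ℝ} (hM : Measurable M) (hv : Measurable v) :
    Measurable fun z => tmul (M z) (v z) := by
  unfold tmul; fun_prop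

/-- Masked vector `D b` where `D` is the ReLU sign matrix of `g`. -/
def mask {p : ℕ} (g b : Fin p → ℝ) : Fin p → ℝ := fun k => signOf g k * b k

@[fun_prop]
lemma measurable_mask {Ω : Type*} [MeasurableSpace Ω] {p : ℕ}
    {v w : Ω → Fin p → ℝ} (hv : Measurable v) (hw : Measurable w) :
    Measurable fun z => mask (v z) (w z) := by
  unfold mask; fun_prop

lemma nsq_mask {p : ℕ} (g b : Fin p → ℝ) : nsq (mask g b) = ∑ k, signOf g k * b k ^ 2 := by
  simp only [nsq, mask, mul_pow, signOf_sq]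

lemma nsq_mask_le {p : ℕ} (g b : Fin p → ℝ) : nsq (mask g b) ≤ nsq b := by
  rw [nsq_mask]
  refine Finset.sum_le_sum fun k _ => ?_
  have : signOf g k ≤ 1 := by unfold signOf; split_ifs <;> norm_num
  nlinarith [sq_nonneg (b k)]

lemma dot_relu_mask {p : ℕ} (g b : Fin p → ℝ) : dot (relu g) (mask g b) = dot (relu g) b := by
  unfold dot mask
  refine Finset.sum_congr rfl fun k _ => ?_
  rw [← mul_assoc, mul_comm (relu g k), signOf_relu]

lemma dot_mask {p : ℕ} (g b : Fin p → ℝ) : dot g (mask g b) = dot (relu g) b := by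
  unfold dot mask
  refine Finset.sum_congr rfl fun k _ => ?_
  rw [← mul_assoc, signOf_mul_self]

lemma dot_tmul {p q : ℕ} (W : Fin p → Fin q → ℝ) (h : Fin q → ℝ) (b : Fin p → ℝ) :
    dot h (tmul W b) = dot (mulVec W h) b := by
  unfold dot tmul mulVec
  simp_rw [Finset.mul_sum, Finset.sum_mul]
  rw [Finset.sum_comm]
  exact Finset.sum_congr rfl fun _ _ => Finset.sum_congr rfl fun _ _ => by ring

/-- Relative growth of the backward vector in one layer, apart from its component along the
forward vector `relu g`. -/
def Rb {p q : ℕ} (g : Fin q → ℝ) (W : Fin p → Fin q → ℝ) (b : Fin p → ℝ) : ℝ :=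
  (nsq (mask g (tmul W b)) - dot (relu g) (tmul W b) ^ 2 / nsq (relu g)) / nsq b

lemma nsq_add_smul {q : ℕ} (a b : Fin q → ℝ) (c : ℝ) :
    nsq (a + c • b) = nsq a + 2 * c * dot a b + c ^ 2 * nsq b := by
  have : a + c • b = a - (-c) • b := by ext; simp
  rw [this, nsq_sub, dot_smul_right, nsq_smul]; ring

lemma dot_add_right {q : ℕ} (w a b : Fin q → ℝ) : dot w (a + b) = dot w a + dot w b := by
  simp [dot, mul_add, Finset.sum_add_distrib]

lemma mulVec_resampM {p q : ℕ} (h : Fin q → ℝ) (hh : h ≠ 0) (W W' : Fin p → Fin q → ℝ) :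
    mulVec (resampM ((√(nsq h))⁻¹ • h) W W') h = mulVec W h := by
  have hp := Real.sqrt_pos.mpr (nsq_pos hh)
  ext k
  change dot (resamp _ (W k) (W' k)) h = dot (W k) h
  rw [dot_resamp, dot_smul_right, dot_smul_right, dot_comm (_ • h) h, dot_smul_right, dot_self]
  have hs := Real.sq_sqrt (nsq_nonneg h)
  set r := √(nsq h)
  rw [← hs]
  field_simp
  ring

lemma nsq_unit {q : ℕ} (h : Fin q → ℝ) (hh : h ≠ 0) : nsq ((√(nsq h))⁻¹ • h) = 1 := by
  have hp := nsq_pos hh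
  rw [nsq_smul, inv_pow, Real.sq_sqrt hp.le]
  field_simp

/-- `Rb` ignores the component of the weights along the forward vector. -/
lemma Rb_resampM {p q : ℕ} (g : Fin q → ℝ) (hg : relu g ≠ 0) (W W' : Fin p → Fin q → ℝ)
    (b : Fin p → ℝ) :
    Rb g (resampM ((√(nsq (relu g)))⁻¹ • relu g) W W') b = Rb g W' b := by
  have hp := nsq_pos hg
  set e := (√(nsq (relu g)))⁻¹ • relu g with he
  obtain ⟨γ, hγ⟩ : ∃ γ : ℝ, tmul (resampM e W W') b = tmul W' b + γ • relu g := by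
    refine ⟨(√(nsq (relu g)))⁻¹ * ∑ k, (dot (W k) e - dot (W' k) e) * b k, ?_⟩
    ext j
    simp only [tmul, resampM, resamp, Pi.add_apply, Pi.smul_apply, smul_eq_mul, add_mul,
      Finset.sum_add_distrib, Finset.mul_sum, Finset.sum_mul]
    congr 1
    refine Finset.sum_congr rfl fun k _ => ?_
    rw [he]; simp only [Pi.smul_apply, smul_eq_mul]; ring
  have hm : mask g (tmul (resampM e W W') b) = mask g (tmul W' b) + γ • relu g := by
    rw [hγ]; ext k
    simp only [mask, Pi.add_apply, Pi.smul_apply, smul_eq_mul, mul_add]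
    rw [← mul_assoc, mul_comm _ γ, mul_assoc, signOf_relu]
  unfold Rb
  rw [hm, hγ, nsq_add_smul, dot_add_right, dot_smul_right, dot_self, dot_comm (mask _ _),
    dot_relu_mask]
  congr 1
  field_simp
  ring

lemma Rb_le {p q : ℕ} (g : Fin q → ℝ) (W : Fin p → Fin q → ℝ) (b : Fin p → ℝ) :
    Rb g W b ≤ nsq (mask g (tmul W b)) / nsq b := by
  unfold Rb
  have := nsq_nonneg b
  have h2 := nsq_nonneg (relu g)
  gcongr
  have : 0 ≤ dot (relu g) (tmul W b) ^ 2 / nsq (relu g) := by positivity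
  linarith

/-- Pythagoras: the new backward vector splits into its component along the forward vector and the
rest, measured by `Rb`. -/
lemma nsq_mask_tmul {p q : ℕ} (g : Fin q → ℝ) (W : Fin p → Fin q → ℝ) (b : Fin p → ℝ)
    (hb : b ≠ 0) :
    nsq (mask g (tmul W b)) = dot (relu g) (tmul W b) ^ 2 / nsq (relu g) + Rb g W b * nsq b := by
  have := nsq_pos hb
  unfold Rb; field_simp; ring

/-- Exponential moment of the masked energy of a Gaussian vector. -/
lemma mask_mgf (g : Fin m → ℝ) (σ : NNReal) (θ s : ℝ) (hθ : 0 ≤ θ) (hs : θ * σ = s)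
    (hs4 : s ≤ 1 / 4) :
    ∫⁻ t, ENNReal.ofReal (Real.exp (θ * nsq (mask g t))) ∂(gvec m σ) ≤
      ENNReal.ofReal (Real.exp ((s + 4 * s ^ 2) * ∑ k, signOf g k)) := by
  have e : ∀ t : Fin m → ℝ, ENNReal.ofReal (Real.exp (θ * nsq (mask g t))) =
      ∏ k, ENNReal.ofReal (Real.exp (θ * (signOf g k * t k ^ 2))) := by
    intro t
    rw [← ENNReal.ofReal_prod_of_nonneg fun _ _ => (Real.exp_pos _).le, ← Real.exp_sum,
      nsq_mask, Finset.mul_sum]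
  simp_rw [e]
  refine (lintegral_pi_prod_le m (gaussianReal 0 σ)
    (fun k t => ENNReal.ofReal (Real.exp (θ * (signOf g k * t ^ 2))))
    fun k => by fun_prop).trans ?_
  rw [Finset.mul_sum, Real.exp_sum, ENNReal.ofReal_prod_of_nonneg fun _ _ => (Real.exp_pos _).le]
  refine Finset.prod_le_prod' fun k _ => ?_
  by_cases hk : 0 ≤ g k
  · simp only [signOf, hk, if_true, one_mul, mul_one]
    refine (lintegral_exp_sq_gaussian σ θ hθ (by rw [hs]; exact hs4)).trans ?_
    apply ENNReal.ofReal_le_ofReal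
    rw [hs]
    linarith [Real.add_one_le_exp (s + 4 * s ^ 2)]
  · simp [signOf, hk]

/-- Per-layer slope of the exponential moment. -/
def lam (m : ℕ) (μ : ℝ) : ℝ := 2 * μ / m + 4 * (2 * μ / m) ^ 2

/-- Conditional bound on the exponential moment of one backward step, in terms of the number of
active neurons of `g`. -/
def psi (m : ℕ) (μ η : ℝ) (g : Fin m → ℝ) : ℝ :=
  1 + Real.exp (μ * (η - 1) + lam m μ * ∑ k, signOf g k)

lemma psi_ge_one (μ η : ℝ) (g : Fin m → ℝ) : 1 ≤ psi m μ η g := by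
  unfold psi; linarith [Real.exp_pos (μ * (η - 1) + lam m μ * ∑ k, signOf g k)]

/-- Exponent charged to one backward step. -/
def rP (η : ℝ) {p q : ℕ} (g : Fin q → ℝ) (W : Fin p → Fin q → ℝ) (b : Fin p → ℝ) : ℝ :=
  max 0 (η + Rb g W b - 1)

/-- Exponential moment of one backward step for a fixed pre-activation `g`. -/
lemma lintegral_rP_le (hm : 0 < m) (μ η : ℝ) (hμ : 0 ≤ μ) (hμm : μ ≤ m / 8)
    (g b : Fin m → ℝ) :
    ∫⁻ W, ENNReal.ofReal (Real.exp (μ * rP η g W b)) ∂(gaussMat m m (vr m)) ≤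
      ENNReal.ofReal (psi m μ η g) := by
  have hm' : (0 : ℝ) < m := by exact_mod_cast hm
  have hsum : 0 ≤ ∑ k, signOf g k := Finset.sum_nonneg fun k _ => signOf_nonneg g k
  have hlam : 0 ≤ lam m μ := by unfold lam; positivity
  have key : ∫⁻ W, ENNReal.ofReal (Real.exp (μ * Rb g W b)) ∂(gaussMat m m (vr m)) ≤
      ENNReal.ofReal (Real.exp (lam m μ * ∑ k, signOf g k)) := by
    by_cases hb : b = 0
    · subst hb
      have : ∀ W : Fin m → Fin m → ℝ, Rb g W 0 = 0 := fun W => by simp [Rb, nsq]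
      simp only [this, mul_zero, Real.exp_zero, ENNReal.ofReal_one, lintegral_one, measure_univ]
      rw [← ENNReal.ofReal_one]
      exact ENNReal.ofReal_le_ofReal (Real.one_le_exp (by positivity))
    · have hb0 := nsq_pos hb
      have h1 := mask_mgf g ⟨vr m * nsq b, mul_nonneg (vr m).2 hb0.le⟩ (μ / nsq b) (2 * μ / m)
        (by positivity) (by
          change μ / nsq b * (vr m * nsq b) = _
          rw [vr_coe]; field_simp) (by rw [div_le_div_iff₀ hm' (by norm_num)]; linarith)
      rw [← gaussMat_map_tmul m m (vr m) ⟨vr m * nsq b, mul_nonneg (vr m).2 hb0.le⟩ b rfl,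
        lintegral_map (by fun_prop) (by fun_prop)] at h1
      refine le_trans (lintegral_mono fun W => ?_) h1
      apply ENNReal.ofReal_le_ofReal
      apply Real.exp_le_exp.mpr
      refine (mul_le_mul_of_nonneg_left (Rb_le g W b) hμ).trans (le_of_eq ?_)
      ring
  calc _ ≤ ∫⁻ W, (1 + ENNReal.ofReal (Real.exp (μ * (η - 1))) *
          ENNReal.ofReal (Real.exp (μ * Rb g W b))) ∂(gaussMat m m (vr m)) := by
        refine lintegral_mono fun W => ?_
        rw [← ENNReal.ofReal_mul (Real.exp_pos _).le, ← Real.exp_add]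
        unfold rP
        rcases le_total 0 (η + Rb g W b - 1) with h | h
        · rw [max_eq_right h]
          refine le_add_left (le_of_eq ?_)
          congr 2; ring
        · rw [max_eq_left h]; simp
    _ ≤ _ := by
        rw [lintegral_add_left measurable_const,
          lintegral_const_mul' _ _ ENNReal.ofReal_ne_top]
        simp only [lintegral_one, measure_univ]
        refine (add_le_add_right (mul_le_mul_right key _) 1).trans (le_of_eq ?_)
        rw [← ENNReal.ofReal_mul (Real.exp_pos _).le, ← Real.exp_add, ← ENNReal.ofReal_one,
          ← ENNReal.ofReal_add zero_le_one (Real.exp_pos _).le]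
        rfl

/-- Bound for the average of `psi` over Gaussian weights. -/
def Mb (m : ℕ) (μ η : ℝ) : ℝ := 1 + Real.exp (μ * η + 9 * μ ^ 2 / m)

/-- Average over the pre-activations: about half of the neurons are active, which compensates the
variance `2 / m` of the weights. -/
lemma lintegral_psi_le (hm : 0 < m) (μ η : ℝ) (hμ : 0 ≤ μ) (hμm : μ ≤ m / 800)
    {q : ℕ} (h : Fin q → ℝ) (hh : h ≠ 0) :
    ∫⁻ W, ENNReal.ofReal (psi m μ η (mulVec W h)) ∂(gaussMat m q (vr m)) ≤
      ENNReal.ofReal (Mb m μ η) := by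
  have hm' : (0 : ℝ) < m := by exact_mod_cast hm
  have hlam : 0 ≤ lam m μ := by unfold lam; positivity
  set σ : NNReal := ⟨vr m * nsq h, mul_nonneg (vr m).2 (nsq_nonneg h)⟩ with hσ
  have hσ0 : σ ≠ 0 := by
    intro h0
    have h1 : (σ : ℝ) = 0 := by rw [h0]; rfl
    have h2 : (0 : ℝ) < (vr m : ℝ) * nsq h := by
      rw [vr_coe]; have := nsq_pos hh; positivity
    change (vr m : ℝ) * nsq h = 0 at h1
    linarith
  have hpm : Measurable fun g : Fin m → ℝ => ENNReal.ofReal (psi m μ η g) := by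
    unfold psi; fun_prop
  have hl := gaussMat_map_mulVec m q (vr m) σ h rfl
  rw [← lintegral_map (f := fun g : Fin m → ℝ => ENNReal.ofReal (psi m μ η g)) hpm
    (by fun_prop), hl]
  have coord : ∫⁻ t, ENNReal.ofReal (Real.exp (lam m μ * (if 0 ≤ t then 1 else 0)))
      ∂(gaussianReal 0 σ) ≤ ENNReal.ofReal (Real.exp (lam m μ / 2 + lam m μ ^ 2 / 8)) := by
    have hms : MeasurableSet {t : ℝ | 0 ≤ t} := measurableSet_le measurable_const measurable_id
    have hE : 1 ≤ Real.exp (lam m μ) := Real.one_le_exp hlam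
    calc _ = ∫⁻ t, (1 + ENNReal.ofReal (Real.exp (lam m μ) - 1) *
            ({t : ℝ | 0 ≤ t}.indicator 1 t)) ∂(gaussianReal 0 σ) := by
          refine lintegral_congr fun t => ?_
          by_cases ht : 0 ≤ t
          · simp only [ht, if_true, mul_one, Set.indicator, Set.mem_ofPred_eq, Pi.one_apply]
            rw [← ENNReal.ofReal_one, ← ENNReal.ofReal_add zero_le_one (by linarith)]
            congr 1; ring
          · simp [ht, Set.indicator]
      _ ≤ 1 + ENNReal.ofReal (Real.exp (lam m μ) - 1) * ENNReal.ofReal (1 / 2) := by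
          rw [lintegral_add_left measurable_const,
            lintegral_const_mul' _ _ ENNReal.ofReal_ne_top, lintegral_indicator_one hms]
          simp only [lintegral_one, measure_univ]
          gcongr
          exact gaussian_nonneg_le_half σ hσ0
      _ ≤ _ := by
          rw [← ENNReal.ofReal_mul (by linarith), ← ENNReal.ofReal_one,
            ← ENNReal.ofReal_add zero_le_one (by linarith)]
          apply ENNReal.ofReal_le_ofReal
          have hc := Real.cosh_le_exp_half_sq (lam m μ / 2)
          rw [Real.cosh_eq] at hc
          have e1 : 1 + (Real.exp (lam m μ) - 1) * (1 / 2) = Real.exp (lam m μ / 2) *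
              ((Real.exp (lam m μ / 2) + Real.exp (-(lam m μ / 2))) / 2) := by
            have h1 : Real.exp (lam m μ / 2) * Real.exp (lam m μ / 2) = Real.exp (lam m μ) := by
              rw [← Real.exp_add]; congr 1; ring
            have h2 : Real.exp (lam m μ / 2) * Real.exp (-(lam m μ / 2)) = 1 := by
              rw [← Real.exp_add]; simp
            linear_combination -(1 / 2) * h1 - (1 / 2) * h2
          rw [e1, Real.exp_add]
          refine (mul_le_mul_of_nonneg_left hc (Real.exp_pos _).le).trans (le_of_eq ?_)
          congr 2; ring
  have key : ∫⁻ g, ENNReal.ofReal (Real.exp (lam m μ * ∑ k, signOf g k)) ∂(gvec m σ) ≤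
      ENNReal.ofReal (Real.exp (m * (lam m μ / 2 + lam m μ ^ 2 / 8))) := by
    have e : ∀ g : Fin m → ℝ, ENNReal.ofReal (Real.exp (lam m μ * ∑ k, signOf g k)) =
        ∏ k, ENNReal.ofReal (Real.exp (lam m μ * (if 0 ≤ g k then 1 else 0))) := by
      intro g
      rw [← ENNReal.ofReal_prod_of_nonneg fun _ _ => (Real.exp_pos _).le, ← Real.exp_sum,
        Finset.mul_sum]
      rfl
    simp_rw [e]
    have hmm : Measurable fun t : ℝ =>
        ENNReal.ofReal (Real.exp (lam m μ * (if 0 ≤ t then 1 else 0))) := by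
      have : Measurable fun t : ℝ => if 0 ≤ t then (1 : ℝ) else 0 :=
        Measurable.ite (measurableSet_le measurable_const measurable_id) measurable_const
          measurable_const
      fun_prop
    refine (lintegral_pi_prod_le m (gaussianReal 0 σ) (fun _ t =>
      ENNReal.ofReal (Real.exp (lam m μ * (if 0 ≤ t then 1 else 0)))) fun _ => hmm).trans ?_
    refine (Finset.prod_le_prod' fun k _ => coord).trans (le_of_eq ?_)
    rw [Finset.prod_const, Finset.card_univ, Fintype.card_fin,
      ← ENNReal.ofReal_pow (Real.exp_pos _).le, ← Real.exp_nat_mul]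
  calc _ = ∫⁻ g, (1 + ENNReal.ofReal (Real.exp (μ * (η - 1))) *
        ENNReal.ofReal (Real.exp (lam m μ * ∑ k, signOf g k))) ∂(gvec m σ) := by
        refine lintegral_congr fun g => ?_
        rw [← ENNReal.ofReal_mul (Real.exp_pos _).le, ← Real.exp_add, ← ENNReal.ofReal_one,
          ← ENNReal.ofReal_add zero_le_one (Real.exp_pos _).le]
        rfl
    _ ≤ 1 + ENNReal.ofReal (Real.exp (μ * (η - 1))) *
        ENNReal.ofReal (Real.exp (m * (lam m μ / 2 + lam m μ ^ 2 / 8))) := by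
        rw [lintegral_add_left measurable_const,
          lintegral_const_mul' _ _ ENNReal.ofReal_ne_top]
        simp only [lintegral_one, measure_univ]
        gcongr
    _ ≤ _ := by
        rw [← ENNReal.ofReal_mul (Real.exp_pos _).le, ← Real.exp_add, ← ENNReal.ofReal_one,
          ← ENNReal.ofReal_add zero_le_one (Real.exp_pos _).le]
        apply ENNReal.ofReal_le_ofReal
        unfold Mb
        refine add_le_add_right (Real.exp_le_exp.mpr ?_) 1
        set r := μ / m with hr
        have hr0 : 0 ≤ r := by positivity
        have hr1 : r ≤ 1 / 800 := by rw [hr, div_le_div_iff₀ hm' (by norm_num)]; linarith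
        have hμr : μ = m * r := by rw [hr]; field_simp
        have e1 : lam m μ = 2 * r + 16 * r ^ 2 := by unfold lam; rw [hr]; ring
        have e2 : 9 * μ ^ 2 / m = m * (9 * r ^ 2) := by rw [hμr]; field_simp
        rw [e1, e2]
        have : (2 * r + 16 * r ^ 2) / 2 + (2 * r + 16 * r ^ 2) ^ 2 / 8 ≤ r + 9 * r ^ 2 := by
          nlinarith [mul_nonneg hr0 hr0, mul_nonneg (mul_nonneg hr0 hr0) hr0,
            mul_nonneg (mul_nonneg hr0 hr0) (sub_nonneg.mpr hr1),
            mul_nonneg (mul_nonneg (mul_nonneg hr0 hr0) hr0) (sub_nonneg.mpr hr1)]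
        have h3 := mul_le_mul_of_nonneg_left this hm'.le
        nlinarith

lemma lintegral_prod_swap_le {α β : Type*} [MeasurableSpace α] [MeasurableSpace β]
    (μ : Measure α) (ν : Measure β) [IsProbabilityMeasure μ] [IsProbabilityMeasure ν]
    (F : α × β → ENNReal) :
    ∫⁻ z, F z ∂(μ.prod ν) ≤ ∫⁻ b, ∫⁻ a, F (a, b) ∂μ ∂ν := by
  rw [← Measure.prod_swap]
  exact (lintegral_map_le _ _).trans (lintegral_prod_le _)

/-- Split off the first weight matrix and resample it orthogonally to `e`; the resampled part is
integrated first. -/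
lemma lintegral_pi_succ_resamp_le (p : ℕ) (v : NNReal) (e : Fin m → ℝ) (he : nsq e = 1)
    (F : (Fin (p + 1) → Fin m → Fin m → ℝ) → ENNReal) :
    ∫⁻ W, F W ∂(Measure.pi fun _ : Fin (p + 1) => gaussMat m m v) ≤
      ∫⁻ W, ∫⁻ V, ∫⁻ W', F (Fin.cons (resampM e W W') V) ∂(gaussMat m m v)
        ∂(Measure.pi fun _ : Fin p => gaussMat m m v) ∂(gaussMat m m v) := by
  set γ := gaussMat m m v with hγ
  set π := Measure.pi fun _ : Fin p => γ with hπ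
  have hmp := (measurePreserving_piFinSuccAbove (fun _ : Fin (p + 1) => γ) 0).symm
  rw [← hmp.map_eq, lintegral_map_equiv]
  have hr : Measurable fun z : (Fin m → Fin m → ℝ) × (Fin m → Fin m → ℝ) =>
      resampM e z.1 z.2 := by unfold resampM resamp dot; fun_prop
  have h1 : γ.prod π = ((γ.prod γ).prod π).map
      (Prod.map (fun z : (Fin m → Fin m → ℝ) × (Fin m → Fin m → ℝ) => resampM e z.1 z.2) id) := by
    rw [← Measure.map_prod_map _ _ hr measurable_id, gaussMat_resamp m m v e he, Measure.map_id]
  have h2 : (γ.prod γ).prod π = (γ.prod (γ.prod π)).map MeasurableEquiv.prodAssoc.symm := by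
    rw [← (measurePreserving_prodAssoc γ γ π).symm.map_eq]
  change ∫⁻ a, _ ∂(γ.prod π) ≤ _
  rw [h1]
  refine (lintegral_map_le _ _).trans ?_
  rw [h2, lintegral_map_equiv]
  refine (lintegral_prod_le _).trans (lintegral_mono fun W => ?_)
  refine (lintegral_prod_swap_le _ _ _).trans (le_of_eq ?_)
  refine lintegral_congr fun V => lintegral_congr fun W' => ?_
  congr 1
  ext i : 1
  refine Fin.cases ?_ (fun j => ?_) i <;>
    simp [MeasurableEquiv.piFinSuccAbove, MeasurableEquiv.prodAssoc]

/-- The backward vector at the first of `p + 1` consecutive layers, given the pre-activation `g`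
there, the weights `W` of the remaining layers, and the vector `u` fed in at the output. -/
def bk (u : Fin m → ℝ) : (p : ℕ) → (Fin m → ℝ) → (Fin p → Fin m → Fin m → ℝ) → Fin m → ℝ
  | 0, g, _ => mask g u
  | p + 1, g, W => mask g (tmul (W 0) (bk u p (mulVec (W 0) (relu g)) (Fin.tail W)))

open Classical in
/-- Total exponent of the backward pass. -/
def rt (η : ℝ) (u : Fin m → ℝ) : (p : ℕ) → (Fin m → ℝ) → (Fin p → Fin m → Fin m → ℝ) → ℝ
  | 0, _, _ => 0
  | p + 1, g, W => if relu g = 0 then 0 else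
      rP η g (W 0) (bk u p (mulVec (W 0) (relu g)) (Fin.tail W)) +
        rt η u p (mulVec (W 0) (relu g)) (Fin.tail W)

@[fun_prop]
lemma measurable_tail {Ω : Type*} [MeasurableSpace Ω] {p : ℕ} {M : Type*} [MeasurableSpace M]
    {W : Ω → Fin (p + 1) → M} (hW : Measurable W) : Measurable fun z => Fin.tail (W z) := by
  unfold Fin.tail; fun_prop

@[fun_prop]
lemma measurable_bk {Ω : Type*} [MeasurableSpace Ω] {p : ℕ} {u g : Ω → Fin m → ℝ}
    {W : Ω → Fin p → Fin m → Fin m → ℝ} (hu : Measurable u) (hg : Measurable g)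
    (hW : Measurable W) : Measurable fun z => bk (u z) p (g z) (W z) := by
  induction p generalizing g with
  | zero => simp only [bk]; fun_prop
  | succ p ih =>
    simp only [bk]
    have := ih (g := fun z => mulVec (W z 0) (relu (g z))) (W := fun z => Fin.tail (W z))
      (by fun_prop) (by fun_prop)
    fun_prop

@[fun_prop]
lemma measurable_rt {Ω : Type*} [MeasurableSpace Ω] {p : ℕ} (η : ℝ) {u g : Ω → Fin m → ℝ}
    {W : Ω → Fin p → Fin m → Fin m → ℝ} (hu : Measurable u) (hg : Measurable g)
    (hW : Measurable W) : Measurable fun z => rt η (u z) p (g z) (W z) := by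
  induction p generalizing g with
  | zero => simp only [rt]; fun_prop
  | succ p ih =>
    simp only [rt]
    have := ih (g := fun z => mulVec (W z 0) (relu (g z))) (W := fun z => Fin.tail (W z))
      (by fun_prop) (by fun_prop)
    refine Measurable.ite (measurableSet_eq_fun (by fun_prop) measurable_const)
      measurable_const ?_
    unfold rP Rb
    fun_prop

lemma rP_nonneg (η : ℝ) {p q : ℕ} (g : Fin q → ℝ) (W : Fin p → Fin q → ℝ) (b : Fin p → ℝ) :
    0 ≤ rP η g W b := le_max_left _ _

/-- Exponential moment of the whole backward pass. The weights of a layer split into the part along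
the forward vector, which alone determines the next pre-activation, and the orthogonal part, which
alone drives the backward growth in that layer; integrating the latter first decouples the two
passes. -/
lemma lintegral_rt_le (hm : 0 < m) (μ η : ℝ) (hμ : 0 ≤ μ) (hμm : μ ≤ m / 800)
    (u : Fin m → ℝ) (p : ℕ) (g : Fin m → ℝ) :
    ∫⁻ W, ENNReal.ofReal (Real.exp (μ * rt η u p g W))
      ∂(Measure.pi fun _ : Fin p => gaussMat m m (vr m)) ≤
      ENNReal.ofReal (psi m μ η g) * ENNReal.ofReal (Mb m μ η) ^ p := by
  have hM : 1 ≤ ENNReal.ofReal (Mb m μ η) := by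
    rw [← ENNReal.ofReal_one]; apply ENNReal.ofReal_le_ofReal
    unfold Mb; linarith [Real.exp_pos (μ * η + 9 * μ ^ 2 / m)]
  have hpsi : ∀ g : Fin m → ℝ, 1 ≤ ENNReal.ofReal (psi m μ η g) := fun g => by
    rw [← ENNReal.ofReal_one]; exact ENNReal.ofReal_le_ofReal (psi_ge_one μ η g)
  have hm' : (0 : ℝ) < m := by exact_mod_cast hm
  induction p generalizing g with
  | zero => simpa [rt] using hpsi g
  | succ p ih =>
    by_cases hg : relu g = 0
    · simp only [rt, hg, if_true, mul_zero, Real.exp_zero, ENNReal.ofReal_one, lintegral_one,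
        measure_univ]
      calc (1 : ENNReal) = 1 * 1 ^ (p + 1) := by simp
        _ ≤ _ := by gcongr; exact hpsi g
    · refine (lintegral_pi_succ_resamp_le p (vr m) ((√(nsq (relu g)))⁻¹ • relu g)
        (nsq_unit _ hg) _).trans ?_
      calc _ ≤ ∫⁻ W, ∫⁻ V, ENNReal.ofReal (psi m μ η g) *
              ENNReal.ofReal (Real.exp (μ * rt η u p (mulVec W (relu g)) V))
              ∂(Measure.pi fun _ : Fin p => gaussMat m m (vr m)) ∂(gaussMat m m (vr m)) := by
            refine lintegral_mono fun W => lintegral_mono fun V => ?_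
            have e : ∀ W' : Fin m → Fin m → ℝ,
                ENNReal.ofReal (Real.exp (μ * rt η u (p + 1) g
                  (Fin.cons (resampM ((√(nsq (relu g)))⁻¹ • relu g) W W') V))) =
                ENNReal.ofReal (Real.exp (μ * rP η g W' (bk u p (mulVec W (relu g)) V))) *
                ENNReal.ofReal (Real.exp (μ * rt η u p (mulVec W (relu g)) V)) := by
              intro W'
              rw [← ENNReal.ofReal_mul (Real.exp_pos _).le, ← Real.exp_add]
              simp only [rt, hg, if_false, Fin.cons_zero, Fin.tail_cons, mulVec_resampM _ hg, rP,
                Rb_resampM g hg, mul_add]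
            simp_rw [e]
            rw [lintegral_mul_const' _ _ ENNReal.ofReal_ne_top]
            gcongr
            exact lintegral_rP_le hm μ η hμ (by linarith) g _
        _ ≤ ∫⁻ W, ENNReal.ofReal (psi m μ η g) * (ENNReal.ofReal (psi m μ η (mulVec W (relu g))) *
              ENNReal.ofReal (Mb m μ η) ^ p) ∂(gaussMat m m (vr m)) := by
            refine lintegral_mono fun W => ?_
            simp only
            rw [lintegral_const_mul' _ _ ENNReal.ofReal_ne_top]
            gcongr
            exact ih _
        _ ≤ _ := by
            rw [lintegral_const_mul' _ _ ENNReal.ofReal_ne_top,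
              lintegral_mul_const' _ _ (ENNReal.pow_ne_top ENNReal.ofReal_ne_top)]
            gcongr
            rw [pow_succ, mul_comm]
            gcongr
            exact lintegral_psi_le hm μ η hμ hμm _ hg

/-- Deterministic control of the backward vectors by the total exponent. -/
lemma backward_det (η N s : ℝ) (hN : 0 ≤ N) (u : Fin m → ℝ) (hs : 12 * s ^ 2 ≤ η * N)
    (hu : nsq u ≤ N) (p : ℕ) (gs bs : ℕ → Fin m → ℝ) (W : Fin p → Fin m → Fin m → ℝ)
    (hgs : ∀ ℓ : Fin p, gs (ℓ + 1) = mulVec (W ℓ) (relu (gs ℓ)))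
    (hbp : bs p = mask (gs p) u)
    (hbs : ∀ ℓ : Fin p, bs ℓ = mask (gs ℓ) (tmul (W ℓ) (bs (ℓ + 1))))
    (hlow : ∀ ℓ ≤ p, 1 / 12 ≤ nsq (relu (gs ℓ))) (hsp : dot (relu (gs p)) u = s) :
    bs 0 = bk u p (gs 0) W ∧ dot (relu (gs 0)) (bs 0) = s ∧ 0 ≤ rt η u p (gs 0) W ∧
      ∀ ℓ ≤ p, nsq (bs ℓ) ≤ N * Real.exp (rt η u p (gs 0) W) := by
  induction p generalizing gs bs with
  | zero =>
    refine ⟨by simpa [bk] using hbp, by rw [hbp, dot_relu_mask]; exact hsp, by simp [rt], ?_⟩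
    intro ℓ hℓ
    obtain rfl : ℓ = 0 := by omega
    simp only [rt, Real.exp_zero, mul_one]
    rw [hbp]
    exact (nsq_mask_le _ _).trans hu
  | succ p ih =>
    obtain ⟨i1, i2, i3, i4⟩ := ih (fun k => gs (k + 1)) (fun k => bs (k + 1)) (Fin.tail W)
      (fun ℓ => by have := hgs ℓ.succ; simpa [Fin.tail] using this) hbp
      (fun ℓ => by have := hbs ℓ.succ; simpa [Fin.tail] using this)
      (fun ℓ hℓ => hlow (ℓ + 1) (by omega)) hsp
    have g1 := hgs 0
    have b0 := hbs 0
    simp only [Fin.val_zero, zero_add] at g1 b0 i1 i2 i3 i4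
    have hl0 := hlow 0 (by omega)
    have hg0 : relu (gs 0) ≠ 0 := by intro h; rw [h] at hl0; norm_num [nsq] at hl0
    -- pairing with the forward vector is conserved from layer to layer
    obtain ⟨t, ht⟩ : ∃ t, bs 1 = mask (gs 1) t := by
      rcases Nat.eq_zero_or_pos p with h0 | h0
      · subst h0; exact ⟨u, hbp⟩
      · exact ⟨_, by have := hbs ⟨1, by omega⟩; simpa using this⟩
    have hcons : dot (relu (gs 0)) (tmul (W 0) (bs 1)) = s := by
      rw [dot_tmul, ← g1]
      rw [ht, dot_relu_mask] at i2
      rw [ht, dot_mask, i2]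
    have hrt : rt η u (p + 1) (gs 0) W =
        rP η (gs 0) (W 0) (bs 1) + rt η u p (gs 1) (Fin.tail W) := by
      simp only [rt, hg0, if_false]
      rw [← g1, ← i1]
    have hr0 := rP_nonneg η (gs 0) (W 0) (bs 1)
    refine ⟨?_, by rw [b0, dot_relu_mask, hcons], by rw [hrt]; linarith, ?_⟩
    · rw [b0, bk, ← g1, ← i1]
    · intro ℓ hℓ
      rcases Nat.eq_zero_or_pos ℓ with h0 | h0
      · subst h0
        rw [hrt, add_comm, Real.exp_add, b0]
        set E := Real.exp (rt η u p (gs 1) (Fin.tail W)) with hE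
        have hE1 : 1 ≤ E := Real.one_le_exp i3
        by_cases hb : bs 1 = 0
        · have : nsq (mask (gs 0) (tmul (W 0) (bs 1))) = 0 := by
            rw [hb]; simp [nsq, mask, tmul]
          rw [this]; positivity
        · rw [nsq_mask_tmul _ _ _ hb, hcons]
          have h1 : s ^ 2 / nsq (relu (gs 0)) ≤ η * N := by
            rw [div_le_iff₀ (by linarith)]
            nlinarith [sq_nonneg s]
          have h2 := i4 0 (by omega)
          simp only [zero_add] at h2
          have h3 := Real.add_one_le_exp (rP η (gs 0) (W 0) (bs 1))
          have h4 : η + Rb (gs 0) (W 0) (bs 1) - 1 ≤ rP η (gs 0) (W 0) (bs 1) := le_max_right _ _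
          have hR : 0 ≤ Rb (gs 0) (W 0) (bs 1) := by
            have h5 := nsq_mask_tmul (gs 0) (W 0) (bs 1) hb
            unfold Rb
            refine div_nonneg ?_ (nsq_nonneg _)
            rw [sub_nonneg, div_le_iff₀ (by linarith)]
            have := dot_sq_le (relu (gs 0)) (mask (gs 0) (tmul (W 0) (bs 1)))
            rw [dot_relu_mask] at this
            linarith
          have hη : 0 ≤ η * N := by nlinarith [sq_nonneg s]
          calc _ ≤ η * N * E + Rb (gs 0) (W 0) (bs 1) * (N * E) := by
                gcongr
                nlinarith
            _ = N * E * (η + Rb (gs 0) (W 0) (bs 1)) := by ring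
            _ ≤ N * E * Real.exp (rP η (gs 0) (W 0) (bs 1)) := by
                gcongr; linarith
            _ = _ := by ring
      · obtain ⟨k, rfl⟩ : ∃ k, ℓ = k + 1 := ⟨ℓ - 1, by omega⟩
        refine (i4 k (by omega)).trans ?_
        rw [hrt]
        gcongr
        linarith

lemma back_num (hL : 2 ≤ L) (hm : 200000 * (L : ℝ) ^ 2 ≤ m) :
    Real.exp (-((m : ℝ) / (8000 * L))) *
        Mb m ((m : ℝ) / (8000 * L)) (1 / (4 * L)) ^ (L + 1)
      ≤ Real.exp (-((m : ℝ) / (16000 * L))) := by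
  have hLr : (2 : ℝ) ≤ L := by exact_mod_cast hL
  have hL0 : (0 : ℝ) < L := by linarith
  have hm0 : (0 : ℝ) < m := lt_of_lt_of_le (by positivity) hm
  have h2 : (2 : ℝ) ≤ Real.exp 1 := by linarith [Real.exp_one_gt_d9]
  set μ := (m : ℝ) / (8000 * L) with hμ
  have hμ0 : 0 < μ := by positivity
  have hmμ : (m : ℝ) = 8000 * L * μ := by rw [hμ]; field_simp
  have e1 : (m : ℝ) / (16000 * L) = μ / 2 := by rw [hμ]; field_simp; norm_num
  have hμL : 25 * (L : ℝ) ≤ μ := by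
    rw [hmμ] at hm
    have : 200000 * (L : ℝ) ^ 2 = 8000 * L * (25 * L) := by ring
    rw [this] at hm
    exact le_of_mul_le_mul_left hm (by positivity)
  have hM : Mb m μ (1 / (4 * L)) ≤ Real.exp (1 + 26 / 100 * (μ / L)) := by
    have e2 : μ * (1 / (4 * L)) + 9 * μ ^ 2 / m = (1 / 4 + 9 / 8000) * (μ / L) := by
      rw [hmμ]; field_simp
    unfold Mb
    rw [e2, Real.exp_add]
    have hx : 0 < μ / L := by positivity
    have h3 : Real.exp ((1 / 4 + 9 / 8000) * (μ / L)) ≤ Real.exp (26 / 100 * (μ / L)) :=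
      Real.exp_le_exp.mpr (by nlinarith)
    have h4 : 1 ≤ Real.exp (26 / 100 * (μ / L)) := Real.one_le_exp (by positivity)
    nlinarith
  have hM0 : 0 ≤ Mb m μ (1 / (4 * L)) := by unfold Mb; positivity
  rw [e1]
  calc _ ≤ Real.exp (-μ) * Real.exp (1 + 26 / 100 * (μ / L)) ^ (L + 1) := by
        gcongr
    _ = Real.exp (-μ + (L + 1) * (1 + 26 / 100 * (μ / L))) := by
        rw [← Real.exp_nat_mul, ← Real.exp_add]
        push_cast; ring_nf
    _ ≤ _ := by
        apply Real.exp_le_exp.mpr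
        have hx : μ / L * L = μ := by field_simp
        have hx0 : 0 < μ / L := by positivity
        have b2 : ((L : ℝ) + 1) * (μ / L) ≤ 3 / 2 * μ := by nlinarith
        nlinarith

/-- The backward exponent is rarely large. -/
lemma back_event (hL : 2 ≤ L) (hm : 200000 * (L : ℝ) ^ 2 ≤ m) (x : Fin 𝔡 → ℝ) (hx : nsq x = 1)
    (v : Fin d → ℝ) :
    initMeasure 𝔡 m d L {z | 1 ≤ rt (1 / (4 * L)) (tmul z.2.2 v) L (mulVec z.1 x) z.2.1} ≤
      ENNReal.ofReal (Real.exp (-((m : ℝ) / (16000 * L)))) := by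
  have hLr : (2 : ℝ) ≤ L := by exact_mod_cast hL
  have hm' : (0 : ℝ) < m := lt_of_lt_of_le (by positivity) hm
  have hm0 : 0 < m := by exact_mod_cast hm'
  have hx0 : x ≠ 0 := by rintro rfl; simp [nsq] at hx
  set μ := (m : ℝ) / (8000 * L) with hμ
  have hμ0 : 0 ≤ μ := by positivity
  have hμm : μ ≤ m / 800 := by rw [hμ]; gcongr; linarith
  set η : ℝ := 1 / (4 * L) with hη
  have hint : ∫⁻ z, ENNReal.ofReal (Real.exp (μ * rt η (tmul z.2.2 v) L (mulVec z.1 x) z.2.1))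
      ∂(initMeasure 𝔡 m d L) ≤ ENNReal.ofReal (Mb m μ η ^ (L + 1)) := by
    unfold initMeasure
    refine (lintegral_prod_le _).trans ?_
    calc _ ≤ ∫⁻ A, ENNReal.ofReal (psi m μ η (mulVec A x)) * ENNReal.ofReal (Mb m μ η) ^ L
            ∂(gaussMat m 𝔡 (vr m)) := by
          refine lintegral_mono fun A => ?_
          refine (lintegral_prod_swap_le _ _ _).trans ?_
          refine (lintegral_mono fun B => lintegral_rt_le hm0 μ η hμ0 hμm (tmul B v) L
            (mulVec A x)).trans ?_
          simp
      _ ≤ _ := by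
          rw [lintegral_mul_const' _ _ (ENNReal.pow_ne_top ENNReal.ofReal_ne_top),
            ENNReal.ofReal_pow (by unfold Mb; positivity), pow_succ, mul_comm]
          gcongr
          exact lintegral_psi_le hm0 μ η hμ0 hμm x hx0
  have := exp_markov _ (fun z : Om 𝔡 m d L => μ * rt η (tmul z.2.2 v) L (mulVec z.1 x) z.2.1)
    (by fun_prop) _ μ hint
  refine le_trans (measure_mono ?_) (this.trans (ENNReal.ofReal_le_ofReal (back_num hL hm)))
  intro z hz
  simp only [Set.mem_ofPred_eq] at hz ⊢
  nlinarith

/-! ### The output layer -/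

/-- Variance of the entries of `Bᵀ v`. -/
def sg (d : ℕ) (v : Fin d → ℝ) : NNReal := (1 / d : NNReal) * (nsq v).toNNReal

lemma sg_coe (d : ℕ) (v : Fin d → ℝ) : (sg d v : ℝ) = ((1 / d : NNReal) : ℝ) * nsq v := by
  simp [sg, nsq_nonneg]

lemma sg_coe' (d : ℕ) (v : Fin d → ℝ) : (sg d v : ℝ) = nsq v / d := by
  rw [sg_coe]; simp; ring

lemma sg_pos (hd : 0 < d) {v : Fin d → ℝ} (hv : v ≠ 0) : (0 : ℝ) < sg d v := by
  rw [sg_coe']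
  have := nsq_pos hv
  positivity

lemma lintegral_tmul (v : Fin d → ℝ) {f : (Fin m → ℝ) → ENNReal} (hf : Measurable f) :
    ∫⁻ B, f (tmul B v) ∂(gaussMat d m (1 / d)) = ∫⁻ y, f y ∂(gvec m (sg d v)) := by
  rw [← gaussMat_map_tmul d m (1 / d) (sg d v) v (sg_coe d v), lintegral_map hf (by fun_prop)]

/-- The vector `Bᵀ v` rarely has squared norm above four times its mean. -/
lemma out_event (hd : 0 < d) (v : Fin d → ℝ) (hv : v ≠ 0) :
    initMeasure 𝔡 m d L {z | 4 * m * (sg d v : ℝ) ≤ nsq (tmul z.2.2 v)} ≤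
      ENNReal.ofReal (Real.exp (-((m : ℝ) / 2))) := by
  have hσ := sg_pos hd hv
  set σ := sg d v with hσd
  set θ : ℝ := 1 / (4 * σ) with hθ
  have hθ0 : 0 ≤ θ := by positivity
  have hθσ : θ * σ = 1 / 4 := by rw [hθ]; field_simp
  have hint : ∫⁻ z, ENNReal.ofReal (Real.exp (θ * nsq (tmul z.2.2 v)))
      ∂(initMeasure 𝔡 m d L) ≤ ENNReal.ofReal (Real.exp ((m : ℝ) / 2)) := by
    have h1 : ∫⁻ B, ENNReal.ofReal (Real.exp (θ * nsq (tmul B v))) ∂(gaussMat d m (1 / d)) ≤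
        ENNReal.ofReal (Real.exp ((m : ℝ) / 2)) := by
      rw [lintegral_tmul v (f := fun y => ENNReal.ofReal (Real.exp (θ * nsq y))) (by fun_prop)]
      have := mask_mgf (m := m) 0 σ θ (1 / 4) hθ0 hθσ le_rfl
      have e : ∀ t : Fin m → ℝ, mask 0 t = t := by intro t; ext k; simp [mask, signOf]
      simp only [e] at this
      refine this.trans_eq ?_
      congr 2
      simp [signOf]; ring
    refine (lintegral_init_le _).trans ?_
    refine (lintegral_mono fun A => lintegral_mono fun W => h1).trans ?_
    simp
  have := exp_markov _ (fun z : Om 𝔡 m d L => θ * nsq (tmul z.2.2 v)) (by fun_prop) _ m hint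
  refine le_trans (measure_mono ?_) (this.trans (ENNReal.ofReal_le_ofReal ?_))
  · intro z hz
    simp only [Set.mem_ofPred_eq] at hz ⊢
    calc (m : ℝ) = θ * (4 * m * σ) := by rw [hθ]; field_simp
      _ ≤ _ := by gcongr
  · rw [← Real.exp_add]
    apply Real.exp_le_exp.mpr; linarith

/-- The output `⟨h_L, Bᵀ v⟩` is rarely large when `h_L` is bounded. -/
lemma inner_event (hL : 2 ≤ L) (hm : 200000 * (L : ℝ) ^ 2 ≤ m) (hd : 0 < d) (x : Fin 𝔡 → ℝ)
    (v : Fin d → ℝ) (hv : v ≠ 0) :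
    initMeasure 𝔡 m d L {z | nsq (hseq z.1 z.2.1 x L) ≤ 3 ∧
        m * (sg d v : ℝ) / (12 * L) ≤ dot (hseq z.1 z.2.1 x L) (tmul z.2.2 v) ^ 2} ≤
      ENNReal.ofReal (Real.exp (-((m : ℝ) / (16000 * L)))) := by
  have hLr : (2 : ℝ) ≤ L := by exact_mod_cast hL
  have hσ := sg_pos hd hv
  set σ := sg d v with hσd
  set ν : ℝ := 1 / (12 * σ) with hν
  have hν0 : 0 ≤ ν := by positivity
  set F : Om 𝔡 m d L → ℝ := fun z => if nsq (hseq z.1 z.2.1 x L) ≤ 3 then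
    ν * dot (hseq z.1 z.2.1 x L) (tmul z.2.2 v) ^ 2 else 0 with hF
  have hFm : Measurable F := by
    refine Measurable.ite ?_ (by fun_prop) (by fun_prop)
    exact measurableSet_le (by fun_prop) (by fun_prop)
  have hint : ∫⁻ z, ENNReal.ofReal (Real.exp (F z))
      ∂(initMeasure 𝔡 m d L) ≤ ENNReal.ofReal (3 / 2) := by
    have h1 : ∀ (A : Fin m → Fin 𝔡 → ℝ) (W : Fin L → Fin m → Fin m → ℝ),
        ∫⁻ B, ENNReal.ofReal (Real.exp (F (A, W, B))) ∂(gaussMat d m (1 / d)) ≤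
        ENNReal.ofReal (3 / 2) := by
      intro A W
      by_cases hh : nsq (hseq A W x L) ≤ 3
      · simp only [hF, hh, if_true]
        set h := hseq A W x L
        rw [lintegral_tmul v (f := fun y => ENNReal.ofReal (Real.exp (ν * dot h y ^ 2)))
          (by fun_prop)]
        have e := gvec_map_dot m σ (σ * (nsq h).toNNReal) h (by simp [nsq_nonneg])
        have : ∫⁻ y, ENNReal.ofReal (Real.exp (ν * dot h y ^ 2)) ∂(gvec m σ) =
            ∫⁻ t, ENNReal.ofReal (Real.exp (ν * t ^ 2))
              ∂(gaussianReal 0 (σ * (nsq h).toNNReal)) := by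
          rw [← e, lintegral_map (by fun_prop) (measurable_dot h)]
          simp_rw [dot_comm h]
        rw [this]
        have e2 : ν * ((σ * (nsq h).toNNReal : NNReal) : ℝ) = nsq h / 12 := by
          rw [hν, NNReal.coe_mul, Real.coe_toNNReal _ (nsq_nonneg h)]; field_simp
        refine (lintegral_exp_sq_gaussian _ ν hν0 (by rw [e2]; linarith)).trans ?_
        rw [e2]
        apply ENNReal.ofReal_le_ofReal
        nlinarith [nsq_nonneg h]
      · simp only [hF, hh, if_false]
        simp only [Real.exp_zero, lintegral_const, measure_univ, mul_one]
        exact ENNReal.ofReal_le_ofReal (by norm_num)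
    refine (lintegral_init_le _).trans ?_
    refine (lintegral_mono fun A => lintegral_mono fun W => h1 A W).trans ?_
    simp
  have := exp_markov _ F hFm _ ((m : ℝ) / (144 * L)) hint
  refine le_trans (measure_mono ?_) (this.trans (ENNReal.ofReal_le_ofReal ?_))
  · rintro z ⟨h1, h2⟩
    simp only [Set.mem_ofPred_eq, hF, h1, if_true]
    calc (m : ℝ) / (144 * L) = ν * (m * σ / (12 * L)) := by rw [hν]; field_simp; norm_num
      _ ≤ _ := by gcongr
  · have hmL : 400000 ≤ (m : ℝ) / L := by
      rw [le_div_iff₀ (by linarith)]; nlinarith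
    have e1 : (m : ℝ) / (144 * L) = m / L / 144 := by field_simp
    have e2 : (m : ℝ) / (16000 * L) = m / L / 16000 := by field_simp
    rw [e1, e2]
    have h3 : (3 : ℝ) / 2 ≤ Real.exp 1 := by linarith [Real.add_one_le_exp 1]
    calc _ ≤ Real.exp (-(m / L / 144)) * Real.exp 1 := by gcongr
      _ = Real.exp (-(m / L / 144) + 1) := by rw [Real.exp_add]
      _ ≤ _ := by apply Real.exp_le_exp.mpr; linarith

/-! ### The gradient in terms of the backward vectors -/

/-- The backward vector `D_ℓ Back_{ℓ+1}ᵀ v`. -/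
def bvec (B : Fin d → Fin m → ℝ) (A : Fin m → Fin 𝔡 → ℝ)
    (W : Fin L → Fin m → Fin m → ℝ) (x : Fin 𝔡 → ℝ) (v : Fin d → ℝ) (ℓ : ℕ) : Fin m → ℝ :=
  mulVec (diagMat (signOf (gseq A W x ℓ))) (mulVec (transpose (backMat B A W x (ℓ + 1))) v)

lemma mulVec_diag {p : ℕ} (g b : Fin p → ℝ) : mulVec (diagMat (signOf g)) b = mask g b := by
  ext k; simp [mulVec, diagMat, mask]

lemma mulVec_transpose {p q : ℕ} (M : Fin p → Fin q → ℝ) (b : Fin p → ℝ) :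
    mulVec (transpose M) b = tmul M b := rfl

lemma mmul_assoc' {p q r s : ℕ} (M : Fin p → Fin q → ℝ) (N : Fin q → Fin r → ℝ)
    (K : Fin r → Fin s → ℝ) : mmul (mmul M N) K = mmul M (mmul N K) :=
  Matrix.mul_assoc (Matrix.of M) (Matrix.of N) (Matrix.of K)

lemma mmul_id {p q : ℕ} (M : Fin p → Fin q → ℝ) : mmul M (idMat q) = M := by
  ext i j; simp [mmul, idMat]

lemma id_mmul {p q : ℕ} (M : Fin p → Fin q → ℝ) : mmul (idMat p) M = M := by
  ext i j; simp [mmul, idMat]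

lemma tmul_mmul {p q r : ℕ} (M : Fin p → Fin q → ℝ) (N : Fin q → Fin r → ℝ) (b : Fin p → ℝ) :
    tmul (mmul M N) b = tmul N (tmul M b) := by
  ext j
  simp only [tmul, mmul, Finset.sum_mul, Finset.mul_sum]
  rw [Finset.sum_comm]
  refine Finset.sum_congr rfl fun k _ => Finset.sum_congr rfl fun i _ => by ring

lemma tmul_diag {p : ℕ} (g b : Fin p → ℝ) : tmul (diagMat (signOf g)) b = mask g b := by
  ext k; simp [tmul, diagMat, mask]

lemma chainProd_of_lt (W : Fin L → Fin m → Fin m → ℝ) (D : ℕ → Fin m → ℝ) (a b : ℕ) (h : b < a) :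
    chainProd W D a b = idMat m := by
  induction b with
  | zero => rfl
  | succ b ih =>
    rw [chainProd, if_neg (by omega)]
    exact ih (by omega)

/-- Splitting the rightmost factor off the chain product. -/
lemma chainProd_front (W : Fin L → Fin m → Fin m → ℝ) (D : ℕ → Fin m → ℝ) (a b : ℕ)
    (h1 : 1 ≤ a) (hab : a ≤ b) (hb : b ≤ L) :
    chainProd W D a b =
      mmul (chainProd W D (a + 1) b) (mmul (diagMat (D a)) (Wat W a)) := by
  induction b with
  | zero => omega
  | succ b ih =>
    rw [chainProd, if_pos ⟨hab, hb⟩]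
    rcases hab.eq_or_lt with h | h
    · subst h
      rw [chainProd_of_lt W D _ b (by omega), chainProd_of_lt W D _ (b + 1) (by omega),
        mmul_id, id_mmul]
    · rw [ih (by omega) (by omega), chainProd.eq_2, if_pos ⟨by omega, hb⟩, ← mmul_assoc']

lemma bvec_last (B : Fin d → Fin m → ℝ) (A : Fin m → Fin 𝔡 → ℝ)
    (W : Fin L → Fin m → Fin m → ℝ) (x : Fin 𝔡 → ℝ) (v : Fin d → ℝ) :
    bvec B A W x v L = mask (gseq A W x L) (tmul B v) := by
  rw [bvec, mulVec_diag, mulVec_transpose, backMat, prodDW, chainProd_of_lt _ _ _ _ (by omega),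
    mmul_id]

lemma bvec_step (B : Fin d → Fin m → ℝ) (A : Fin m → Fin 𝔡 → ℝ)
    (W : Fin L → Fin m → Fin m → ℝ) (x : Fin 𝔡 → ℝ) (v : Fin d → ℝ) (ℓ : Fin L) :
    bvec B A W x v ℓ = mask (gseq A W x ℓ) (tmul (W ℓ) (bvec B A W x v (ℓ + 1))) := by
  rw [bvec, bvec, mulVec_diag, mulVec_diag, mulVec_transpose, mulVec_transpose, backMat, backMat,
    prodDW, prodDW, chainProd_front _ _ _ _ (by omega) (by omega) le_rfl, Wat_succ,
    ← mmul_assoc', ← mmul_assoc', tmul_mmul, tmul_mmul, tmul_diag]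

/-- Norm bound on every backward vector on the good event. -/
lemma bvec_le (hL : 2 ≤ L) (B : Fin d → Fin m → ℝ) (A : Fin m → Fin 𝔡 → ℝ)
    (W : Fin L → Fin m → Fin m → ℝ) (x : Fin 𝔡 → ℝ) (v : Fin d → ℝ)
    (hlow : ∀ ℓ ≤ L, 1 / 12 ≤ nsq (hseq A W x ℓ))
    (hout : nsq (tmul B v) ≤ 4 * m * (sg d v : ℝ))
    (hin : dot (hseq A W x L) (tmul B v) ^ 2 ≤ m * (sg d v : ℝ) / (12 * L))
    (hrt : rt (1 / (4 * L)) (tmul B v) L (mulVec A x) W ≤ 1) (ℓ : ℕ) (hℓ : ℓ ≤ L) :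
    nsq (bvec B A W x v ℓ) ≤ 12 * m * (sg d v : ℝ) := by
  have hLr : (2 : ℝ) ≤ L := by exact_mod_cast hL
  have hσ : (0 : ℝ) ≤ sg d v := NNReal.coe_nonneg _
  have h := (backward_det (1 / (4 * L)) (4 * m * (sg d v : ℝ))
    (dot (hseq A W x L) (tmul B v)) (by positivity) (tmul B v) (by
      calc _ ≤ 12 * (m * (sg d v : ℝ) / (12 * L)) := by linarith
        _ = _ := by field_simp) hout L
    (gseq A W x) (bvec B A W x v) W
    (fun ℓ => by
      rw [← hseq_eq_relu A W x ℓ (by omega)]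
      change mulVec (Wat W (ℓ + 1)) _ = _
      rw [Wat_succ]) (bvec_last B A W x v) (bvec_step B A W x v)
    (fun k hk => by rw [← hseq_eq_relu A W x k hk]; exact hlow k hk)
    (by rw [← hseq_eq_relu A W x L le_rfl])).2.2.2 ℓ hℓ
  have e : gseq A W x 0 = mulVec A x := rfl
  rw [e] at h
  have h2 : Real.exp (rt (1 / (4 * L)) (tmul B v) L (mulVec A x) W) ≤ 3 :=
    (Real.exp_le_exp.mpr hrt).trans exp_neg_one_bounds.2
  have h3 : 0 ≤ 4 * m * (sg d v : ℝ) := by positivity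
  nlinarith

lemma frob_sq {p q : ℕ} (M : Fin p → Fin q → ℝ) : frob M ^ 2 = ∑ i, ∑ j, M i j ^ 2 :=
  Real.sq_sqrt (Finset.sum_nonneg fun _ _ => Finset.sum_nonneg fun _ _ => sq_nonneg _)

lemma frob_sum_le {n p q : ℕ} (b : Fin n → Fin p → ℝ) (h : Fin n → Fin q → ℝ) :
    frob (∑ i, outer (b i) (h i)) ^ 2 ≤ n * ∑ i, nsq (b i) * nsq (h i) := by
  rw [frob_sq]
  calc _ ≤ ∑ k, ∑ j, (n * ∑ i, (b i k * h i j) ^ 2) := by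
        refine Finset.sum_le_sum fun k _ => Finset.sum_le_sum fun j _ => ?_
        have := sq_sum_le_card_mul_sum_sq (s := Finset.univ) (f := fun i => b i k * h i j)
        simpa [Finset.sum_apply, outer] using this
    _ = _ := by
        simp only [← Finset.mul_sum]
        congr 1
        simp only [nsq, Finset.sum_mul_sum, mul_pow]
        rw [Finset.sum_congr rfl fun k _ => Finset.sum_comm, Finset.sum_comm]

/-! ### Separation from the direction of a fixed sample -/

/-- A ray through one unit vector keeps its distance from another separated unit vector. -/
lemma nsq_sub_ray (δ : ℝ) (hδ : 0 < δ) (hδ1 : δ ≤ 1) (x y : Fin 𝔡 → ℝ) (hx : nsq x = 1)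
    (hy : nsq y = 1) (hxy : δ ^ 2 ≤ nsq (x - y)) (α : ℝ) (hα : 0 ≤ α) :
    δ ^ 2 / 2 ≤ nsq (x - α • y) := by
  rw [nsq_sub, hx, hy] at hxy
  rw [nsq_sub, dot_smul_right, nsq_smul, hx, hy]
  have h := dot_sq_le x y
  rw [hx, hy] at h
  set ρ := dot x y
  by_cases hρ : 0 ≤ ρ
  · nlinarith [sq_nonneg (α - ρ)]
  · push Not at hρ
    nlinarith

/-- If `a` stays away from a fine grid of multiples of `b`, its component orthogonal to `b`
is not small. -/
lemma orth_of_grid (δ : ℝ) (hδ : 0 < δ) (a b : Fin m → ℝ) (hb : 1 / 12 ≤ nsq b) (hb3 : nsq b ≤ 3)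
    (ha3 : nsq a ≤ 3) (hab : 0 ≤ dot a b)
    (hgrid : ∀ k : ℕ, k ≤ ⌊600 / δ⌋₊ → δ ^ 2 / 48 ≤ nsq (a - (k * (δ / 100)) • b)) :
    δ ^ 2 / 50 * nsq b ≤ nsq a * nsq b - dot a b ^ 2 := by
  have hb0 : 0 < nsq b := by linarith
  set α := dot a b / nsq b with hα
  have hα0 : 0 ≤ α := by positivity
  have hαb : dot a b = α * nsq b := by rw [hα]; field_simp
  -- the projection coefficient lies in the range covered by the grid, since `α² ‖b‖² ≤ ‖a‖²`
  have hα6 : α ≤ 6 := by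
    have h1 := dot_sq_le a b
    rw [hαb] at h1
    have h2 : α ^ 2 * nsq b ≤ nsq a := by
      have : (α ^ 2 * nsq b) * nsq b ≤ nsq a * nsq b := by nlinarith
      exact le_of_mul_le_mul_right this hb0
    nlinarith
  set k := ⌊α / (δ / 100)⌋₊ with hk
  have hk1 : (k : ℝ) * (δ / 100) ≤ α := by
    have := Nat.floor_le (a := α / (δ / 100)) (by positivity)
    rwa [← hk, le_div_iff₀ (by positivity)] at this
  have hk2 : α < (k + 1) * (δ / 100) := by
    have := Nat.lt_floor_add_one (α / (δ / 100))
    rwa [← hk, div_lt_iff₀ (by positivity)] at this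
  have hkK : k ≤ ⌊600 / δ⌋₊ := by
    apply Nat.floor_le_floor
    rw [div_div_eq_mul_div]
    gcongr
    linarith
  have h := hgrid k hkK
  rw [nsq_sub, dot_smul_right, nsq_smul, hαb] at h
  rw [hαb]
  set β := (k : ℝ) * (δ / 100)
  have h3 : (α - β) ^ 2 ≤ (δ / 100) ^ 2 := by
    have : (k + 1) * (δ / 100) = β + δ / 100 := by simp only [β]; ring
    apply pow_le_pow_left₀ <;> linarith
  have h4 : (α - β) ^ 2 * nsq b ≤ (δ / 100) ^ 2 * 3 := by gcongr
  have h5 : δ ^ 2 / 50 ≤ nsq a - α ^ 2 * nsq b := by nlinarith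
  have : δ ^ 2 / 50 * nsq b ≤ (nsq a - α ^ 2 * nsq b) * nsq b := by gcongr
  linarith

lemma hseq_nonneg (A : Fin m → Fin 𝔡 → ℝ) (W : Fin L → Fin m → Fin m → ℝ) (x : Fin 𝔡 → ℝ)
    (ℓ : ℕ) (hℓ : ℓ ≤ L) (k : Fin m) : 0 ≤ hseq A W x ℓ k := by
  rw [hseq_eq_relu A W x ℓ hℓ]; exact le_max_right _ _

/-! ### One row of the last gradient -/

/-- Configurations of bounded hidden vectors in which the `i`-th one is not small and every other
one has squared distance at least `δ² / 50` from the line it spans. -/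
def Good {n : ℕ} (δ : ℝ) (i : Fin n) (hs : Fin n → Fin m → ℝ) : Prop :=
  1 / 12 ≤ nsq (hs i) ∧ (∀ j, nsq (hs j) ≤ 3) ∧
    ∀ j, j ≠ i → δ ^ 2 / 50 * nsq (hs i) ≤ nsq (hs j) * nsq (hs i) - dot (hs j) (hs i) ^ 2

/-- A row of the last-layer gradient as a function of the corresponding weight row `w`. -/
def Mrow {n : ℕ} (hs : Fin n → Fin m → ℝ) (Y : Fin n → ℝ) (w : Fin m → ℝ) : Fin m → ℝ :=
  fun l => ∑ j, (if 0 ≤ dot w (hs j) then 1 else 0) * Y j * hs j l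

@[fun_prop]
lemma measurable_Mrow {Ω : Type*} [MeasurableSpace Ω] {n : ℕ} {hs : Ω → Fin n → Fin m → ℝ}
    {Y : Ω → Fin n → ℝ} {w : Ω → Fin m → ℝ} (h1 : Measurable hs) (h2 : Measurable Y)
    (h3 : Measurable w) : Measurable fun z => Mrow (hs z) (Y z) (w z) := by
  unfold Mrow
  refine measurable_pi_lambda _ fun l => Finset.measurable_sum _ fun j _ => ?_
  have : Measurable fun z => (if 0 ≤ dot (w z) (hs z j) then (1 : ℝ) else 0) := by
    refine Measurable.ite (measurableSet_le measurable_const ?_) measurable_const measurable_const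
    fun_prop
  fun_prop

/-- Moving `w` across the hyperplane orthogonal to `h_i` and across no other one changes the
row by `± Y_i h_i`, so one of the two values is large. -/
lemma Mrow_flip {n : ℕ} (hs : Fin n → Fin m → ℝ) (Y : Fin n → ℝ) (i : Fin n) (u u' : Fin m → ℝ)
    (hi : 0 ≤ dot u (hs i) ↔ ¬ 0 ≤ dot u' (hs i))
    (hj : ∀ j, j ≠ i → (0 ≤ dot u (hs j) ↔ 0 ≤ dot u' (hs j))) :
    Y i ^ 2 * nsq (hs i) / 4 ≤ nsq (Mrow hs Y u) ∨
      Y i ^ 2 * nsq (hs i) / 4 ≤ nsq (Mrow hs Y u') := by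
  have hdiff : nsq (Mrow hs Y u - Mrow hs Y u') = Y i ^ 2 * nsq (hs i) := by
    have : ∀ l, (Mrow hs Y u - Mrow hs Y u') l =
        ((if 0 ≤ dot u (hs i) then 1 else 0) - (if 0 ≤ dot u' (hs i) then 1 else 0)) *
          Y i * hs i l := by
      intro l
      simp only [Pi.sub_apply, Mrow, ← Finset.sum_sub_distrib]
      rw [Finset.sum_eq_single i]
      · ring
      · intro j _ hji
        simp only [hj j hji, sub_self]
      · simp
    simp only [nsq, this, Finset.mul_sum]
    refine Finset.sum_congr rfl fun l _ => ?_
    by_cases h : 0 ≤ dot u' (hs i)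
    · have h' : ¬ 0 ≤ dot u (hs i) := by rw [hi]; simpa using h
      rw [if_neg h', if_pos h]; ring
    · have h' := hi.mpr h
      rw [if_pos h', if_neg h]; ring
  have hle : nsq (Mrow hs Y u - Mrow hs Y u') ≤
      2 * nsq (Mrow hs Y u) + 2 * nsq (Mrow hs Y u') := by
    simp only [nsq, Finset.mul_sum, ← Finset.sum_add_distrib]
    refine Finset.sum_le_sum fun l _ => ?_
    simp only [Pi.sub_apply]
    nlinarith [sq_nonneg (Mrow hs Y u l + Mrow hs Y u' l)]
  by_contra hcon
  push Not at hcon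
  linarith [hcon.1, hcon.2]

/-- With probability of order `δ / n` a row of the last gradient is of size at least
`|Y_i| ‖h_i‖ / 2`. -/
lemma row_prob {n : ℕ} (hm : 0 < m) (hn : 0 < n) (δ : ℝ) (hδ : 0 < δ) (hδ1 : δ ≤ 1) (i : Fin n)
    (hs : Fin n → Fin m → ℝ) (hG : Good δ i hs) (Y : Fin n → ℝ) :
    ENNReal.ofReal (δ / (360 * n)) ≤
      gvec m (vr m) {w | Y i ^ 2 * nsq (hs i) / 4 ≤ nsq (Mrow hs Y w)} := by
  obtain ⟨g1, g2, g3⟩ := hG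
  have hi0 : hs i ≠ 0 := by intro h; rw [h] at g1; simp [nsq] at g1; norm_num at g1
  have hnr : (1 : ℝ) ≤ n := by exact_mod_cast hn
  set r := √(nsq (hs i)) with hr
  have hr0 : 0 < r := Real.sqrt_pos.mpr (by linarith)
  have hr2 : r ^ 2 = nsq (hs i) := Real.sq_sqrt (by linarith)
  set e := r⁻¹ • hs i with he
  have he1 : nsq e = 1 := nsq_unit _ hi0
  have hhe : hs i = r • e := by rw [he, smul_smul, mul_inv_cancel₀ hr0.ne', one_smul]
  set S := {w | Y i ^ 2 * nsq (hs i) / 4 ≤ nsq (Mrow hs Y w)} with hS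
  have hSm : MeasurableSet S := measurableSet_le (by fun_prop) (by fun_prop)
  have hv : (vr m) ≠ 0 := vr_ne_zero hm
  have hv0 : (0 : ℝ) < vr m := by positivity
  set s := √(vr m : ℝ) with hs_def
  have hs0 : 0 < s := Real.sqrt_pos.mpr hv0
  have hs2 : s ^ 2 = vr m := Real.sq_sqrt hv0.le
  -- `T1` below has probability at least `κ / 3`; this scale leaves room for the `n - 1` slabs to be
  -- avoided in `T2`
  set κ := δ / (30 * n) with hκ
  have hκ0 : 0 < κ := by positivity
  have hκ1 : κ ≤ 1 := by rw [hκ, div_le_one (by positivity)]; nlinarith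
  set τ := κ * s with hτ
  have hτ0 : 0 < τ := by positivity
  let o : Fin n → Fin m → ℝ := fun j => hs j - dot e (hs j) • e
  have ho : ∀ j, j ≠ i → δ ^ 2 / 50 ≤ nsq (o j) := by
    intro j hj
    have h := g3 j hj
    have e1 : nsq (o j) = nsq (hs j) - dot e (hs j) ^ 2 := nsq_sub_proj e (hs j) he1
    have e2 : dot (hs j) (hs i) = r * dot e (hs j) := by
      rw [hhe, dot_smul_right, dot_comm]
    rw [e2, mul_pow, hr2] at h
    rw [e1]
    have : δ ^ 2 / 50 * nsq (hs i) ≤ (nsq (hs j) - dot e (hs j) ^ 2) * nsq (hs i) := by linarith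
    exact le_of_mul_le_mul_right this (by linarith)
  -- the flipping event
  set T1 := {w : Fin m → ℝ | 0 < |dot w e| ∧ |dot w e| ≤ τ} with hT1
  set T2 := {w : Fin m → ℝ | ∀ j, j ≠ i → 2 * τ < |dot w (o j)|} with hT2
  set μ := gvec m (vr m) with hμ
  have hT1p : ENNReal.ofReal (κ / 3) ≤ μ T1 := by
    have h := gaussian_small_ball_lower (vr m) hv τ hτ0.le (by
      rw [hτ, mul_pow, hs2]
      have : κ ^ 2 ≤ 1 := by nlinarith
      nlinarith)
    rw [← gvec_map_dot m (vr m) (vr m) e (by rw [he1, mul_one]),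
      Measure.map_apply (measurable_dot e) (by
        exact (measurableSet_lt measurable_const measurable_norm).inter
          (measurableSet_le measurable_norm measurable_const))] at h
    refine le_trans (ENNReal.ofReal_le_ofReal ?_) h
    rw [hτ, ← hs_def]
    apply le_of_eq
    field_simp
  have hT2p : ENNReal.ofReal (1 / 2) ≤ μ T2 := by
    have hc : μ T2ᶜ ≤ ENNReal.ofReal (1 / 2) := by
      have hsub : T2ᶜ ⊆ ⋃ j ∈ (Finset.univ.filter (· ≠ i) : Finset (Fin n)),
          {w | |dot w (o j)| ≤ 2 * τ} := by
        intro w hw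
        simp only [hT2, Set.mem_compl_iff, Set.mem_ofPred_eq, not_forall, not_lt] at hw
        obtain ⟨j, hj, hw⟩ := hw
        simp only [Set.mem_iUnion]
        exact ⟨j, by simp [hj], hw⟩
      have h1 : ∀ j ∈ (Finset.univ.filter (· ≠ i) : Finset (Fin n)),
          μ {w | |dot w (o j)| ≤ 2 * τ} ≤ ENNReal.ofReal (1 / (2 * n)) := by
        intro j hj
        have hj' : j ≠ i := by simpa using hj
        have hoj := ho j hj'
        have hoj0 : 0 < nsq (o j) := lt_of_lt_of_le (by positivity) hoj
        set σ : NNReal := vr m * (nsq (o j)).toNNReal with hσ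
        have hσc : (σ : ℝ) = vr m * nsq (o j) := by
          rw [hσ, NNReal.coe_mul, Real.coe_toNNReal _ hoj0.le]
        have hσ0 : σ ≠ 0 := by
          intro h
          rw [h] at hσc
          have : 0 < (vr m : ℝ) * nsq (o j) := by positivity
          rw [← hσc] at this
          exact lt_irrefl _ this
        have h := gaussian_small_ball σ hσ0 (2 * τ) (by positivity)
        rw [← gvec_map_dot m (vr m) σ (o j) hσc, Measure.map_apply (measurable_dot (o j))
          (measurableSet_le (by fun_prop) (by fun_prop))] at h
        refine h.trans (ENNReal.ofReal_le_ofReal ?_)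
        have hsq : s * (δ / (15 / 2)) ≤ √(σ : ℝ) := by
          apply Real.le_sqrt_of_sq_le
          rw [hσc, mul_pow, hs2]
          gcongr
          refine le_trans ?_ hoj
          rw [div_pow]
          norm_num
          nlinarith [sq_nonneg δ]
        have hsp : 0 < s * (δ / (15 / 2)) := by positivity
        calc 2 * τ / √(σ : ℝ) ≤ 2 * τ / (s * (δ / (15 / 2))) := by gcongr
          _ = 1 / (2 * n) := by rw [hτ, hκ]; field_simp; norm_num
      calc _ ≤ ∑ j ∈ (Finset.univ.filter (· ≠ i) : Finset (Fin n)),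
            μ {w | |dot w (o j)| ≤ 2 * τ} := (measure_mono hsub).trans (measure_biUnion_finset_le _ _)
        _ ≤ ∑ j ∈ (Finset.univ.filter (· ≠ i) : Finset (Fin n)),
            ENNReal.ofReal (1 / (2 * n)) := Finset.sum_le_sum h1
        _ ≤ ∑ j : Fin n, ENNReal.ofReal (1 / (2 * n)) :=
            Finset.sum_le_sum_of_subset (Finset.subset_univ _)
        _ = ENNReal.ofReal (1 / 2) := by
            rw [Finset.sum_const, Finset.card_univ, Fintype.card_fin, nsmul_eq_mul,
              ← ENNReal.ofReal_natCast, ← ENNReal.ofReal_mul (by positivity)]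
            congr 1; field_simp
    have h1 : 1 ≤ μ T2 + μ T2ᶜ := by
      rw [← measure_univ (μ := μ), ← Set.union_compl_self T2]
      exact measure_union_le _ _
    have h2 : (1 : ENNReal) = ENNReal.ofReal (1 / 2) + ENNReal.ofReal (1 / 2) := by
      rw [← ENNReal.ofReal_add (by norm_num) (by norm_num)]; norm_num
    have h3 : ENNReal.ofReal (1 / 2) + ENNReal.ofReal (1 / 2) ≤ μ T2 + ENNReal.ofReal (1 / 2) := by
      rw [← h2]; exact h1.trans (by gcongr)
    exact (ENNReal.add_le_add_iff_right ENNReal.ofReal_ne_top).mp h3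
  have hmap1 : (μ.prod μ).map (fun z => resamp e z.1 z.2) = μ := gvec_resamp m (vr m) e he1
  have hmap2 : (μ.prod μ).map (fun z => resamp e (-z.1) z.2) = μ := by
    have hneg : (μ.prod μ).map (Prod.map (fun w => -w) id) = μ.prod μ := by
      have := Measure.map_prod_map μ μ (f := fun w : Fin m → ℝ => -w) (g := id)
        (by fun_prop) measurable_id
      rw [Measure.map_id, gvec_neg] at this
      exact this.symm
    conv_rhs => rw [← hmap1, ← hneg]
    rw [Measure.map_map (measurable_resamp e) (by fun_prop)]
    rfl
  have hcover : T1 ×ˢ T2 ⊆ (fun z : (Fin m → ℝ) × (Fin m → ℝ) => resamp e z.1 z.2) ⁻¹' S ∪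
      (fun z => resamp e (-z.1) z.2) ⁻¹' S := by
    rintro ⟨w, w'⟩ ⟨⟨ht0, ht⟩, hw'⟩
    simp only [hT2, Set.mem_ofPred_eq] at ht0 ht hw'
    have hdot : ∀ (u : Fin m → ℝ) j, dot (resamp e u w') (hs j) =
        dot w' (o j) + dot u e * dot e (hs j) := by
      intro u j
      have : dot w' (o j) = dot w' (hs j) - dot e (hs j) * dot w' e := by
        simp only [o]; rw [dot_sub_right, dot_smul_right]
      rw [dot_resamp, this]; ring
    refine Mrow_flip hs Y i _ _ ?_ ?_
    · have hoi : dot w' (o i) = 0 := by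
        have : dot e (hs i) = r := by rw [hhe, dot_smul_right, dot_self, he1, mul_one]
        have : o i = 0 := by
          simp only [o]; rw [this, ← hhe, sub_self]
        rw [this]; simp [dot]
      have her : dot e (hs i) = r := by rw [hhe, dot_smul_right, dot_self, he1, mul_one]
      rw [hdot, hdot, hoi, her, dot_neg_left]
      rcases lt_or_gt_of_ne (abs_pos.mp ht0) with h | h
      · constructor
        · intro h'; nlinarith
        · intro h'; exact absurd (by nlinarith) h'
      · constructor
        · intro h'; nlinarith
        · intro h'; nlinarith
    · intro j hj
      have hx := hw' j hj
      have hy : |dot w e * dot e (hs j)| < 2 * τ := by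
        have h1 := dot_sq_le e (hs j)
        rw [he1, one_mul] at h1
        have h2 : |dot e (hs j)| < 2 := by
          apply abs_lt_of_sq_lt_sq
          · linarith [g2 j]
          · norm_num
        rw [abs_mul]
        nlinarith [abs_nonneg (dot e (hs j)), abs_nonneg (dot w e)]
      rw [hdot, hdot, dot_neg_left]
      rw [abs_lt] at hy
      rcases lt_abs.mp hx with h | h
      · constructor <;> intro _ <;> nlinarith
      · constructor <;> intro _ <;> nlinarith
  have hfin : ENNReal.ofReal (κ / 3) * ENNReal.ofReal (1 / 2) ≤ μ S + μ S := by
    calc _ ≤ μ T1 * μ T2 := by gcongr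
      _ = (μ.prod μ) (T1 ×ˢ T2) := (Measure.prod_prod _ _).symm
      _ ≤ _ := (measure_mono hcover).trans (measure_union_le _ _)
      _ = μ S + μ S := by
          congr 1
          · rw [← Measure.map_apply (measurable_resamp e) hSm, hmap1]
          · rw [← Measure.map_apply ?_ hSm, hmap2]
            unfold resamp dot; fun_prop
  rw [← ENNReal.ofReal_mul (by positivity)] at hfin
  have e3 : κ / 3 * (1 / 2) = δ / (360 * n) + δ / (360 * n) := by
    rw [hκ]; field_simp; norm_num
  rw [e3, ENNReal.ofReal_add (by positivity) (by positivity)] at hfin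
  by_contra hcon
  push Not at hcon
  exact absurd hfin (not_le.mpr (ENNReal.add_lt_add hcon hcon))

/-! ### The lower bound for the last layer -/

/-- Laplace transform of the energy of one gradient row, conditionally on the layers below. -/
lemma row_mgf {n : ℕ} (hm : 0 < m) (hn : 0 < n) (δ : ℝ) (hδ : 0 < δ) (hδ1 : δ ≤ 1) (i : Fin n)
    (hs : Fin n → Fin m → ℝ) (hG : Good δ i hs) (Y : Fin n → ℝ) (θ : ℝ) (hθ : 0 ≤ θ) :
    ∫⁻ w, ENNReal.ofReal (Real.exp (-(θ * nsq (Mrow hs Y w)))) ∂(gvec m (vr m)) ≤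
      ENNReal.ofReal (1 - δ / (360 * n) * (1 - Real.exp (-(θ * Y i ^ 2 / 48)))) := by
  set μ := gvec m (vr m)
  set p := δ / (360 * n) with hp
  set b := Real.exp (-(θ * Y i ^ 2 / 48)) with hb
  have hb1 : b ≤ 1 := Real.exp_le_one_iff.mpr (by rw [neg_nonpos]; positivity)
  set S := {w | Y i ^ 2 * nsq (hs i) / 4 ≤ nsq (Mrow hs Y w)} with hS
  have hSm : MeasurableSet S := measurableSet_le (by fun_prop) (by fun_prop)
  have hpS : ENNReal.ofReal p ≤ μ S := row_prob hm hn δ hδ hδ1 i hs hG Y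
  have hpR : p ≤ μ.real S := by
    rw [Measure.real]
    exact (ENNReal.ofReal_le_iff_le_toReal (measure_ne_top _ _)).mp hpS
  have hle : ∀ w, ENNReal.ofReal (Real.exp (-(θ * nsq (Mrow hs Y w)))) ≤
      S.indicator (fun _ => ENNReal.ofReal b) w + Sᶜ.indicator (fun _ => 1) w := by
    intro w
    by_cases hw : w ∈ S
    · simp only [Set.indicator_of_mem hw, Set.mem_compl_iff, hw, not_true, not_false_eq_true,
        Set.indicator_of_notMem, add_zero]
      apply ENNReal.ofReal_le_ofReal
      apply Real.exp_le_exp.mpr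
      have h1 : Y i ^ 2 * (1 / 12) / 4 ≤ nsq (Mrow hs Y w) :=
        le_trans (by gcongr; exact hG.1) hw
      have : θ * (Y i ^ 2 * (1 / 12) / 4) ≤ θ * nsq (Mrow hs Y w) := by gcongr
      linarith
    · have hw' : w ∈ Sᶜ := hw
      simp only [Set.indicator_of_mem hw', Set.indicator_of_notMem hw, zero_add]
      rw [← ENNReal.ofReal_one]
      apply ENNReal.ofReal_le_ofReal
      exact Real.exp_le_one_iff.mpr (by rw [neg_nonpos]; exact mul_nonneg hθ (nsq_nonneg _))
  refine (lintegral_mono hle).trans ?_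
  rw [lintegral_add_left (measurable_const.indicator hSm), lintegral_indicator_const hSm,
    lintegral_indicator_const hSm.compl, one_mul]
  have e1 : μ S = ENNReal.ofReal (μ.real S) := by simp [Measure.real]
  have e2 : μ Sᶜ = ENNReal.ofReal (1 - μ.real S) := by
    rw [← probReal_compl_eq_one_sub hSm]; simp [Measure.real]
  have h1 : μ.real S ≤ 1 := measureReal_le_one
  rw [e1, e2, ← ENNReal.ofReal_mul (Real.exp_pos _).le, ← ENNReal.ofReal_add (by positivity)
    (by linarith)]
  apply ENNReal.ofReal_le_ofReal
  nlinarith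

/-- Average of the bound of `row_mgf` over a Gaussian output weight, at the inverse temperature
`θ = 1 / σ` matching its variance `σ`. -/
lemma y_mgf (σ : NNReal) (hσ : (0 : ℝ) < σ) (p : ℝ) (hp : 0 ≤ p) (hp1 : p ≤ 1) :
    ∫⁻ y, ENNReal.ofReal (1 - p * (1 - Real.exp (-(1 / σ * y ^ 2 / 48)))) ∂(gaussianReal 0 σ) ≤
      ENNReal.ofReal (1 - p / 96) := by
  set c : ℝ := 1 / (48 * σ) with hc
  have hc0 : 0 ≤ c := by positivity
  set g : ℝ → ℝ := fun y => 1 - p * (c * y ^ 2 - c ^ 2 / 2 * y ^ 4) with hg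
  have i2 := integrable_pow_gaussian σ 2
  have i4 := integrable_pow_gaussian σ 4
  have hgi : Integrable g (gaussianReal 0 σ) :=
    (integrable_const _).sub (((i2.const_mul _).sub (i4.const_mul _)).const_mul _)
  have hg0 : ∀ y, 0 ≤ g y := by
    intro y
    have : c * y ^ 2 - c ^ 2 / 2 * y ^ 4 ≤ 1 := by nlinarith [sq_nonneg (c * y ^ 2 - 1)]
    simp only [hg]
    nlinarith
  have hle : ∀ y : ℝ, 1 - p * (1 - Real.exp (-(1 / σ * y ^ 2 / 48))) ≤ g y := by
    intro y
    have e : 1 / (σ : ℝ) * y ^ 2 / 48 = c * y ^ 2 := by rw [hc]; field_simp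
    have := exp_neg_le_quad (x := c * y ^ 2) (by positivity)
    rw [e]
    simp only [hg]
    nlinarith
  refine (lintegral_mono fun y => ENNReal.ofReal_le_ofReal (hle y)).trans ?_
  rw [← ofReal_integral_eq_lintegral_ofReal hgi (Filter.Eventually.of_forall hg0)]
  apply ENNReal.ofReal_le_ofReal
  have e : ∫ y, g y ∂(gaussianReal 0 σ) =
      1 - p * (c * σ - c ^ 2 / 2 * ∫ y, y ^ 4 ∂(gaussianReal 0 σ)) := by
    have i3 : Integrable (fun y : ℝ => p * (c * y ^ 2 - c ^ 2 / 2 * y ^ 4)) (gaussianReal 0 σ) :=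
      ((i2.const_mul _).sub (i4.const_mul _)).const_mul _
    simp only [hg]
    rw [integral_sub (integrable_const _) i3,
      integral_const_mul, integral_sub (i2.const_mul _) (i4.const_mul _), integral_const_mul,
      integral_const_mul, integral_sq_gaussian]
    simp
  rw [e]
  have h4 := integral_pow_four_gaussian σ
  have h5 : c ^ 2 / 2 * ∫ y, y ^ 4 ∂(gaussianReal 0 σ) ≤ c ^ 2 / 2 * (48 * (σ : ℝ) ^ 2) := by
    gcongr
  have h6 : c ^ 2 / 2 * (48 * (σ : ℝ) ^ 2) = 1 / 96 := by rw [hc]; field_simp; norm_num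
  have h7 : c * (σ : ℝ) = 1 / 48 := by rw [hc]; field_simp
  rw [h7]
  nlinarith

lemma hseq_congr (A : Fin m → Fin 𝔡 → ℝ) (W W' : Fin L → Fin m → Fin m → ℝ) (x : Fin 𝔡 → ℝ)
    (ℓ : ℕ) (h : ∀ k : Fin L, (k : ℕ) < ℓ → W k = W' k) : hseq A W x ℓ = hseq A W' x ℓ := by
  induction ℓ with
  | zero => rfl
  | succ ℓ ih =>
    by_cases hl : ℓ + 1 ≤ L
    · have := Wat_succ W ⟨ℓ, hl⟩
      have h2 := Wat_succ W' ⟨ℓ, hl⟩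
      simp only at this h2
      rw [hseq, hseq, if_pos hl, if_pos hl, this, h2, ih fun k hk => h k (by omega),
        h ⟨ℓ, hl⟩ (by simp)]
    · rw [hseq, hseq, if_neg hl, if_neg hl, ih fun k hk => h k (by omega)]

lemma lintegral_pi_last_le {M : Type*} [MeasurableSpace M] (μ : Measure M)
    [IsProbabilityMeasure μ] (p : ℕ) (F : (Fin (p + 1) → M) → ENNReal) :
    ∫⁻ W, F W ∂(Measure.pi fun _ : Fin (p + 1) => μ) ≤
      ∫⁻ V, ∫⁻ w, F ((Fin.last p).insertNth w V) ∂μ ∂(Measure.pi fun _ : Fin p => μ) := by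
  have hmp := (measurePreserving_piFinSuccAbove (fun _ : Fin (p + 1) => μ) (Fin.last p)).symm
  rw [← hmp.map_eq, lintegral_map_equiv]
  exact lintegral_prod_swap_le _ _ _

/-- Squared Frobenius norm of the last-layer gradient, computed row by row. -/
def lastSq {n p : ℕ} (x : Fin n → Fin 𝔡 → ℝ) (v : Fin n → Fin d → ℝ)
    (z : Om 𝔡 m d (p + 1)) : ℝ :=
  ∑ k, nsq (Mrow (fun j => hseq z.1 z.2.1 (x j) p) (fun j => tmul z.2.2 (v j) k)
    (z.2.1 (Fin.last p) k))

lemma frob_last {n p : ℕ} (x : Fin n → Fin 𝔡 → ℝ) (v : Fin n → Fin d → ℝ)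
    (z : Om 𝔡 m d (p + 1)) :
    frob (∑ i, gradW z.2.2 z.1 z.2.1 (x i) (v i) (p + 1)) ^ 2 = lastSq x v z := by
  rw [frob_sq, lastSq]
  refine Finset.sum_congr rfl fun k _ => Finset.sum_congr rfl fun l _ => ?_
  congr 1
  simp only [Finset.sum_apply, Mrow]
  refine Finset.sum_congr rfl fun j _ => ?_
  have h1 : gradW z.2.2 z.1 z.2.1 (x j) (v j) (p + 1) =
      outer (bvec z.2.2 z.1 z.2.1 (x j) (v j) (p + 1)) (hseq z.1 z.2.1 (x j) p) := rfl
  have h2 := Wat_succ z.2.1 (Fin.last p)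
  simp only [Fin.val_last] at h2
  rw [h1, bvec_last]
  simp only [outer, mask, signOf, gseq, h2]
  rfl

lemma measurable_lastSq {n p : ℕ} (x : Fin n → Fin 𝔡 → ℝ) (v : Fin n → Fin d → ℝ) :
    Measurable (lastSq (m := m) (p := p) x v) := by
  unfold lastSq
  have : ∀ k, Measurable fun z : Om 𝔡 m d (p + 1) => z.2.1 (Fin.last p) k := fun k => by fun_prop
  fun_prop

lemma measurableSet_Good {n p : ℕ} (δ : ℝ) (i : Fin n) (x : Fin n → Fin 𝔡 → ℝ) :
    MeasurableSet {z : Om 𝔡 m d (p + 1) | Good δ i (fun j => hseq z.1 z.2.1 (x j) p)} := by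
  unfold Good
  simp only [Set.ofPred_and, Set.ofPred_forall]
  refine MeasurableSet.inter ?_ (MeasurableSet.inter ?_ ?_)
  · exact measurableSet_le (by fun_prop) (by fun_prop)
  · exact MeasurableSet.iInter fun j => measurableSet_le (by fun_prop) (by fun_prop)
  · exact MeasurableSet.iInter fun j => MeasurableSet.iInter fun _ =>
      measurableSet_le (by fun_prop) (by fun_prop)

open Classical in
/-- On configurations of well-separated hidden vectors the last-layer gradient is rarely small. -/
lemma last_event {n p : ℕ} (hm : 0 < m) (hn : 0 < n) (hd : 0 < d) (δ : ℝ) (hδ : 0 < δ)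
    (hδ1 : δ ≤ 1) (i : Fin n) (x : Fin n → Fin 𝔡 → ℝ) (v : Fin n → Fin d → ℝ) (hv : v i ≠ 0) :
    initMeasure 𝔡 m d (p + 1) {z | Good δ i (fun j => hseq z.1 z.2.1 (x j) p) ∧
        lastSq x v z ≤ sg d (v i) * (δ * m / (69120 * n))} ≤
      ENNReal.ofReal (Real.exp (-(δ * m / (69120 * n)))) := by
  have hnr : (1 : ℝ) ≤ n := by exact_mod_cast hn
  have hσ := sg_pos hd hv
  set σ := sg d (v i) with hσd
  set q := δ / (360 * n) with hq
  have hq0 : 0 ≤ q := by positivity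
  have hq1 : q ≤ 1 := by rw [hq, div_le_one (by positivity)]; nlinarith
  set θ : ℝ := 1 / σ with hθ
  have hθ0 : 0 ≤ θ := by positivity
  let f : ℝ → ENNReal := fun y => ENNReal.ofReal (1 - q * (1 - Real.exp (-(θ * y ^ 2 / 48))))
  have hf : Measurable f := by fun_prop
  set G : Om 𝔡 m d (p + 1) → ENNReal := fun z =>
    if Good δ i (fun j => hseq z.1 z.2.1 (x j) p) then
      ENNReal.ofReal (Real.exp (-(θ * lastSq x v z))) else 0 with hG
  have hGm : Measurable G := by
    refine Measurable.ite (measurableSet_Good δ i x) ?_ measurable_const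
    have := measurable_lastSq (m := m) (p := p) x v
    fun_prop
  have hlayer : ∀ (A : Fin m → Fin 𝔡 → ℝ) (B : Fin d → Fin m → ℝ) (V : Fin p → Fin m → Fin m → ℝ),
      ∫⁻ w, G (A, (Fin.last p).insertNth w V, B) ∂(gaussMat m m (vr m)) ≤
        ∏ k, f (tmul B (v i) k) := by
    intro A B V
    set hs : Fin n → Fin m → ℝ := fun j =>
      hseq A ((Fin.last p).insertNth (α := fun _ => Fin m → Fin m → ℝ) 0 V) (x j) p with hhs
    have e : ∀ w : Fin m → Fin m → ℝ, (fun j => hseq A ((Fin.last p).insertNth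
        (α := fun _ => Fin m → Fin m → ℝ) w V) (x j) p) = hs := by
      intro w
      funext j
      refine hseq_congr A _ _ (x j) p fun k hk => ?_
      obtain ⟨k', rfl⟩ : ∃ k' : Fin p, k = k'.castSucc := ⟨⟨k, hk⟩, rfl⟩
      rw [← Fin.succAbove_last, Fin.insertNth_apply_succAbove, Fin.insertNth_apply_succAbove]
    by_cases hg : Good δ i hs
    · have e2 : ∀ w : Fin m → Fin m → ℝ, G (A, (Fin.last p).insertNth w V, B) =
          ∏ k, ENNReal.ofReal (Real.exp (-(θ * nsq (Mrow hs (fun j => tmul B (v j) k) (w k))))) := by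
        intro w
        simp only [hG, lastSq]
        rw [e w, if_pos hg, ← ENNReal.ofReal_prod_of_nonneg fun _ _ => (Real.exp_pos _).le,
          ← Real.exp_sum, Finset.mul_sum, Finset.sum_neg_distrib, Fin.insertNth_apply_same]
      simp_rw [e2]
      rw [gaussMat_eq]
      refine (lintegral_pi_prod_le m (gvec m (vr m)) (fun k w => ENNReal.ofReal
        (Real.exp (-(θ * nsq (Mrow hs (fun j => tmul B (v j) k) w)))))
        fun k => by fun_prop).trans ?_
      exact Finset.prod_le_prod' fun k _ => row_mgf hm hn δ hδ hδ1 i hs hg _ θ hθ0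
    · have e2 : ∀ w : Fin m → Fin m → ℝ, G (A, (Fin.last p).insertNth w V, B) = 0 := by
        intro w
        simp only [hG]
        rw [e w, if_neg hg]
      simp only [e2, lintegral_zero, zero_le]
  have hB : ∫⁻ B, ∏ k, f (tmul B (v i) k) ∂(gaussMat d m (1 / d)) ≤
      ENNReal.ofReal (Real.exp (-(q * m / 96))) := by
    rw [lintegral_tmul (v i) (f := fun y => ∏ k, f (y k)) (by fun_prop)]
    refine (lintegral_pi_prod_le m (gaussianReal 0 σ) (fun _ => f) fun _ => hf).trans ?_
    calc _ ≤ ∏ _k : Fin m, ENNReal.ofReal (1 - q / 96) :=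
          Finset.prod_le_prod' fun k _ => y_mgf σ hσ q hq0 hq1
      _ = ENNReal.ofReal (1 - q / 96) ^ m := by simp
      _ ≤ ENNReal.ofReal (Real.exp (-(q / 96))) ^ m := by
          gcongr
          linarith [Real.add_one_le_exp (-(q / 96))]
      _ = _ := by
          rw [← ENNReal.ofReal_pow (Real.exp_pos _).le, ← Real.exp_nat_mul]
          congr 2; ring
  have hint : ∫⁻ z, G z ∂(initMeasure 𝔡 m d (p + 1)) ≤
      ENNReal.ofReal (Real.exp (-(q * m / 96))) := by
    unfold initMeasure
    refine (lintegral_prod_le _).trans ?_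
    calc _ ≤ ∫⁻ _A, ENNReal.ofReal (Real.exp (-(q * m / 96))) ∂(gaussMat m 𝔡 (vr m)) := by
          refine lintegral_mono fun A => ?_
          refine (lintegral_prod_swap_le _ _ _).trans (le_trans (lintegral_mono fun B => ?_) hB)
          refine (lintegral_pi_last_le _ _ _).trans ?_
          refine (lintegral_mono fun V => hlayer A B V).trans ?_
          simp
      _ = _ := by simp
  set E := q * m / 192 with hE
  have hE1 : δ * m / (69120 * n) = E := by rw [hE, hq]; field_simp; norm_num
  rw [hE1]
  have hE2 : q * m / 96 = 2 * E := by rw [hE]; ring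
  have hmk := mul_meas_ge_le_lintegral hGm (ENNReal.ofReal (Real.exp (-E)))
    (μ := initMeasure 𝔡 m d (p + 1))
  have hsub : {z : Om 𝔡 m d (p + 1) | Good δ i (fun j => hseq z.1 z.2.1 (x j) p) ∧
        lastSq x v z ≤ σ * E} ⊆ {z | ENNReal.ofReal (Real.exp (-E)) ≤ G z} := by
    rintro z ⟨h1, h2⟩
    simp only [Set.mem_ofPred_eq, hG, h1, if_true]
    apply ENNReal.ofReal_le_ofReal
    apply Real.exp_le_exp.mpr
    have : θ * lastSq x v z ≤ θ * (σ * E) := by gcongr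
    have e : θ * (σ * E) = E := by rw [hθ]; field_simp
    linarith
  have hpos : ENNReal.ofReal (Real.exp (-E)) ≠ 0 := by simp [Real.exp_pos]
  refine (measure_mono hsub).trans ?_
  rw [← ENNReal.mul_le_mul_iff_right hpos ENNReal.ofReal_ne_top]
  refine (hmk.trans hint).trans_eq ?_
  rw [← ENNReal.ofReal_mul (Real.exp_pos _).le, ← Real.exp_add, hE2]
  congr 2; ring

/-! ### Assembling the bounds -/

lemma union_bound {Ω : Type*} [MeasurableSpace Ω] (μ : Measure Ω) {N : ℕ} (s : Fin N → Set Ω)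
    (e : ℝ) (h : ∀ i, μ (s i) ≤ ENNReal.ofReal e) :
    μ (⋃ i, s i) ≤ ENNReal.ofReal (N * e) := by
  calc _ ≤ ∑ i, μ (s i) := measure_iUnion_fintype_le _ _
    _ ≤ ∑ _i : Fin N, ENNReal.ofReal e := Finset.sum_le_sum fun i _ => h i
    _ = _ := by
      rw [Finset.sum_const, Finset.card_univ, Fintype.card_fin, nsmul_eq_mul,
        ENNReal.ofReal_mul (by positivity), ENNReal.ofReal_natCast]

lemma union_le {Ω : Type*} [MeasurableSpace Ω] (μ : Measure Ω) {s t : Set Ω} {a b : ℝ}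
    (ha : 0 ≤ a) (hb : 0 ≤ b) (hs : μ s ≤ ENNReal.ofReal a) (ht : μ t ≤ ENNReal.ofReal b) :
    μ (s ∪ t) ≤ ENNReal.ofReal (a + b) := by
  rw [ENNReal.ofReal_add ha hb]
  exact (measure_union_le _ _).trans (add_le_add hs ht)

/-- The exceptional events on which one of the norm bounds for sample `x` may fail. -/
def badU (x : Fin 𝔡 → ℝ) (v : Fin d → ℝ) : Set (Om 𝔡 m d L) :=
  {z | 1 ≤ ytot (fun _ h' => h' = 0) x 0 z.1 z.2.1} ∪ {z | 1 ≤ utot x z.1 z.2.1} ∪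
    {z | v ≠ 0 ∧ 4 * m * (sg d v : ℝ) ≤ nsq (tmul z.2.2 v)} ∪
    {z | v ≠ 0 ∧ nsq (hseq z.1 z.2.1 x L) ≤ 3 ∧
        m * (sg d v : ℝ) / (12 * L) ≤ dot (hseq z.1 z.2.1 x L) (tmul z.2.2 v) ^ 2} ∪
    {z | 1 ≤ rt (1 / (4 * L)) (tmul z.2.2 v) L (mulVec z.1 x) z.2.1}

/-- Five exceptional events, each of probability at most `exp (-m / (16000 L))`. -/
lemma badU_le (hL : 2 ≤ L) (hm : 200000 * (L : ℝ) ^ 2 ≤ m) (hd : 0 < d) (x : Fin 𝔡 → ℝ)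
    (hx : nsq x = 1) (v : Fin d → ℝ) :
    initMeasure 𝔡 m d L (badU x v) ≤
      ENNReal.ofReal (5 * Real.exp (-((m : ℝ) / (16000 * L)))) := by
  have hLr : (2 : ℝ) ≤ L := by exact_mod_cast hL
  set e := Real.exp (-((m : ℝ) / (16000 * L))) with he
  have he0 : 0 ≤ e := (Real.exp_pos _).le
  have h3 : initMeasure 𝔡 m d L {z | v ≠ 0 ∧ 4 * m * (sg d v : ℝ) ≤ nsq (tmul z.2.2 v)} ≤
      ENNReal.ofReal e := by
    by_cases hv : v = 0
    · simp [hv]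
    · refine (measure_mono fun z hz => hz.2).trans ((out_event hd v hv).trans ?_)
      apply ENNReal.ofReal_le_ofReal
      apply Real.exp_le_exp.mpr
      apply neg_le_neg
      gcongr
      linarith
  have h4 : initMeasure 𝔡 m d L {z | v ≠ 0 ∧ nsq (hseq z.1 z.2.1 x L) ≤ 3 ∧
        m * (sg d v : ℝ) / (12 * L) ≤ dot (hseq z.1 z.2.1 x L) (tmul z.2.2 v) ^ 2} ≤
      ENNReal.ofReal e := by
    by_cases hv : v = 0
    · simp [hv]
    · exact (measure_mono fun z hz => hz.2).trans (inner_event hL hm hd x v hv)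
  have h := union_le _ (by positivity) he0 (union_le _ (by positivity) he0 (union_le _ (by positivity) he0
    (union_le _ he0 he0 (low_event hL hm x) (growth_event hL hm x)) h3) h4) (back_event hL hm x hx v)
  refine h.trans_eq ?_
  congr 1; ring

/-- Off the exceptional events all forward and backward vectors of a sample have the expected
size. -/
lemma not_badU (hL : 2 ≤ L) (x : Fin 𝔡 → ℝ) (hx : nsq x = 1) (v : Fin d → ℝ)
    (z : Om 𝔡 m d L) (hz : z ∉ badU x v) :
    (∀ ℓ ≤ L, 1 / 12 ≤ nsq (hseq z.1 z.2.1 x ℓ)) ∧ (∀ ℓ ≤ L, nsq (hseq z.1 z.2.1 x ℓ) ≤ 3) ∧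
      ∀ ℓ ≤ L, nsq (bvec z.2.2 z.1 z.2.1 x v ℓ) ≤ 12 * m * (sg d v : ℝ) := by
  simp only [badU, Set.mem_union, not_or, Set.mem_ofPred_eq, not_and, not_le] at hz
  obtain ⟨⟨⟨⟨h1, h2⟩, h3⟩, h4⟩, h5⟩ := hz
  have hlow := forward_low x hx z.1 z.2.1 h1
  have hup := forward_up x hx z.1 z.2.1 h2
  refine ⟨hlow, hup, bvec_le hL z.2.2 z.1 z.2.1 x v hlow ?_ ?_ h5.le⟩
  · by_cases hv : v = 0
    · subst hv
      have : tmul z.2.2 (0 : Fin d → ℝ) = 0 := by ext; simp [tmul]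
      rw [this]
      simp [nsq]; positivity
    · exact (h3 hv).le
  · by_cases hv : v = 0
    · subst hv
      have : tmul z.2.2 (0 : Fin d → ℝ) = 0 := by ext; simp [tmul]
      rw [this]
      simp [dot]; positivity
    · exact (h4 hv (hup L le_rfl)).le

lemma grad_upper {n : ℕ} (x : Fin n → Fin 𝔡 → ℝ) (v : Fin n → Fin d → ℝ) (z : Om 𝔡 m d L)
    (h3 : ∀ i, ∀ ℓ ≤ L, nsq (hseq z.1 z.2.1 (x i) ℓ) ≤ 3)
    (hb : ∀ i, ∀ ℓ ≤ L, nsq (bvec z.2.2 z.1 z.2.1 (x i) (v i) ℓ) ≤ 12 * m * (sg d (v i) : ℝ))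
    (ℓ : Fin L) :
    frob (∑ i, gradW z.2.2 z.1 z.2.1 (x i) (v i) ((ℓ : ℕ) + 1)) ^ 2 ≤
      36 * ((m : ℝ) * (n : ℝ) / (d : ℝ)) * ∑ i, l2 (v i) ^ 2 := by
  have h1 := frob_sum_le (fun i => bvec z.2.2 z.1 z.2.1 (x i) (v i) (ℓ + 1))
    (fun i => hseq z.1 z.2.1 (x i) ℓ)
  refine h1.trans ?_
  calc _ ≤ n * ∑ i, (12 * m * (sg d (v i) : ℝ)) * 3 := by
        gcongr with i
        · exact nsq_nonneg _
        · exact hb i _ ℓ.2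
        · exact h3 i _ ℓ.2.le
    _ = _ := by
        simp only [sg_coe', l2_sq, Finset.mul_sum]
        refine Finset.sum_congr rfl fun i _ => by ring

/-- Under the width assumption the union bound over all exceptional events fits in
`exp (-δ m / (10⁶ n))`. -/
lemma final_num (n : ℕ) (hn : 0 < n) (hL : 2 ≤ L) (δ : ℝ) (hδ : 0 < δ)
    (hδC : δ ≤ 1 / (10 ^ 8 * L))
    (hm : 10 ^ 8 * (n : ℝ) * (L : ℝ) * Real.log ((n : ℝ) * (L : ℝ)) / δ ^ 6 ≤ (m : ℝ)) :
    200000 * (L : ℝ) ^ 2 ≤ m ∧ δ * L ≤ 1 / 20000 ∧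
      n * (5 * Real.exp (-((m : ℝ) / (16000 * L)))) +
        n * ((⌊600 / δ⌋₊ + 1 : ℕ) * Real.exp (-((m : ℝ) / (16000 * L)))) +
        Real.exp (-(δ * m / (69120 * n))) ≤ Real.exp (-(1 / 10 ^ 6 * δ * m / n)) := by
  have hLr : (2 : ℝ) ≤ L := by exact_mod_cast hL
  have hnr : (1 : ℝ) ≤ n := by exact_mod_cast hn
  have hL0 : (0 : ℝ) < L := by linarith
  have hn0 : (0 : ℝ) < n := by linarith
  have hδL : 10 ^ 8 * (δ * L) ≤ 1 := by
    rw [le_div_iff₀ (by positivity)] at hδC; linarith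
  have hδ1 : δ ≤ 1 / (2 * 10 ^ 8) := by nlinarith
  have hlog : (69 : ℝ) / 100 ≤ Real.log (n * L) := by
    have h2 : Real.log 2 ≤ Real.log (n * L) := Real.log_le_log (by norm_num) (by nlinarith)
    linarith [Real.log_two_gt_d9]
  -- a weaker polynomial lower bound on the width
  have hm1 : 69 * 10 ^ 6 * (n : ℝ) * L / δ ^ 6 ≤ m := by
    refine le_trans (div_le_div_of_nonneg_right ?_ (by positivity)) hm
    nlinarith [mul_pos hn0 hL0, mul_le_mul_of_nonneg_left hlog (mul_pos hn0 hL0).le]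
  set u := δ⁻¹ with hu
  have hδu : δ * u = 1 := by rw [hu]; field_simp
  have hu0 : 0 < u := by positivity
  have huL : 10 ^ 8 * (L : ℝ) ≤ u := by
    have : 10 ^ 8 * (L : ℝ) * (δ * u) ≤ u := by
      have := mul_le_mul_of_nonneg_right hδL hu0.le
      nlinarith
    rwa [hδu, mul_one] at this
  have hu1 : 1 ≤ u := by linarith
  have hm2 : 69 * 10 ^ 6 * (n : ℝ) * L * u ^ 6 ≤ m := by
    have : 69 * 10 ^ 6 * (n : ℝ) * L / δ ^ 6 = 69 * 10 ^ 6 * (n : ℝ) * L * u ^ 6 := by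
      rw [hu]; field_simp
    rwa [this] at hm1
  have hu62 : u ^ 2 ≤ u ^ 6 := pow_le_pow_right₀ hu1 (by norm_num)
  have hm3 : 69 * 10 ^ 6 * (n : ℝ) * L * u ^ 2 ≤ m := le_trans (by gcongr) hm2
  have hm0 : (0 : ℝ) < m := lt_of_lt_of_le (by positivity) hm3
  refine ⟨?_, by linarith, ?_⟩
  · have h1 : (L : ℝ) ≤ u ^ 2 := by nlinarith
    have : 69 * 10 ^ 6 * (1 : ℝ) * L * L ≤ 69 * 10 ^ 6 * (n : ℝ) * L * u ^ 2 := by gcongr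
    nlinarith
  set a := δ * m / n with ha
  have ha0 : 0 < a := by positivity
  have hbig : 10 ^ 6 ≤ a := by
    rw [ha, le_div_iff₀ hn0]
    have h1 : δ * (69 * 10 ^ 6 * (n : ℝ) * L * u ^ 2) ≤ δ * m := by gcongr
    have h2 : δ * (69 * 10 ^ 6 * (n : ℝ) * L * u ^ 2) = 69 * 10 ^ 6 * (n : ℝ) * L * u := by
      calc _ = 69 * 10 ^ 6 * (n : ℝ) * L * u * (δ * u) := by ring
        _ = _ := by rw [hδu, mul_one]
    have h3 : 69 * 10 ^ 6 * (n : ℝ) * 1 * 1 ≤ 69 * 10 ^ 6 * (n : ℝ) * L * u := by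
      gcongr; linarith
    linarith
  have e1 : δ * m / (69120 * n) = a / 69120 := by rw [ha]; field_simp
  have e2 : 1 / 10 ^ 6 * δ * m / n = a / 10 ^ 6 := by rw [ha]; field_simp
  set y := (m : ℝ) / (32000 * L) with hy
  have e3 : (m : ℝ) / (16000 * L) = y + y := by rw [hy]; field_simp; norm_num
  have hy0 : 0 < y := by positivity
  have hya : a / 10 ^ 6 ≤ y := by
    have h1 : a ≤ δ * m := by rw [ha]; exact div_le_self (by positivity) hnr
    have h2 : δ * m * (32000 * L) ≤ m * 1 := by
      calc _ = m * (32000 * (δ * L)) := by ring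
        _ ≤ _ := by gcongr; linarith
    have h3 : δ * m ≤ y := by rw [hy, le_div_iff₀ (by positivity)]; linarith
    have : 0 ≤ a := ha0.le
    linarith
  have hyn : 1400 * n * u ≤ Real.exp y := by
    have h1 : 1400 * n * u ≤ y := by
      rw [hy, le_div_iff₀ (by positivity)]
      refine le_trans ?_ hm3
      have : (n : ℝ) * u * L * 1 ≤ n * u * L * u := by gcongr
      nlinarith
    linarith [Real.add_one_le_exp y]
  rw [e1, e2, e3]
  have hK : ((⌊600 / δ⌋₊ + 1 : ℕ) : ℝ) ≤ 601 * u := by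
    have := Nat.floor_le (a := 600 / δ) (by positivity)
    push_cast
    have e : 600 / δ = 600 * u := by rw [hu]; field_simp
    rw [e] at this ⊢
    linarith
  set T := Real.exp (-(a / 10 ^ 6)) with hT
  have hTp : 0 < T := Real.exp_pos _
  have p1 : Real.exp (-(a / 69120)) ≤ T / 2 := by
    have h1 : Real.exp (-(a / 69120)) ≤ Real.exp (-(a / 10 ^ 6) - 1) := by
      apply Real.exp_le_exp.mpr; linarith
    rw [Real.exp_sub] at h1
    have h2 : (2 : ℝ) ≤ Real.exp 1 := by linarith [Real.add_one_le_exp 1]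
    refine h1.trans ?_
    gcongr
  have p2 : n * u * Real.exp (-(y + y)) ≤ T / 1400 := by
    have h1 : Real.exp (-(y + y)) = Real.exp (-y) * Real.exp (-y) := by
      rw [← Real.exp_add]; congr 1; ring
    have h2 : Real.exp (-y) ≤ T := Real.exp_le_exp.mpr (by linarith)
    have h3 : 1400 * (n * u * Real.exp (-y)) ≤ 1 := by
      have := mul_le_mul_of_nonneg_right hyn (Real.exp_pos (-y)).le
      rw [← Real.exp_add, add_neg_cancel, Real.exp_zero] at this
      linarith
    rw [h1]
    have h4 : (1400 * (n * u * Real.exp (-y))) * Real.exp (-y) ≤ 1 * T := by gcongr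
    linarith
  have hQ : 0 ≤ Real.exp (-(y + y)) := (Real.exp_pos _).le
  have p3 : n * (5 * Real.exp (-(y + y))) ≤ 5 * (n * u * Real.exp (-(y + y))) := by
    have : (n : ℝ) * 1 * Real.exp (-(y + y)) ≤ n * u * Real.exp (-(y + y)) := by gcongr
    linarith
  have p4 : n * ((⌊600 / δ⌋₊ + 1 : ℕ) * Real.exp (-(y + y))) ≤
      601 * (n * u * Real.exp (-(y + y))) := by
    have : (n : ℝ) * ((⌊600 / δ⌋₊ + 1 : ℕ) * Real.exp (-(y + y))) ≤
        n * (601 * u * Real.exp (-(y + y))) := by gcongr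
    linarith
  linarith

/-- Lemma 9.1, gradient bounds at random initialization for an
arbitrary fake-loss vector. -/
theorem statement16 :
    ∃ C c : ℝ, 0 < C ∧ 0 < c ∧
      ∀ (𝔡 m d L n : ℕ) (h𝔡 : 0 < 𝔡) (hL : 2 ≤ L) (hm : 0 < m) (hd : 0 < d) (hn : 0 < n)
        (x : Fin n → Fin 𝔡 → ℝ) (δ : ℝ),
        0 < δ → δ ≤ 1 / (C * L) →
        C * (n : ℝ) * (L : ℝ) * Real.log ((n : ℝ) * (L : ℝ)) / δ ^ 6 ≤ (m : ℝ) →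
        (∀ i, l2 (x i) = 1) →
        (∀ i, x i ⟨𝔡 - 1, by omega⟩ = 1 / Real.sqrt 2) →
        (∀ i j, i ≠ j → δ ≤ l2 (x i - x j)) →
        ∀ v : Fin n → Fin d → ℝ,
        ENNReal.ofReal (1 - Real.exp (-(c * δ * (m : ℝ) / (n : ℝ)))) ≤
          initMeasure 𝔡 m d L
            {z | (∀ ℓ : Fin L,
                frob (∑ i, gradW z.2.2 z.1 z.2.1 (x i) (v i) ((ℓ : ℕ) + 1)) ^ 2 ≤
                  C * ((m : ℝ) * (n : ℝ) / (d : ℝ)) * ∑ i, l2 (v i) ^ 2) ∧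
              δ * (m : ℝ) / (C * (d : ℝ) * (n : ℝ)) * (⨆ i, l2 (v i) ^ 2) ≤
                frob (∑ i, gradW z.2.2 z.1 z.2.1 (x i) (v i) L) ^ 2} := by
  refine ⟨10 ^ 8, 1 / 10 ^ 6, by norm_num, by norm_num, ?_⟩
  intro 𝔡 m d L n h𝔡 hL hm hd hn x δ hδ hδC hmC hx _ hsep v
  obtain ⟨p, rfl⟩ : ∃ p, L = p + 1 := ⟨L - 1, by omega⟩
  obtain ⟨hmL, hδL, hnum⟩ := final_num n hn hL δ hδ hδC hmC
  have hLr : (2 : ℝ) ≤ ((p + 1 : ℕ) : ℝ) := by exact_mod_cast hL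
  have hδ1 : δ ≤ 1 := by nlinarith
  have hx1 : ∀ i, nsq (x i) = 1 := fun i => by rw [← l2_sq, hx i, one_pow]
  have hx2 : ∀ i j, i ≠ j → δ ^ 2 ≤ nsq (x i - x j) := fun i j hij => by
    rw [← l2_sq]; exact pow_le_pow_left₀ hδ.le (hsep i j hij) 2
  have : Nonempty (Fin n) := ⟨⟨0, hn⟩⟩
  obtain ⟨i₀, hi₀⟩ := Finite.exists_max fun i => nsq (v i)
  set e := Real.exp (-((m : ℝ) / (16000 * ((p + 1 : ℕ) : ℝ)))) with he
  have he0 : 0 ≤ e := (Real.exp_pos _).le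
  set bad1 : Set (Om 𝔡 m d (p + 1)) := ⋃ i, badU (x i) (v i) with hbad1
  set bad2 : Set (Om 𝔡 m d (p + 1)) := ⋃ j : Fin n, ⋃ k : Fin (⌊600 / δ⌋₊ + 1),
    {z | 1 ≤ ytot (cSep δ) (x j) ((((k : ℕ) : ℝ) * (δ / 100)) • x i₀) z.1 z.2.1} with hbad2
  set bad3 : Set (Om 𝔡 m d (p + 1)) := {z | v i₀ ≠ 0 ∧
    Good δ i₀ (fun j => hseq z.1 z.2.1 (x j) p) ∧
      lastSq x v z ≤ sg d (v i₀) * (δ * m / (69120 * n))} with hbad3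
  have h1 : initMeasure 𝔡 m d (p + 1) bad1 ≤ ENNReal.ofReal (n * (5 * e)) :=
    union_bound _ _ _ fun i => badU_le hL hmL hd (x i) (hx1 i) (v i)
  have h2 : initMeasure 𝔡 m d (p + 1) bad2 ≤
      ENNReal.ofReal (n * ((⌊600 / δ⌋₊ + 1 : ℕ) * e)) :=
    union_bound _ _ _ fun j => union_bound _ _ _ fun k =>
      sep_event hL hmL δ hδ hδL (x j) _
  have h3 : initMeasure 𝔡 m d (p + 1) bad3 ≤
      ENNReal.ofReal (Real.exp (-(δ * m / (69120 * n)))) := by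
    by_cases hv : v i₀ = 0
    · simp [hbad3, hv]
    · exact (measure_mono fun z hz => hz.2).trans (last_event hm hn hd δ hδ hδ1 i₀ x v hv)
  have hbad : initMeasure 𝔡 m d (p + 1) (bad1 ∪ bad2 ∪ bad3) ≤
      ENNReal.ofReal (Real.exp (-(1 / 10 ^ 6 * δ * m / n))) :=
    (union_le _ (by positivity) (Real.exp_pos _).le
      (union_le _ (by positivity) (by positivity) h1 h2) h3).trans (ENNReal.ofReal_le_ofReal hnum)
  -- it remains to see that both bounds hold off the exceptional set
  rw [ENNReal.ofReal_sub _ (Real.exp_pos _).le, ENNReal.ofReal_one, tsub_le_iff_right]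
  refine le_trans ?_ (add_le_add le_rfl hbad)
  rw [← measure_univ (μ := initMeasure 𝔡 m d (p + 1))]
  refine (measure_mono ?_).trans (measure_union_le _ _)
  intro z _
  by_cases hz : z ∈ bad1 ∪ bad2 ∪ bad3
  · exact Or.inr hz
  refine Or.inl ?_
  simp only [Set.mem_union, not_or] at hz
  obtain ⟨⟨hz1, hz2⟩, hz3⟩ := hz
  simp only [hbad1, Set.mem_iUnion, not_exists] at hz1
  simp only [hbad2, Set.mem_iUnion, not_exists, Set.mem_ofPred_eq, not_le] at hz2
  have hU := fun i => not_badU hL (x i) (hx1 i) (v i) z (hz1 i)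
  constructor
  · intro ℓ
    refine (grad_upper x v z (fun i => (hU i).2.1) (fun i => (hU i).2.2) ℓ).trans ?_
    have hs : 0 ≤ ∑ i, l2 (v i) ^ 2 := Finset.sum_nonneg fun _ _ => sq_nonneg _
    gcongr
    norm_num
  · have hsup : (⨆ i, l2 (v i) ^ 2) ≤ nsq (v i₀) :=
      ciSup_le fun i => by rw [l2_sq]; exact hi₀ i
    have hfac : 0 ≤ δ * (m : ℝ) / (10 ^ 8 * (d : ℝ) * (n : ℝ)) := by positivity
    refine (mul_le_mul_of_nonneg_left hsup hfac).trans ?_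
    by_cases hv : v i₀ = 0
    · rw [hv]
      simp only [nsq, Pi.zero_apply]
      simp [sq_nonneg]
    rw [frob_last]
    have hgood : Good δ i₀ (fun j => hseq z.1 z.2.1 (x j) p) := by
      refine ⟨(hU i₀).1 p (by omega), fun j => (hU j).2.1 p (by omega), fun j hj => ?_⟩
      refine orth_of_grid δ hδ _ _ ((hU i₀).1 p (by omega)) ((hU i₀).2.1 p (by omega))
        ((hU j).2.1 p (by omega)) (Finset.sum_nonneg fun k _ => mul_nonneg
          (hseq_nonneg z.1 z.2.1 (x j) p (by omega) k)
          (hseq_nonneg z.1 z.2.1 (x i₀) p (by omega) k)) fun k hk => ?_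
      have hα : (0 : ℝ) ≤ k * (δ / 100) := by positivity
      -- positive homogeneity turns multiples of hidden vectors into multiples of inputs
      rw [← hseq_smul z.1 z.2.1 (x i₀) _ hα]
      exact separation δ hδ (x j) _
        (nsq_sub_ray δ hδ hδ1 (x j) (x i₀) (hx1 j) (hx1 i₀) (hx2 j i₀ hj) _ hα) z.1 z.2.1
        (hz2 j ⟨k, by omega⟩) (hU j).1 p (by omega)
    have hlt : sg d (v i₀) * (δ * m / (69120 * n)) < lastSq x v z := by
      by_contra hcon
      exact hz3 ⟨hv, hgood, not_lt.mp hcon⟩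
    refine le_trans ?_ hlt.le
    rw [sg_coe']
    have hdr : (0 : ℝ) < d := by exact_mod_cast hd
    have hnr : (0 : ℝ) < n := by exact_mod_cast hn
    have hN := nsq_nonneg (v i₀)
    have e1 : δ * (m : ℝ) / (10 ^ 8 * d * n) * nsq (v i₀) =
        (δ * m * nsq (v i₀) / (d * n)) / 10 ^ 8 := by field_simp
    have e2 : nsq (v i₀) / d * (δ * m / (69120 * n)) =
        (δ * m * nsq (v i₀) / (d * n)) / 69120 := by field_simp
    rw [e1, e2]
    exact div_le_div_of_nonneg_left (by positivity) (by norm_num) (by norm_num)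

end DNNPaper
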